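/- arXiv:2201.01345 — 3 statements merged into one kernel-verified Lean document; each statement's English description precedes it below -/
import Mathlib

section
/- (Corollary 2, vector version of the Real Nullstellensatz) Let R = ℝ[x₁, …, x_d], considered with the trivial involution. For any g₁, …, g_m, f ∈ R^n the following are equivalent: (1) for every a ∈ ℝ^d and every v ∈ ℝ^n such that Σ_{j=1}^n g_{i,j}(a) v_j = 0 for all i = 1, …, m, one has Σ_{j=1}^n f_j(a) v_j = 0; (2) f belongs to every real submodule of R^n that contains g₁, …, g_m. -/
open MvPolynomial

/-- A submodule `N` of `R^n` (trivial involution on the commutative ring `R`) is *real* if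
whenever `f 0, …, f (m-1) ∈ R^n` satisfy `∑ i, f i j • f i ∈ N` for every coordinate `j`,
each `f i` lies in `N`. -/
def Submodule.IsRealSubmodule {R : Type*} [CommRing R] {n : ℕ}
    (N : Submodule R (Fin n → R)) : Prop :=
  ∀ (m : ℕ) (f : Fin m → (Fin n → R)),
    (∀ j, (∑ i, f i j • f i) ∈ N) → ∀ i, f i ∈ N

/-!
Let `N` be a real submodule of `k[x]^n` and `f ∉ N`. Enlarge `N` to a maximal real submodule
avoiding `f`. Then the ideal `{r | r • f ∈ N}` is prime and real, so its residue field `K` is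
semireal, and `f` stays outside the `K`-span of `N` in `K^n`. A linear functional on `K^n` with
coefficients in `k[x]` therefore vanishes on `N` but not at `f`. By Artin and Schreier `K` embeds
into an ordered field `L` with the intermediate value property for polynomials.

Whether finitely many polynomials vanish at an `L`-point is a matter of sign conditions, and these
can be transferred to a `k`-point one variable at a time, as in the Cohen–Hörmander form of
quantifier elimination: for a finite family of univariate polynomials closed under derivatives,
truncations and pseudo-remainders, the signs of the leading coefficients determine which
combinations of signs are attained on the line. Evaluating the functional at the resulting
`k`-point separates `f` from `N`.
-/

namespace RealNullstellensatz

open Set Filter SignType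
open scoped Polynomial

/-- An ordered field has the intermediate value property for polynomials if every polynomial that
changes sign between two points has a root strictly between them. This is one of the equivalent
characterisations of real closed fields, and the one on which the whole argument runs. -/
class PolynomialIVT (L : Type*) [Field L] [LinearOrder L] : Prop where
  exists_root_mem_Ioo : ∀ {P : L[X]} {a b : L}, a < b → P.eval a * P.eval b < 0 →
    ∃ c ∈ Ioo a b, P.eval c = 0

instance : PolynomialIVT ℝ where
  exists_root_mem_Ioo {P a b} hab hP := by
    have hcont : ContinuousOn (fun x ↦ P.eval x) (Icc a b) := P.continuous.continuousOn
    rcases mul_neg_iff.1 hP with ⟨ha, hb⟩ | ⟨ha, hb⟩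
    · exact intermediate_value_Ioo' hab.le hcont ⟨hb, ha⟩
    · exact intermediate_value_Ioo hab.le hcont ⟨ha, hb⟩

namespace PolynomialIVT

variable {L : Type*} [Field L] [LinearOrder L] [IsStrictOrderedRing L] [PolynomialIVT L]

theorem isSquare_of_nonneg {x : L} (hx : 0 ≤ x) : IsSquare x := by
  rcases hx.eq_or_lt with rfl | hx
  · exact IsSquare.zero
  have hsign : (Polynomial.X ^ 2 - Polynomial.C x).eval 0 *
      (Polynomial.X ^ 2 - Polynomial.C x).eval (x + 1) < 0 := by
    simp only [Polynomial.eval_sub, Polynomial.eval_pow, Polynomial.eval_X, Polynomial.eval_C]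
    nlinarith [mul_pos hx hx]
  obtain ⟨c, -, hc⟩ := exists_root_mem_Ioo (by linarith) hsign
  simp only [Polynomial.eval_sub, Polynomial.eval_pow, Polynomial.eval_X, Polynomial.eval_C] at hc
  exact ⟨c, by linear_combination -hc⟩

theorem sign_map {K : Type*} [Field K] [LinearOrder K] [IsStrictOrderedRing K] (φ : L →+* K)
    (x : L) : sign (φ x) = sign x := by
  have hmono : Monotone φ := (monotone_iff_map_nonneg φ).2 fun x hx ↦
    ((isSquare_of_nonneg hx).map φ).nonneg
  exact (hmono.strictMono_of_injective φ.injective).sign_comp x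

theorem mul_eval_pos_of_forall_ne_zero {P : L[X]} {a b : L} (hab : a < b)
    (hP : ∀ c ∈ Icc a b, P.eval c ≠ 0) : 0 < P.eval a * P.eval b := by
  by_contra! hneg
  have hne := mul_ne_zero (hP a (left_mem_Icc.2 hab.le)) (hP b (right_mem_Icc.2 hab.le))
  obtain ⟨c, hc, hc0⟩ := exists_root_mem_Ioo hab (hneg.lt_of_ne hne)
  exact hP c (Ioo_subset_Icc_self hc) hc0

theorem sign_eval_eq_of_forall_ne_zero {P : L[X]} {a b : L} (hab : a < b)
    (hP : ∀ c ∈ Icc a b, P.eval c ≠ 0) : sign (P.eval a) = sign (P.eval b) := by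
  have hmul : sign (P.eval a) * sign (P.eval b) = 1 := by
    rw [← sign_mul, sign_pos (mul_eval_pos_of_forall_ne_zero hab hP)]
  revert hmul
  generalize sign (P.eval a) = s, sign (P.eval b) = t
  decide +revert

/- Dividing the derivative by `(X - a) ^ m * (X - b) ^ n` leaves a polynomial whose values at `a`
and `b` are a negative multiple of `B a` and a positive multiple of `B b`. -/
theorem exists_derivative_eval_eq_zero_of_eq_mul {P B : L[X]} {a b : L} (hab : a < b) {m n : ℕ}
    (hP : P = (Polynomial.X - Polynomial.C a) ^ (m + 1) *
      ((Polynomial.X - Polynomial.C b) ^ (n + 1) * B))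
    (hB : ∀ c ∈ Icc a b, B.eval c ≠ 0) : ∃ c ∈ Ioo a b, P.derivative.eval c = 0 := by
  set H : L[X] := ((m : L[X]) + 1) * (Polynomial.X - Polynomial.C b) * B +
    ((n : L[X]) + 1) * (Polynomial.X - Polynomial.C a) * B +
    (Polynomial.X - Polynomial.C a) * (Polynomial.X - Polynomial.C b) * B.derivative with hH
  have hderiv : P.derivative =
      (Polynomial.X - Polynomial.C a) ^ m * (Polynomial.X - Polynomial.C b) ^ n * H := by
    rw [hP, hH]
    simp only [Polynomial.derivative_mul, Polynomial.derivative_pow, Polynomial.derivative_sub,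
      Polynomial.derivative_X, Polynomial.derivative_C, Nat.add_sub_cancel]
    push_cast
    simp only [map_add, map_natCast, map_one]
    ring
  have hHab : H.eval a * H.eval b =
      -(((m : L) + 1) * (n + 1) * (b - a) ^ 2 * (B.eval a * B.eval b)) := by
    simp [hH]
    ring
  have := sub_pos.2 hab
  have := mul_eval_pos_of_forall_ne_zero hab hB
  obtain ⟨c, hc, hc0⟩ := exists_root_mem_Ioo (P := H) hab (by
    rw [hHab, neg_lt_zero]
    positivity)
  exact ⟨c, hc, by simp [hderiv, hc0]⟩

theorem exists_derivative_eval_eq_zero_of_consecutive_roots {P : L[X]} (hP : P ≠ 0) {a b : L}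
    (hab : a < b) (ha : P.eval a = 0) (hb : P.eval b = 0) (hne : ∀ c ∈ Ioo a b, P.eval c ≠ 0) :
    ∃ c ∈ Ioo a b, P.derivative.eval c = 0 := by
  obtain ⟨A, hA, hA_dvd⟩ := P.exists_eq_pow_rootMultiplicity_mul_and_not_dvd hP a
  have hA0 : A ≠ 0 := by
    rintro rfl
    simp at hA_dvd
  have hAb : A.eval b = 0 := by
    rw [hA] at hb
    simpa [sub_eq_zero, hab.ne'] using hb
  obtain ⟨B, hB, hB_dvd⟩ := A.exists_eq_pow_rootMultiplicity_mul_and_not_dvd hA0 b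
  obtain ⟨m, hm⟩ := Nat.exists_eq_succ_of_ne_zero ((P.rootMultiplicity_pos hP).2 ha).ne'
  obtain ⟨n, hn⟩ := Nat.exists_eq_succ_of_ne_zero ((A.rootMultiplicity_pos hA0).2 hAb).ne'
  rw [hm] at hA
  rw [hn] at hB
  have hPB : P = (Polynomial.X - Polynomial.C a) ^ (m + 1) *
      ((Polynomial.X - Polynomial.C b) ^ (n + 1) * B) := hA.trans (congrArg _ hB)
  refine exists_derivative_eval_eq_zero_of_eq_mul hab hPB fun c hc hBc ↦ ?_
  rcases hc.1.eq_or_lt with rfl | hac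
  · exact hA_dvd (hB ▸ (Polynomial.dvd_iff_isRoot.2 hBc).mul_left _)
  rcases hc.2.eq_or_lt with rfl | hcb
  · exact hB_dvd (Polynomial.dvd_iff_isRoot.2 hBc)
  · exact hne c ⟨hac, hcb⟩ (by simp [hPB, hBc])

theorem exists_derivative_eval_eq_zero {P : L[X]} (hP : P ≠ 0) {a b : L} (hab : a < b)
    (ha : P.eval a = 0) (hb : P.eval b = 0) : ∃ c ∈ Ioo a b, P.derivative.eval c = 0 := by
  have hfin : {c | P.IsRoot c ∧ a < c}.Finite :=
    (Polynomial.finite_setOfPred_isRoot hP).subset fun c hc ↦ hc.1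
  obtain ⟨r, ⟨hr, har⟩, hmin⟩ := hfin.exists_minimal ⟨b, hb, hab⟩
  have hrb : r ≤ b := not_lt.1 fun hbr ↦ hbr.not_ge (hmin ⟨hb, hab⟩ hbr.le)
  obtain ⟨c, hc, hc0⟩ := exists_derivative_eval_eq_zero_of_consecutive_roots hP har ha hr
    fun c hc hc0 ↦ hc.2.not_ge (hmin ⟨hc0, hc.1⟩ hc.2.le)
  exact ⟨c, ⟨hc.1, hc.2.trans_le hrb⟩, hc0⟩

theorem exists_eval_sub_eq_derivative_mul (P : L[X]) {a b : L} (hab : a < b) :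
    ∃ c ∈ Ioo a b, P.eval b - P.eval a = P.derivative.eval c * (b - a) := by
  set s := (P.eval b - P.eval a) / (b - a)
  have hs : P.eval b - P.eval a = s * (b - a) := (div_mul_cancel₀ _ (sub_pos.2 hab).ne').symm
  set Q := P - Polynomial.C (P.eval a) - Polynomial.C s * (Polynomial.X - Polynomial.C a) with hQ
  have hQ' : Q.derivative = P.derivative - Polynomial.C s := by simp [hQ]
  have hroot : ∃ c ∈ Ioo a b, Q.derivative.eval c = 0 := by
    by_cases hQ0 : Q = 0
    · obtain ⟨c, hc⟩ := exists_between hab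
      exact ⟨c, hc, by simp [hQ0]⟩
    · exact exists_derivative_eval_eq_zero hQ0 hab (by simp [hQ]) (by simp [hQ, hs])
  obtain ⟨c, hc, hc0⟩ := hroot
  rw [hQ', Polynomial.eval_sub, Polynomial.eval_C, sub_eq_zero] at hc0
  exact ⟨c, hc, by rw [hc0, hs]⟩

theorem monotoneOn_eval_of_derivative_nonneg {P : L[X]} {a b : L}
    (hP : ∀ c ∈ Icc a b, 0 ≤ P.derivative.eval c) : MonotoneOn (fun x ↦ P.eval x) (Icc a b) := by
  intro x hx y hy hxy
  rcases hxy.eq_or_lt with rfl | hxy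
  · exact le_rfl
  obtain ⟨c, hc, hmvt⟩ := exists_eval_sub_eq_derivative_mul P hxy
  refine sub_nonneg.1 (hmvt ▸ mul_nonneg (hP c ⟨?_, ?_⟩) (sub_nonneg.2 hxy.le))
  exacts [hx.1.trans hc.1.le, hc.2.le.trans hy.2]

theorem antitoneOn_eval_of_derivative_nonpos {P : L[X]} {a b : L}
    (hP : ∀ c ∈ Icc a b, P.derivative.eval c ≤ 0) : AntitoneOn (fun x ↦ P.eval x) (Icc a b) := by
  have hneg : MonotoneOn (fun x ↦ (-P).eval x) (Icc a b) :=
    monotoneOn_eval_of_derivative_nonneg fun c hc ↦ by simpa using hP c hc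
  exact fun x hx y hy hxy ↦ by simpa using hneg hx hy hxy

theorem mul_eval_neg_of_derivative_ne_zero {P : L[X]} {a b y : L} (hy : y ∈ Ioo a b)
    (hPy : P.eval y = 0) (hP' : ∀ c ∈ Ioo a b, P.derivative.eval c ≠ 0) :
    P.eval a * P.eval b < 0 := by
  obtain ⟨c, hc, hca⟩ := exists_eval_sub_eq_derivative_mul P hy.1
  obtain ⟨d, hd, hdb⟩ := exists_eval_sub_eq_derivative_mul P hy.2
  have hcd : 0 < P.derivative.eval c * P.derivative.eval d :=
    mul_eval_pos_of_forall_ne_zero (hc.2.trans hd.1) fun e he ↦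
      hP' e ⟨hc.1.trans_le he.1, he.2.trans_lt hd.2⟩
  have hab : P.eval a * P.eval b =
      -(P.derivative.eval c * P.derivative.eval d * ((y - a) * (b - y))) := by
    linear_combination P.eval b * hPy - P.eval b * hca -
      P.derivative.eval c * (y - a) * hdb - P.derivative.eval c * (y - a) * hPy
  rw [hab, neg_lt_zero]
  exact mul_pos hcd (mul_pos (sub_pos.2 hy.1) (sub_pos.2 hy.2))

end PolynomialIVT

section SignAtInfinity

variable {L : Type*} [Field L] [LinearOrder L] [IsStrictOrderedRing L]

theorem tendsto_eval_atTop {P : L[X]} (hdeg : 0 < P.degree) (hP : 0 < P.leadingCoeff) :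
    Tendsto (fun x ↦ P.eval x) atTop atTop := by
  revert hP
  refine Polynomial.degree_pos_induction_on P hdeg (fun {a} _ hP ↦ ?_) (fun {Q} _ ih hP ↦ ?_)
    fun {Q a} hQ ih hP ↦ ?_
  · simpa using tendsto_id.const_mul_atTop (show 0 < a by simpa using hP)
  · simpa using (ih (by simpa using hP)).atTop_mul_atTop₀ tendsto_id
  · rw [Polynomial.leadingCoeff_add_of_degree_lt' (Polynomial.degree_C_le.trans_lt hQ)] at hP
    simpa using tendsto_atTop_add_const_right _ _ (ih hP)

theorem eventually_sign_eval_of_leadingCoeff_pos {P : L[X]} (hP : 0 < P.leadingCoeff) :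
    ∀ᶠ x in atTop, sign (P.eval x) = 1 := by
  rcases le_or_gt P.degree 0 with hdeg | hdeg
  · rw [Polynomial.eq_C_of_degree_le_zero hdeg] at hP ⊢
    exact .of_forall fun x ↦ by simpa [sign_eq_one_iff] using hP
  · filter_upwards [(tendsto_eval_atTop hdeg hP).eventually_gt_atTop 0] with x hx using sign_pos hx

theorem eventually_atTop_sign_eval (P : L[X]) :
    ∀ᶠ x in atTop, sign (P.eval x) = sign P.leadingCoeff := by
  rcases lt_trichotomy P.leadingCoeff 0 with hP | hP | hP
  · filter_upwards [eventually_sign_eval_of_leadingCoeff_pos (P := -P) (by simpa using hP)]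
      with x hx
    rw [sign_neg hP, ← neg_inj, ← Left.sign_neg, ← Polynomial.eval_neg, hx, neg_neg]
  · simp [Polynomial.leadingCoeff_eq_zero.1 hP]
  · simpa only [sign_pos hP] using eventually_sign_eval_of_leadingCoeff_pos hP

theorem eventually_atBot_sign_eval (P : L[X]) :
    ∀ᶠ x in atBot, sign (P.eval x) = sign ((-1) ^ P.natDegree * P.leadingCoeff) := by
  filter_upwards [tendsto_neg_atBot_atTop.eventually
    (eventually_atTop_sign_eval (P.comp (-Polynomial.X)))] with x hx
  rw [Polynomial.leadingCoeff_comp (by simp)] at hx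
  simpa [mul_comm] using hx

end SignAtInfinity

section ClosedFamily

theorem exists_finset_superset_closed_under_rank_decreasing {α : Type*} (rank : α → ℕ)
    (step : α → α → Finset α) (F₀ : Finset α) :
    ∃ F, F₀ ⊆ F ∧ ∀ x ∈ F, ∀ y ∈ F, ∀ z ∈ step x y, rank z < rank x → rank z < rank y → z ∈ F := by
  classical
  suffices ∀ k ≤ F₀.sup rank, ∃ F, F₀ ⊆ F ∧ ∀ x ∈ F, ∀ y ∈ F, ∀ z ∈ step x y,
      rank z < rank x → rank z < rank y → k ≤ rank z → z ∈ F by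
    simpa using this 0 (Nat.zero_le _)
  intro k hk
  induction hk using Nat.decreasingInduction with
  | self =>
    exact ⟨F₀, subset_rfl, fun x hx _ _ z _ hzx _ hz ↦
      absurd (Finset.le_sup (f := rank) hx) (by lia)⟩
  | of_succ k _ ih =>
    obtain ⟨F, hF₀, hF⟩ := ih
    set G := (F.biUnion fun x ↦ F.biUnion (step x)).filter (rank · = k) with hG
    have mem_of_lt : ∀ x ∈ F ∪ G, k < rank x → x ∈ F := fun x hx hxk ↦
      (Finset.mem_union.1 hx).resolve_right fun hxG ↦ hxk.ne' (Finset.mem_filter.1 hxG).2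
    refine ⟨F ∪ G, hF₀.trans Finset.subset_union_left, fun x hx y hy z hz hzx hzy hkz ↦ ?_⟩
    have hxF := mem_of_lt x hx (hkz.trans_lt hzx)
    have hyF := mem_of_lt y hy (hkz.trans_lt hzy)
    rcases hkz.eq_or_lt with hkz | hkz
    · simp only [hG, Finset.mem_union, Finset.mem_filter, Finset.mem_biUnion]
      exact .inr ⟨⟨x, hxF, y, hyF, hz⟩, hkz.symm⟩
    · exact Finset.mem_union_left _ (hF x hxF y hyF z hz hzx hzy hkz)

variable {R : Type*} [CommRing R]

/-- `T` is a pseudo-remainder of `P` modulo `Q`: a remainder after multiplying `P` by a power of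
the leading coefficient of `Q`, which makes division possible over any commutative ring. -/
def IsPseudoRem (P Q T : R[X]) : Prop :=
  T.natDegree < Q.natDegree ∧
    ∃ (e : ℕ) (S : R[X]), Polynomial.C (Q.leadingCoeff ^ e) * P = S * Q + T

theorem exists_isPseudoRem (P : R[X]) {Q : R[X]} (hQ : Q.natDegree ≠ 0) :
    ∃ T, IsPseudoRem P Q T := by
  induction hn : P.natDegree using Nat.strong_induction_on generalizing P with | _ n ih
  rcases lt_or_ge P.natDegree Q.natDegree with hPQ | hQP
  · exact ⟨P, hPQ, 0, 0, by simp⟩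
  obtain ⟨T, hT, e, S, hS⟩ := ih (Q.cancelLeads P).natDegree
    (hn ▸ Polynomial.natDegree_cancelLeads_lt_of_natDegree_le_natDegree hQP (by lia)) _ rfl
  refine ⟨T, hT, e + 1, S + Polynomial.C (Q.leadingCoeff ^ e) *
    (Polynomial.C P.leadingCoeff * Polynomial.X ^ (P.natDegree - Q.natDegree)), ?_⟩
  rw [Polynomial.cancelLeads, Nat.sub_eq_zero_of_le hQP, pow_zero, mul_one] at hS
  rw [pow_succ, Polynomial.C_mul]
  linear_combination hS

/-- A finite family of polynomials closed under the operations of the Cohen–Hörmander algorithm: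
derivatives, truncation of the leading term, and pseudo-remainders. -/
structure IsClosedFamily (F : Finset R[X]) : Prop where
  derivative_mem : ∀ P ∈ F, P.natDegree ≠ 0 → P.derivative ∈ F
  eraseLead_mem : ∀ P ∈ F, P.natDegree ≠ 0 → P.eraseLead ∈ F
  exists_pseudoRem_mem : ∀ P ∈ F, ∀ Q ∈ F, Q.natDegree ≠ 0 → Q.natDegree ≤ P.natDegree →
    ∃ T ∈ F, IsPseudoRem P Q T

theorem exists_isClosedFamily (F₀ : Finset R[X]) : ∃ F, F₀ ⊆ F ∧ IsClosedFamily F := by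
  classical
  choose! rem hrem using fun (P Q : R[X]) (hQ : Q.natDegree ≠ 0) ↦ exists_isPseudoRem P hQ
  obtain ⟨F, hF₀, hF⟩ := exists_finset_superset_closed_under_rank_decreasing
    Polynomial.natDegree (fun P Q ↦ {P.derivative, P.eraseLead, rem P Q}) F₀
  refine ⟨F, hF₀, fun P hP hdeg ↦ ?_, fun P hP hdeg ↦ ?_, fun P hP Q hQ hdeg hQP ↦ ?_⟩
  · have hlt := Polynomial.natDegree_derivative_lt hdeg
    exact hF P hP P hP _ (by simp) hlt hlt
  · have hlt := P.eraseLead_natDegree_le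
    exact hF P hP P hP _ (by simp) (by lia) (by lia)
  · have hlt := (hrem P Q hdeg).1
    exact ⟨rem P Q, hF P hP Q hQ _ (by simp) (hlt.trans_le hQP) hlt, hrem P Q hdeg⟩

end ClosedFamily

section BackAndForth

theorem eq_zero_iff_of_sign_eq {α β : Type*} [Zero α] [LinearOrder α] [Zero β] [LinearOrder β]
    {x : α} {y : β} (h : sign x = sign y) : x = 0 ↔ y = 0 := by
  rw [← sign_eq_zero_iff, h, sign_eq_zero_iff]

theorem map_eraseLead_of_leadingCoeff_eq_zero {R L : Type*} [Semiring R] [Semiring L] {φ : R →+* L}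
    {P : R[X]} (hφ : φ P.leadingCoeff = 0) : P.eraseLead.map φ = P.map φ := by
  conv_rhs => rw [← P.eraseLead_add_monomial_natDegree_leadingCoeff]
  rw [Polynomial.map_add, Polynomial.map_monomial, hφ, Polynomial.monomial_zero_right, add_zero]

/-- `y` is a root of a polynomial of degree at most `k` in the family `F` that does not vanish
identically under the coefficient map `φ`. -/
def IsRootOfDegreeLE {R L : Type*} [Semiring R] [Semiring L] (φ : R →+* L) (F : Finset R[X])
    (k : ℕ) (y : L) : Prop :=
  ∃ P ∈ F, P.natDegree ≤ k ∧ P.map φ ≠ 0 ∧ (P.map φ).eval y = 0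

theorem not_isRootOfDegreeLE_zero {R L : Type*} [Semiring R] [Semiring L] (φ : R →+* L)
    (F : Finset R[X]) (y : L) : ¬ IsRootOfDegreeLE φ F 0 y := by
  rintro ⟨P, -, hdeg, hP0, hPy⟩
  rw [Polynomial.eq_C_of_natDegree_le_zero hdeg] at hP0 hPy
  simp_all

theorem finite_setOf_isRootOfDegreeLE {R L : Type*} [Semiring R] [CommRing L] [IsDomain L]
    (φ : R →+* L) (F : Finset R[X]) (k : ℕ) : {y | IsRootOfDegreeLE φ F k y}.Finite := by
  refine (F.finite_toSet.biUnion' fun P _ ↦ (P.map φ).roots.finite_toSet).subset ?_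
  rintro y ⟨P, hPF, -, hP0, hPy⟩
  exact mem_iUnion₂.2 ⟨P, hPF, (Polynomial.mem_roots hP0).2 hPy⟩

theorem IsClosedFamily.isRootOfDegreeLE_of_derivative {R L : Type*} [CommRing R] [CommRing L]
    [IsDomain L] [CharZero L] {φ : R →+* L} {F : Finset R[X]} (hF : IsClosedFamily F) {P : R[X]}
    (hP : P ∈ F) {k : ℕ} (hdeg : P.natDegree ≤ k + 1) (hmap : (P.map φ).natDegree ≠ 0) {y : L}
    (hy : (P.map φ).derivative.eval y = 0) : IsRootOfDegreeLE φ F k y := by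
  have hPdeg : P.natDegree ≠ 0 := (hmap.bot_lt.trans_le Polynomial.natDegree_map_le).ne'
  rw [Polynomial.derivative_map] at hy
  refine ⟨P.derivative, hF.derivative_mem P hP hPdeg, ?_, ?_, hy⟩
  · exact P.natDegree_derivative_le.trans (Nat.sub_le_of_le_add hdeg)
  · rwa [← Polynomial.derivative_map, Ne, Polynomial.derivative_eq_zero]

variable {R L₁ L₂ : Type*} [CommRing R]
  [Field L₁] [LinearOrder L₁] [Field L₂] [LinearOrder L₂]
  {φ₁ : R →+* L₁} {φ₂ : R →+* L₂} {F : Finset R[X]}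

/-- Two points have the same signs if every polynomial of the family `F` takes values of the same
sign at them. -/
def SameSigns (φ₁ : R →+* L₁) (φ₂ : R →+* L₂) (F : Finset R[X]) (y₁ : L₁) (y₂ : L₂) : Prop :=
  ∀ P ∈ F, sign ((P.map φ₁).eval y₁) = sign ((P.map φ₂).eval y₂)

theorem SameSigns.symm {y₁ : L₁} {y₂ : L₂} (h : SameSigns φ₁ φ₂ F y₁ y₂) :
    SameSigns φ₂ φ₁ F y₂ y₁ :=
  fun P hP ↦ (h P hP).symm

/-- Two coefficient maps are sign compatible on a closed family if they give every leading
coefficient the same sign. This is the parameter-space condition under which the real lines over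
`φ₁` and `φ₂` look alike to the family. -/
structure SignCompatible (φ₁ : R →+* L₁) (φ₂ : R →+* L₂) (F : Finset R[X]) : Prop
    extends IsClosedFamily F where
  sign_leadingCoeff : ∀ P ∈ F, sign (φ₁ P.leadingCoeff) = sign (φ₂ P.leadingCoeff)

namespace SignCompatible

theorem symm (h : SignCompatible φ₁ φ₂ F) : SignCompatible φ₂ φ₁ F :=
  ⟨h.toIsClosedFamily, fun P hP ↦ (h.sign_leadingCoeff P hP).symm⟩

theorem map_eq_zero_or_exists_leadingCoeff_ne_zero (h : SignCompatible φ₁ φ₂ F) {P : R[X]}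
    (hP : P ∈ F) : (P.map φ₁ = 0 ∧ P.map φ₂ = 0) ∨
      ∃ Q ∈ F, Q.natDegree ≤ P.natDegree ∧ Q.map φ₁ = P.map φ₁ ∧ Q.map φ₂ = P.map φ₂ ∧
        φ₁ Q.leadingCoeff ≠ 0 ∧ φ₂ Q.leadingCoeff ≠ 0 := by
  induction hn : P.natDegree using Nat.strong_induction_on generalizing P with | _ n ih
  have hiff := eq_zero_iff_of_sign_eq (h.sign_leadingCoeff P hP)
  by_cases hlc : φ₁ P.leadingCoeff = 0
  swap
  · exact .inr ⟨P, hP, hn.le, rfl, rfl, hlc, fun h0 ↦ hlc (hiff.2 h0)⟩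
  by_cases hdeg : P.natDegree = 0
  · rw [Polynomial.leadingCoeff, hdeg] at hlc hiff
    rw [Polynomial.eq_C_of_natDegree_eq_zero hdeg]
    simp [hlc, hiff.1 hlc]
  have hlt := P.eraseLead_natDegree_le
  have hP' := ih P.eraseLead.natDegree (by lia) (h.eraseLead_mem P hP hdeg) rfl
  rw [map_eraseLead_of_leadingCoeff_eq_zero hlc,
    map_eraseLead_of_leadingCoeff_eq_zero (hiff.1 hlc)] at hP'
  refine hP'.imp_right ?_
  rintro ⟨Q, hQ, hdegQ, hmap⟩
  exact ⟨Q, hQ, by lia, hmap⟩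

theorem map_eq_zero_iff (h : SignCompatible φ₁ φ₂ F) {P : R[X]} (hP : P ∈ F) :
    P.map φ₁ = 0 ↔ P.map φ₂ = 0 := by
  obtain ⟨h₁, h₂⟩ | ⟨Q, -, -, hQ₁, hQ₂, hlc₁, hlc₂⟩ :=
    h.map_eq_zero_or_exists_leadingCoeff_ne_zero hP
  · simp only [h₁, h₂]
  · rw [← hQ₁, ← hQ₂, ← Polynomial.leadingCoeff_eq_zero, ← Polynomial.leadingCoeff_eq_zero,
      Polynomial.leadingCoeff_map_of_leadingCoeff_ne_zero _ hlc₁,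
      Polynomial.leadingCoeff_map_of_leadingCoeff_ne_zero _ hlc₂]
    simp only [hlc₁, hlc₂]

theorem natDegree_map_eq (h : SignCompatible φ₁ φ₂ F) {P : R[X]} (hP : P ∈ F) :
    (P.map φ₁).natDegree = (P.map φ₂).natDegree := by
  obtain ⟨h₁, h₂⟩ | ⟨Q, -, -, hQ₁, hQ₂, hlc₁, hlc₂⟩ :=
    h.map_eq_zero_or_exists_leadingCoeff_ne_zero hP
  · simp only [h₁, h₂, Polynomial.natDegree_zero]
  · rw [← hQ₁, ← hQ₂, Polynomial.natDegree_map_of_leadingCoeff_ne_zero _ hlc₁,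
      Polynomial.natDegree_map_of_leadingCoeff_ne_zero _ hlc₂]

theorem sign_leadingCoeff_map (h : SignCompatible φ₁ φ₂ F) {P : R[X]} (hP : P ∈ F) :
    sign (P.map φ₁).leadingCoeff = sign (P.map φ₂).leadingCoeff := by
  obtain ⟨h₁, h₂⟩ | ⟨Q, hQ, -, hQ₁, hQ₂, hlc₁, hlc₂⟩ :=
    h.map_eq_zero_or_exists_leadingCoeff_ne_zero hP
  · simp only [h₁, h₂, Polynomial.leadingCoeff_zero, sign_zero]
  · rw [← hQ₁, ← hQ₂, Polynomial.leadingCoeff_map_of_leadingCoeff_ne_zero _ hlc₁,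
      Polynomial.leadingCoeff_map_of_leadingCoeff_ne_zero _ hlc₂, h.sign_leadingCoeff Q hQ]

theorem isRootOfDegreeLE (h : SignCompatible φ₁ φ₂ F) {k : ℕ} {y₁ : L₁} {y₂ : L₂}
    (hy : SameSigns φ₁ φ₂ F y₁ y₂) (hroot : IsRootOfDegreeLE φ₁ F k y₁) :
    IsRootOfDegreeLE φ₂ F k y₂ := by
  obtain ⟨P, hP, hdeg, hP0, hPy⟩ := hroot
  exact ⟨P, hP, hdeg, mt (h.map_eq_zero_iff hP).2 hP0, (eq_zero_iff_of_sign_eq (hy P hP)).1 hPy⟩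

variable [IsStrictOrderedRing L₁] [IsStrictOrderedRing L₂]

theorem eventually_sameSigns_atTop (h : SignCompatible φ₁ φ₂ F) :
    ∀ᶠ y in atTop ×ˢ atTop, SameSigns φ₁ φ₂ F y.1 y.2 := by
  refine (eventually_all_finset F).2 fun P hP ↦ ?_
  filter_upwards [(eventually_atTop_sign_eval (P.map φ₁)).prod_mk
    (eventually_atTop_sign_eval (P.map φ₂))] with y hy
  rw [hy.1, hy.2, h.sign_leadingCoeff_map hP]

theorem eventually_sameSigns_atBot (h : SignCompatible φ₁ φ₂ F) :
    ∀ᶠ y in atBot ×ˢ atBot, SameSigns φ₁ φ₂ F y.1 y.2 := by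
  refine (eventually_all_finset F).2 fun P hP ↦ ?_
  filter_upwards [(eventually_atBot_sign_eval (P.map φ₁)).prod_mk
    (eventually_atBot_sign_eval (P.map φ₂))] with y hy
  simp only [hy.1, hy.2, sign_mul, sign_pow, Left.sign_neg, sign_one, h.natDegree_map_eq hP,
    h.sign_leadingCoeff_map hP]

/- Modulo a polynomial `Q` vanishing at the point, every member of the family agrees, up to a
factor of known sign, with a pseudo-remainder of degree less than that of `Q`. -/
theorem sameSigns_of_eval_eq_zero (h : SignCompatible φ₁ φ₂ F) {Q : R[X]} (hQ : Q ∈ F)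
    (hdeg : Q.natDegree ≠ 0) (hlc₂ : φ₂ Q.leadingCoeff ≠ 0) {y₁ : L₁} {y₂ : L₂}
    (hy₁ : (Q.map φ₁).eval y₁ = 0) (hy₂ : (Q.map φ₂).eval y₂ = 0)
    (hlt : ∀ P ∈ F, P.natDegree < Q.natDegree →
      sign ((P.map φ₁).eval y₁) = sign ((P.map φ₂).eval y₂)) :
    SameSigns φ₁ φ₂ F y₁ y₂ := by
  intro P hP
  rcases lt_or_ge P.natDegree Q.natDegree with hPQ | hQP
  · exact hlt P hP hPQ
  obtain ⟨T, hT, hTQ, e, S, hS⟩ := h.exists_pseudoRem_mem P hP Q hQ hdeg hQP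
  have heval₁ : φ₁ Q.leadingCoeff ^ e * (P.map φ₁).eval y₁ = (T.map φ₁).eval y₁ := by
    simpa [hy₁] using congrArg (fun T ↦ (T.map φ₁).eval y₁) hS
  have heval₂ : φ₂ Q.leadingCoeff ^ e * (P.map φ₂).eval y₂ = (T.map φ₂).eval y₂ := by
    simpa [hy₂] using congrArg (fun T ↦ (T.map φ₂).eval y₂) hS
  have hsign := hlt T hT hTQ
  rw [← heval₁, ← heval₂, sign_mul, sign_mul, sign_pow, sign_pow, h.sign_leadingCoeff Q hQ] at hsign
  exact mul_left_cancel₀ (pow_ne_zero _ (sign_ne_zero.2 hlc₂)) hsign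

theorem exists_sameSigns_left (h : SignCompatible φ₁ φ₂ F) {k : ℕ}
    (hroots : ∀ z₁, IsRootOfDegreeLE φ₁ F k z₁ → ∃ z₂, SameSigns φ₁ φ₂ F z₁ z₂) (y₁ : L₁) :
    ∃ u₁ < y₁, ∃ u₂, SameSigns φ₁ φ₂ F u₁ u₂ ∧ (∀ c ∈ Ioo u₁ y₁, ¬ IsRootOfDegreeLE φ₁ F k c) ∧
      (IsRootOfDegreeLE φ₁ F k u₁ ∨ u₂ < 0) := by
  by_cases hne : {c | IsRootOfDegreeLE φ₁ F k c ∧ c < y₁}.Nonempty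
  · have hfin := (finite_setOf_isRootOfDegreeLE φ₁ F k).subset
      (inter_subset_left : {c | IsRootOfDegreeLE φ₁ F k c} ∩ {c | c < y₁} ⊆ _)
    obtain ⟨u₁, ⟨hroot, huy⟩, hmax⟩ := hfin.exists_maximal hne
    obtain ⟨u₂, hu⟩ := hroots u₁ hroot
    exact ⟨u₁, huy, u₂, hu, fun c hc hcroot ↦
      hc.1.not_ge (hmax ⟨hcroot, hc.2⟩ hc.1.le), .inl hroot⟩
  · obtain ⟨⟨u₁, u₂⟩, hu, huy, hu₂⟩ := (h.eventually_sameSigns_atBot.and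
      ((eventually_lt_atBot y₁).prod_mk (eventually_lt_atBot 0))).exists
    exact ⟨u₁, huy, u₂, hu, fun c hc hcroot ↦ hne ⟨c, hcroot, hc.2⟩, .inr hu₂⟩

theorem exists_sameSigns_right (h : SignCompatible φ₁ φ₂ F) {k : ℕ}
    (hroots : ∀ z₁, IsRootOfDegreeLE φ₁ F k z₁ → ∃ z₂, SameSigns φ₁ φ₂ F z₁ z₂) (y₁ : L₁) :
    ∃ w₁ > y₁, ∃ w₂, SameSigns φ₁ φ₂ F w₁ w₂ ∧ (∀ c ∈ Ioo y₁ w₁, ¬ IsRootOfDegreeLE φ₁ F k c) ∧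
      (IsRootOfDegreeLE φ₁ F k w₁ ∨ 0 < w₂) := by
  by_cases hne : {c | IsRootOfDegreeLE φ₁ F k c ∧ y₁ < c}.Nonempty
  · have hfin := (finite_setOf_isRootOfDegreeLE φ₁ F k).subset
      (inter_subset_left : {c | IsRootOfDegreeLE φ₁ F k c} ∩ {c | y₁ < c} ⊆ _)
    obtain ⟨w₁, ⟨hroot, hyw⟩, hmin⟩ := hfin.exists_minimal hne
    obtain ⟨w₂, hw⟩ := hroots w₁ hroot
    exact ⟨w₁, hyw, w₂, hw, fun c hc hcroot ↦
      hc.2.not_ge (hmin ⟨hcroot, hc.1⟩ hc.2.le), .inl hroot⟩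
  · obtain ⟨⟨w₁, w₂⟩, hw, hyw, hw₂⟩ := (h.eventually_sameSigns_atTop.and
      ((eventually_gt_atTop y₁).prod_mk (eventually_gt_atTop 0))).exists
    exact ⟨w₁, hyw, w₂, hw, fun c hc hcroot ↦ hne ⟨c, hcroot, hc.1⟩, .inr hw₂⟩

end SignCompatible

theorem eqOn_of_monotoneOn_of_monotoneOn {α β γ : Type*} [Preorder α] [Preorder β]
    [PartialOrder γ] {f : α → γ} {g : β → γ} {a b : α} {c d : β} (hab : a ≤ b) (hcd : c ≤ d)
    (hf : MonotoneOn f (Icc a b)) (hg : MonotoneOn g (Icc c d)) (had : f a = g d)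
    (hbc : f b = g c) : (∀ x ∈ Icc a b, f x = f a) ∧ ∀ y ∈ Icc c d, g y = g d := by
  have ha := left_mem_Icc.2 hab
  have hb := right_mem_Icc.2 hab
  have hc := left_mem_Icc.2 hcd
  have hd := right_mem_Icc.2 hcd
  have hfab : f b = f a := le_antisymm (hbc ▸ had ▸ hg hc hd hcd) (hf ha hb hab)
  refine ⟨fun x hx ↦ ?_, fun y hy ↦ ?_⟩
  · exact le_antisymm (hfab ▸ hf hx hb hx.2) (hf ha hx hx.1)
  · exact le_antisymm (hg hy hd hy.2) (by rw [← had, ← hfab, hbc]; exact hg hc hy hy.1)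

namespace SignCompatible

variable [IsStrictOrderedRing L₁] [IsStrictOrderedRing L₂] [PolynomialIVT L₁] [PolynomialIVT L₂]

open PolynomialIVT

/- Thom's lemma: by induction on the degree, the derivative has constant sign on both intervals, so
the polynomial is monotone in the same direction on both; but the matching of the end points
reverses the order. -/
theorem sign_eval_eq_on_Icc (h : SignCompatible φ₁ φ₂ F) {x₁ z₁ : L₁} {x₂ z₂ : L₂}
    (hx : SameSigns φ₁ φ₂ F x₁ x₂) (hz : SameSigns φ₁ φ₂ F z₁ z₂) (h₁ : x₁ ≤ z₁) (h₂ : z₂ ≤ x₂)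
    {P : R[X]} (hP : P ∈ F) :
    (∀ c ∈ Icc x₁ z₁, sign ((P.map φ₁).eval c) = sign ((P.map φ₁).eval x₁)) ∧
      ∀ c ∈ Icc z₂ x₂, sign ((P.map φ₂).eval c) = sign ((P.map φ₂).eval x₂) := by
  induction hn : P.natDegree using Nat.strong_induction_on generalizing P with | _ n ih
  by_cases hdeg : P.natDegree = 0
  · rw [Polynomial.eq_C_of_natDegree_eq_zero hdeg]
    simp
  have hP' := h.derivative_mem P hP hdeg
  obtain ⟨ih₁, ih₂⟩ := ih _ (hn ▸ Polynomial.natDegree_derivative_lt hdeg) hP' rfl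
  rw [← hx _ hP'] at ih₂
  rcases le_total 0 ((P.derivative.map φ₁).eval x₁) with hpos | hneg
  · have mono₁ : MonotoneOn (fun x ↦ (P.map φ₁).eval x) (Icc x₁ z₁) :=
      monotoneOn_eval_of_derivative_nonneg fun c hc ↦ by
        rwa [Polynomial.derivative_map, ← sign_nonneg_iff, ih₁ c hc, sign_nonneg_iff]
    have mono₂ : MonotoneOn (fun x ↦ (P.map φ₂).eval x) (Icc z₂ x₂) :=
      monotoneOn_eval_of_derivative_nonneg fun c hc ↦ by
        rwa [Polynomial.derivative_map, ← sign_nonneg_iff, ih₂ c hc, sign_nonneg_iff]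
    exact eqOn_of_monotoneOn_of_monotoneOn h₁ h₂ (sign.monotone.comp_monotoneOn mono₁)
      (sign.monotone.comp_monotoneOn mono₂) (hx P hP) (hz P hP)
  · have anti₁ : AntitoneOn (fun x ↦ (P.map φ₁).eval x) (Icc x₁ z₁) :=
      antitoneOn_eval_of_derivative_nonpos fun c hc ↦ by
        rwa [Polynomial.derivative_map, ← sign_nonpos_iff, ih₁ c hc, sign_nonpos_iff]
    have anti₂ : AntitoneOn (fun x ↦ (P.map φ₂).eval x) (Icc z₂ x₂) :=
      antitoneOn_eval_of_derivative_nonpos fun c hc ↦ by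
        rwa [Polynomial.derivative_map, ← sign_nonpos_iff, ih₂ c hc, sign_nonpos_iff]
    exact eqOn_of_monotoneOn_of_monotoneOn (γ := SignTypeᵒᵈ) h₁ h₂
      (sign.monotone.comp_antitoneOn anti₁).dual_right
      (sign.monotone.comp_antitoneOn anti₂).dual_right (hx P hP) (hz P hP)

theorem lt_of_lt_of_isRootOfDegreeLE (h : SignCompatible φ₁ φ₂ F) {x₁ z₁ : L₁} {x₂ z₂ : L₂}
    (hx : SameSigns φ₁ φ₂ F x₁ x₂) (hz : SameSigns φ₁ φ₂ F z₁ z₂) (hxz : x₁ < z₁) {k : ℕ}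
    (hroot : IsRootOfDegreeLE φ₁ F k x₁ ∨ IsRootOfDegreeLE φ₁ F k z₁) : x₂ < z₂ := by
  by_contra! hzx
  suffices ∀ c ∈ Icc x₁ z₁, ¬ IsRootOfDegreeLE φ₁ F k c from
    hroot.elim (this x₁ (left_mem_Icc.2 hxz.le)) (this z₁ (right_mem_Icc.2 hxz.le))
  rintro c hc ⟨P, hP, -, hP0, hPc⟩
  have hsign := (h.sign_eval_eq_on_Icc hx hz hxz.le hzx hP).1
  refine hP0 (Polynomial.eq_zero_of_infinite_isRoot _ ((Icc_infinite hxz).mono fun e he ↦ ?_))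
  have : sign ((P.map φ₁).eval e) = sign ((P.map φ₁).eval c) := by rw [hsign e he, hsign c hc]
  rwa [hPc, sign_zero, sign_eq_zero_iff] at this

theorem sign_eval_eq_of_no_roots (h : SignCompatible φ₁ φ₂ F) {k : ℕ} {u₁ w₁ y₁ : L₁}
    {u₂ w₂ y₂ : L₂} (hu : SameSigns φ₁ φ₂ F u₁ u₂) (hw : SameSigns φ₁ φ₂ F w₁ w₂)
    (hno₁ : ∀ c ∈ Ioo u₁ w₁, ¬ IsRootOfDegreeLE φ₁ F k c)
    (hno₂ : ∀ c ∈ Ioo u₂ w₂, ¬ IsRootOfDegreeLE φ₂ F k c)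
    (hy₁ : y₁ ∈ Ioo u₁ w₁) (hy₂ : y₂ ∈ Ioo u₂ w₂) {P : R[X]} (hP : P ∈ F)
    (hdeg : P.natDegree ≤ k) : sign ((P.map φ₁).eval y₁) = sign ((P.map φ₂).eval y₂) := by
  by_cases h₁ : P.map φ₁ = 0
  · simp [h₁, (h.map_eq_zero_iff hP).1 h₁]
  have h₂ := mt (h.map_eq_zero_iff hP).2 h₁
  have hP₁ : ∀ c ∈ Ioo u₁ w₁, (P.map φ₁).eval c ≠ 0 := fun c hc hc0 ↦
    hno₁ c hc ⟨P, hP, hdeg, h₁, hc0⟩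
  have hP₂ : ∀ c ∈ Ioo u₂ w₂, (P.map φ₂).eval c ≠ 0 := fun c hc hc0 ↦
    hno₂ c hc ⟨P, hP, hdeg, h₂, hc0⟩
  by_cases hu₁ : (P.map φ₁).eval u₁ = 0
  · have hw₁ : (P.map φ₁).eval w₁ ≠ 0 := fun hw₁ ↦ by
      obtain ⟨c, hc, hc0⟩ := exists_derivative_eval_eq_zero h₁ (hy₁.1.trans hy₁.2) hu₁ hw₁
      have hmap := Polynomial.natDegree_pos_iff_degree_pos.2 (Polynomial.degree_pos_of_root h₁ hu₁)
      exact hno₁ c hc (h.isRootOfDegreeLE_of_derivative hP (by lia) hmap.ne' hc0)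
    have hw₂ := mt (eq_zero_iff_of_sign_eq (hw P hP)).2 hw₁
    rw [sign_eval_eq_of_forall_ne_zero hy₁.2 fun c hc ↦ ?_,
      sign_eval_eq_of_forall_ne_zero hy₂.2 fun c hc ↦ ?_, hw P hP]
    · rcases hc.2.eq_or_lt with rfl | hcw
      exacts [hw₂, hP₂ c ⟨hy₂.1.trans_le hc.1, hcw⟩]
    · rcases hc.2.eq_or_lt with rfl | hcw
      exacts [hw₁, hP₁ c ⟨hy₁.1.trans_le hc.1, hcw⟩]
  · have hu₂ := mt (eq_zero_iff_of_sign_eq (hu P hP)).2 hu₁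
    rw [← sign_eval_eq_of_forall_ne_zero hy₁.1 fun c hc ↦ ?_,
      ← sign_eval_eq_of_forall_ne_zero hy₂.1 fun c hc ↦ ?_, hu P hP]
    · rcases hc.1.eq_or_lt with rfl | huc
      exacts [hu₂, hP₂ c ⟨huc, hc.2.trans_lt hy₂.2⟩]
    · rcases hc.1.eq_or_lt with rfl | huc
      exacts [hu₁, hP₁ c ⟨huc, hc.2.trans_lt hy₁.2⟩]

theorem exists_sameSigns_Ioo (h : SignCompatible φ₁ φ₂ F) {k : ℕ}
    (hroots₁ : ∀ z₁, IsRootOfDegreeLE φ₁ F k z₁ → ∃ z₂, SameSigns φ₁ φ₂ F z₁ z₂)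
    (hroots₂ : ∀ z₂, IsRootOfDegreeLE φ₂ F k z₂ → ∃ z₁, SameSigns φ₁ φ₂ F z₁ z₂)
    {y₁ : L₁} (hy₁ : ¬ IsRootOfDegreeLE φ₁ F k y₁) :
    ∃ u₁ w₁ u₂ w₂, y₁ ∈ Ioo u₁ w₁ ∧ u₂ < w₂ ∧ SameSigns φ₁ φ₂ F u₁ u₂ ∧ SameSigns φ₁ φ₂ F w₁ w₂ ∧
      (∀ c ∈ Ioo u₁ w₁, ¬ IsRootOfDegreeLE φ₁ F k c) ∧
      ∀ c ∈ Ioo u₂ w₂, ¬ IsRootOfDegreeLE φ₂ F k c := by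
  obtain ⟨u₁, huy, u₂, hu, hnou, hu'⟩ := h.exists_sameSigns_left hroots₁ y₁
  obtain ⟨w₁, hyw, w₂, hw, hnow, hw'⟩ := h.exists_sameSigns_right hroots₁ y₁
  have hno₁ : ∀ c ∈ Ioo u₁ w₁, ¬ IsRootOfDegreeLE φ₁ F k c := fun c hc hroot ↦ by
    rcases lt_trichotomy c y₁ with hcy | rfl | hyc
    exacts [hnou c ⟨hc.1, hcy⟩ hroot, hy₁ hroot, hnow c ⟨hyc, hc.2⟩ hroot]
  refine ⟨u₁, w₁, u₂, w₂, ⟨huy, hyw⟩, ?_, hu, hw, hno₁, fun c hc hroot ↦ ?_⟩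
  · rcases hu', hw' with ⟨hu' | hu', hw' | hw'⟩
    exacts [h.lt_of_lt_of_isRootOfDegreeLE hu hw (huy.trans hyw) (.inl hu'),
      h.lt_of_lt_of_isRootOfDegreeLE hu hw (huy.trans hyw) (.inl hu'),
      h.lt_of_lt_of_isRootOfDegreeLE hu hw (huy.trans hyw) (.inr hw'), hu'.trans hw']
  · obtain ⟨z₁, hz⟩ := hroots₂ c hroot
    exact hno₁ z₁ ⟨h.symm.lt_of_lt_of_isRootOfDegreeLE hu.symm hz.symm hc.1 (.inr hroot),
      h.symm.lt_of_lt_of_isRootOfDegreeLE hz.symm hw.symm hc.2 (.inl hroot)⟩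
      (h.symm.isRootOfDegreeLE hz.symm hroot)

theorem exists_sameSigns_of_isRootOfDegreeLE_succ (h : SignCompatible φ₁ φ₂ F) {k : ℕ}
    (hroots₁ : ∀ z₁, IsRootOfDegreeLE φ₁ F k z₁ → ∃ z₂, SameSigns φ₁ φ₂ F z₁ z₂)
    (hroots₂ : ∀ z₂, IsRootOfDegreeLE φ₂ F k z₂ → ∃ z₁, SameSigns φ₁ φ₂ F z₁ z₂)
    {y₁ : L₁} (hy₁ : IsRootOfDegreeLE φ₁ F (k + 1) y₁) : ∃ y₂, SameSigns φ₁ φ₂ F y₁ y₂ := by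
  by_cases hk : IsRootOfDegreeLE φ₁ F k y₁
  · exact hroots₁ y₁ hk
  obtain ⟨P, hP, hPdeg, hP0, hPy⟩ := hy₁
  obtain ⟨hP0', -⟩ | ⟨Q, hQ, hQP, hQ₁, -, hlc₁, hlc₂⟩ :=
    h.map_eq_zero_or_exists_leadingCoeff_ne_zero hP
  · exact absurd hP0' hP0
  rw [← hQ₁] at hP0 hPy
  have hdeg : Q.natDegree = k + 1 := le_antisymm (hQP.trans hPdeg) <|
    not_le.1 fun hle ↦ hk ⟨Q, hQ, hle, hP0, hPy⟩
  obtain ⟨u₁, w₁, u₂, w₂, hyuw, huw, hu, hw, hno₁, hno₂⟩ :=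
    h.exists_sameSigns_Ioo hroots₁ hroots₂ hk
  have hsign : (Q.map φ₁).eval u₁ * (Q.map φ₁).eval w₁ < 0 :=
    mul_eval_neg_of_derivative_ne_zero hyuw hPy fun c hc hc0 ↦ hno₁ c hc <|
      h.isRootOfDegreeLE_of_derivative hQ hdeg.le
        (by rw [Polynomial.natDegree_map_of_leadingCoeff_ne_zero _ hlc₁]; lia) hc0
  rw [← sign_eq_neg_one_iff, sign_mul, hu Q hQ, hw Q hQ, ← sign_mul, sign_eq_neg_one_iff] at hsign
  obtain ⟨y₂, hy₂, hQy₂⟩ := exists_root_mem_Ioo huw hsign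
  exact ⟨y₂, h.sameSigns_of_eval_eq_zero hQ (by lia) hlc₂ hPy hQy₂ fun T hT hTQ ↦
    h.sign_eval_eq_of_no_roots hu hw hno₁ hno₂ hyuw hy₂ hT (by lia)⟩

theorem exists_sameSigns_of_isRootOfDegreeLE (h : SignCompatible φ₁ φ₂ F) (k : ℕ) :
    (∀ z₁, IsRootOfDegreeLE φ₁ F k z₁ → ∃ z₂, SameSigns φ₁ φ₂ F z₁ z₂) ∧
      ∀ z₂, IsRootOfDegreeLE φ₂ F k z₂ → ∃ z₁, SameSigns φ₁ φ₂ F z₁ z₂ := by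
  induction k with
  | zero =>
    exact ⟨fun z hz ↦ absurd hz (not_isRootOfDegreeLE_zero φ₁ F z),
      fun z hz ↦ absurd hz (not_isRootOfDegreeLE_zero φ₂ F z)⟩
  | succ k ih =>
    refine ⟨fun z₁ hz₁ ↦ h.exists_sameSigns_of_isRootOfDegreeLE_succ ih.1 ih.2 hz₁,
      fun z₂ hz₂ ↦ ?_⟩
    obtain ⟨z₁, hz⟩ := h.symm.exists_sameSigns_of_isRootOfDegreeLE_succ
      (fun z hz ↦ (ih.2 z hz).imp fun _ ↦ .symm) (fun z hz ↦ (ih.1 z hz).imp fun _ ↦ .symm) hz₂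
    exact ⟨z₁, hz.symm⟩

theorem exists_sameSigns (h : SignCompatible φ₁ φ₂ F) (y₁ : L₁) :
    ∃ y₂, SameSigns φ₁ φ₂ F y₁ y₂ := by
  obtain ⟨hroots₁, hroots₂⟩ :=
    h.exists_sameSigns_of_isRootOfDegreeLE (F.sup Polynomial.natDegree)
  by_cases hy₁ : IsRootOfDegreeLE φ₁ F (F.sup Polynomial.natDegree) y₁
  · exact hroots₁ y₁ hy₁
  obtain ⟨u₁, w₁, u₂, w₂, hyuw, huw, hu, hw, hno₁, hno₂⟩ :=
    h.exists_sameSigns_Ioo hroots₁ hroots₂ hy₁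
  obtain ⟨y₂, hy₂⟩ := exists_between huw
  exact ⟨y₂, fun P hP ↦ h.sign_eval_eq_of_no_roots hu hw hno₁ hno₂ hyuw hy₂ hP
    (Finset.le_sup (f := Polynomial.natDegree) hP)⟩

end SignCompatible

end BackAndForth

/- The Artin–Lang homomorphism theorem, in the form of a transfer of sign conditions from a ring
homomorphism to a rational point. -/
theorem exists_sign_eval_eq {k L : Type*} [Field k] [LinearOrder k] [IsStrictOrderedRing k]
    [PolynomialIVT k] [Field L] [LinearOrder L] [IsStrictOrderedRing L] [PolynomialIVT L] {d : ℕ}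
    (φ : MvPolynomial (Fin d) k →+* L) (F : Finset (MvPolynomial (Fin d) k)) :
    ∃ a : Fin d → k, ∀ P ∈ F, sign (φ P) = sign (eval a P) := by
  classical
  induction d with
  | zero =>
    refine ⟨Fin.elim0, fun P _ ↦ ?_⟩
    obtain ⟨c, rfl⟩ := C_surjective (Fin 0) P
    rw [eval_C]
    exact PolynomialIVT.sign_map (φ.comp C) c
  | succ d ih =>
    obtain ⟨G, hFG, hG⟩ := exists_isClosedFamily (F.image (finSuccEquiv k d))
    set ψ : (MvPolynomial (Fin d) k)[X] →+* L := φ.comp (finSuccEquiv k d).symm.toRingHom with hψ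
    obtain ⟨a, ha⟩ := ih (ψ.comp Polynomial.C) (G.image Polynomial.leadingCoeff)
    have hcompat : SignCompatible (ψ.comp Polynomial.C) (eval a) G :=
      ⟨hG, fun P hP ↦ ha _ (Finset.mem_image_of_mem _ hP)⟩
    obtain ⟨y, hy⟩ := hcompat.exists_sameSigns (ψ Polynomial.X)
    refine ⟨Fin.cons y a, fun P hP ↦ ?_⟩
    have hψ_eval (Q : (MvPolynomial (Fin d) k)[X]) :
        (Q.map (ψ.comp Polynomial.C)).eval (ψ Polynomial.X) = ψ Q := by
      rw [Polynomial.eval_map, ← Polynomial.hom_eval₂, Polynomial.eval₂_C_X]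
    have hφP : φ P = ψ (finSuccEquiv k d P) := by simp [hψ]
    rw [eval_eq_eval_mv_eval', hφP, ← hψ_eval]
    exact hy _ (hFG (Finset.mem_image_of_mem _ hP))

section RealClosure

universe u

theorem isSumSq_map {R S : Type*} [NonAssocSemiring R] [NonAssocSemiring S] (φ : R →+* S) {x : R}
    (hx : IsSumSq x) : IsSumSq (φ x) := by
  induction hx with
  | zero => simp
  | sq_add a _ ih =>
    rw [map_add, map_mul]
    exact .sq_add _ ih

theorem isSemireal_of_ringHom {R S : Type*} [NonAssocSemiring R] [NonAssocSemiring S]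
    [IsSemireal S] (φ : R →+* S) : IsSemireal R where
  one_add_ne_zero hs h0 := IsSemireal.one_add_ne_zero (isSumSq_map φ hs) <| by
    rw [← map_one φ, ← map_add, h0, map_zero]

theorem isFormallyReal_of_isSemireal (K : Type*) [Field K] [IsSemireal K] : IsFormallyReal K :=
  .of_eq_zero_of_eq_zero_of_mul_self_add fun {s a} hs h0 ↦ by
    by_contra ha
    refine IsSemireal.one_add_ne_zero (hs.mul (.mul_self a⁻¹)) ?_
    field_simp
    linear_combination h0

theorem isSemireal_sSup_of_directedOn {Ω : Type*} [Field Ω] {c : Set (Subfield Ω)}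
    (hne : c.Nonempty) (hdir : DirectedOn (· ≤ ·) c) (hc : ∀ F ∈ c, IsSemireal F) :
    IsSemireal (sSup c : Subfield Ω) := by
  have descend (x : (sSup c : Subfield Ω)) (hx : IsSumSq x) :
      ∃ F ∈ c, ∃ y : F, IsSumSq y ∧ (y : Ω) = x := by
    induction hx with
    | zero => exact ⟨hne.some, hne.some_mem, 0, .zero, rfl⟩
    | sq_add a _ ih =>
      obtain ⟨F, hF, y, hy, hyx⟩ := ih
      obtain ⟨G, hG, haG⟩ := (Subfield.mem_sSup_of_directedOn hne hdir).1 a.2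
      obtain ⟨E, hE, hFE, hGE⟩ := hdir F hF G hG
      exact ⟨E, hE, ⟨a, hGE haG⟩ * ⟨a, hGE haG⟩ + Subfield.inclusion hFE y,
        .sq_add _ (isSumSq_map _ hy), congrArg (_ + ·) hyx⟩
  refine ⟨fun {s} hs h0 ↦ ?_⟩
  obtain ⟨F, hF, y, hy, hys⟩ := descend s hs
  have := hc F hF
  refine IsSemireal.one_add_ne_zero hy (Subtype.ext ?_)
  simpa [hys] using congrArg Subtype.val h0

theorem exists_maximal_isSemireal_subfield {Ω : Type*} [Field Ω] {F₀ : Subfield Ω}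
    (hF₀ : IsSemireal F₀) : ∃ F, F₀ ≤ F ∧ Maximal (fun F : Subfield Ω ↦ IsSemireal F) F :=
  zorn_le_nonempty₀ {F : Subfield Ω | IsSemireal F} (fun c hc hchain F hF ↦
    ⟨sSup c, isSemireal_sSup_of_directedOn ⟨F, hF⟩ hchain.directedOn hc, fun _ ↦ le_sSup⟩) F₀ hF₀

/-- A semireal field is maximal if none of its proper algebraic extensions is semireal; it suffices
to ask this of the simple ones. By Artin and Schreier these are the real closed fields. -/
structure IsMaximalSemireal (L : Type*) [Field L] : Prop extends IsSemireal L where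
  not_isSemireal_adjoinRoot : ∀ Q : L[X], Irreducible Q → 2 ≤ Q.natDegree →
    ¬ IsSemireal (AdjoinRoot Q)

theorem isMaximalSemireal_of_maximal {Ω : Type*} [Field Ω] [IsAlgClosed Ω] {F : Subfield Ω}
    (hF : Maximal (fun F : Subfield Ω ↦ IsSemireal F) F) : IsMaximalSemireal F := by
  refine ⟨hF.prop, fun Q hQ hdeg hsemireal ↦ ?_⟩
  have : Fact (Irreducible Q) := ⟨hQ⟩
  obtain ⟨α, hα⟩ := IsAlgClosed.exists_eval₂_eq_zero F.subtype Q
    (Polynomial.degree_ne_of_natDegree_ne (n := 0) (by lia))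
  set σ : AdjoinRoot Q →+* Ω := AdjoinRoot.lift F.subtype α hα with hσ
  have hrange : IsSemireal σ.fieldRange :=
    isSemireal_of_ringHom (RingHom.rangeRestrictFieldEquiv σ).symm.toRingHom
  have hle : F ≤ σ.fieldRange := fun x hx ↦ ⟨AdjoinRoot.of Q ⟨x, hx⟩, by simp [hσ]⟩
  have hαF : α ∈ F := hF.le_of_ge hrange hle ⟨AdjoinRoot.root Q, by simp [hσ]⟩
  have hroot : Q.IsRoot ⟨α, hαF⟩ := F.subtype.injective <| by
    rw [← Polynomial.eval₂_at_apply, map_zero]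
    exact hα
  have hdeg1 : Q.natDegree = 1 := Polynomial.natDegree_eq_of_degree_eq_some
    (Polynomial.degree_eq_one_of_irreducible_of_root hQ hroot)
  lia

theorem exists_isMaximalSemireal (K : Type u) [Field K] [IsSemireal K] :
    ∃ (L : Type u) (_ : Field L) (_ : K →+* L), IsMaximalSemireal L := by
  set i := algebraMap K (AlgebraicClosure K)
  have hi : IsSemireal i.fieldRange :=
    isSemireal_of_ringHom (RingHom.rangeRestrictFieldEquiv i).symm.toRingHom
  obtain ⟨F, hF, hmax⟩ := exists_maximal_isSemireal_subfield hi
  exact ⟨F, inferInstance, i.codRestrict F fun x ↦ hF ⟨x, rfl⟩, isMaximalSemireal_of_maximal hmax⟩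

theorem exists_mk_eq_of_isSumSq {L : Type*} [Field L] {Q : L[X]} (hQ : Q.natDegree ≠ 0)
    {z : AdjoinRoot Q} (hz : IsSumSq z) :
    ∃ h : L[X], AdjoinRoot.mk Q h = z ∧ IsSumSq h ∧
      h.natDegree ≤ (Q.natDegree - 1) + (Q.natDegree - 1) ∧
      IsSumSq (h.coeff ((Q.natDegree - 1) + (Q.natDegree - 1))) := by
  induction hz with
  | zero => exact ⟨0, by simp⟩
  | sq_add a _ ih =>
    obtain ⟨h, rfl, hsq, hdeg, hcoeff⟩ := ih
    obtain ⟨p, rfl⟩ := AdjoinRoot.mk_surjective a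
    have hmod : AdjoinRoot.mk Q (p % Q) = AdjoinRoot.mk Q p :=
      AdjoinRoot.mk_eq_mk.2 ⟨-(p / Q), by linear_combination EuclideanDomain.mod_add_div p Q⟩
    have hmod_deg : (p % Q).natDegree ≤ Q.natDegree - 1 :=
      Nat.le_sub_one_of_lt (Polynomial.natDegree_mod_lt p hQ)
    refine ⟨p % Q * (p % Q) + h, by rw [map_add, map_mul, hmod], .sq_add _ hsq,
      Polynomial.natDegree_add_le_of_degree_le
        (Polynomial.natDegree_mul_le_of_le hmod_deg hmod_deg) hdeg, ?_⟩
    rw [Polynomial.coeff_add, Polynomial.coeff_mul_add_eq_of_natDegree_le hmod_deg hmod_deg]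
    exact .sq_add _ hcoeff

namespace IsMaximalSemireal

variable {L : Type*} [Field L]

theorem exists_one_add_eq_mul (hL : IsMaximalSemireal L) {Q : L[X]} (hQ : Irreducible Q)
    (hdeg : 2 ≤ Q.natDegree) :
    ∃ h G : L[X], 1 + h = Q * G ∧ G.natDegree ≤ Q.natDegree - 2 ∧ IsSumSq h ∧
      IsSumSq (h.coeff ((Q.natDegree - 1) + (Q.natDegree - 1))) := by
  obtain ⟨h, hmk, hsq, hhdeg, hcoeff⟩ := exists_mk_eq_of_isSumSq (by lia) <|
    not_not.1 <| mt isSemireal_iff_not_isSumSq_neg_one.2 (hL.not_isSemireal_adjoinRoot Q hQ hdeg)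
  obtain ⟨G, hG⟩ : Q ∣ 1 + h := by
    rw [← AdjoinRoot.mk_eq_zero, map_add, map_one, hmk, add_neg_cancel]
  refine ⟨h, G, hG, ?_, hsq, hcoeff⟩
  by_cases hG0 : G = 0
  · simp [hG0]
  have hle : (1 + h).natDegree ≤ (Q.natDegree - 1) + (Q.natDegree - 1) :=
    Polynomial.natDegree_add_le_of_degree_le (by simp) hhdeg
  rw [hG, Polynomial.natDegree_mul hQ.ne_zero hG0] at hle
  lia

theorem isSumSq_or_isSumSq_neg (hL : IsMaximalSemireal L) (x : L) :
    IsSumSq x ∨ IsSumSq (-x) := by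
  by_cases hx : IsSquare x
  · exact .inl hx.isSumSq
  have hdeg : (Polynomial.X ^ 2 - Polynomial.C x).natDegree = 2 := Polynomial.natDegree_X_pow_sub_C
  have hirr : Irreducible (Polynomial.X ^ 2 - Polynomial.C x) := by
    refine (Polynomial.irreducible_iff_roots_eq_zero_of_degree_le_three hdeg.ge (by lia)).2 <|
      Multiset.eq_zero_of_forall_notMem fun y hy ↦ hx ⟨y, ?_⟩
    have := Polynomial.isRoot_of_mem_roots hy
    simp only [Polynomial.IsRoot, Polynomial.eval_sub, Polynomial.eval_pow, Polynomial.eval_X,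
      Polynomial.eval_C] at this
    linear_combination -this
  obtain ⟨h, G, hG, hGdeg, hsq, hcoeff⟩ := hL.exists_one_add_eq_mul hirr hdeg.ge
  rw [hdeg] at hGdeg hcoeff
  obtain ⟨g, rfl⟩ := Polynomial.natDegree_eq_zero.1 (Nat.le_zero.1 hGdeg)
  have hg : h.coeff 2 = g := by
    simpa [Polynomial.coeff_one] using congrArg (Polynomial.coeff · 2) hG
  have hg_sq : IsSumSq g := hg ▸ hcoeff
  have heval₀ : 1 + h.eval 0 = -x * g := by simpa using congrArg (Polynomial.eval 0) hG
  have heval₀_sq : IsSumSq (h.eval 0) := isSumSq_map (Polynomial.evalRingHom 0) hsq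
  have := hL.toIsSemireal
  have hg0 : g ≠ 0 := by
    rintro rfl
    exact IsSemireal.one_add_ne_zero heval₀_sq (by rw [heval₀, mul_zero])
  have hnegx : -x = (1 + h.eval 0) * g * (g⁻¹ * g⁻¹) := by
    rw [heval₀]
    field_simp
  rw [hnegx]
  exact .inr (((IsSumSq.one.add heval₀_sq).mul hg_sq).mul (.mul_self _))

theorem exists_linearOrder (hL : IsMaximalSemireal L) :
    ∃ _ : LinearOrder L, IsStrictOrderedRing L := by
  classical
  have := hL.toIsSemireal
  have := isFormallyReal_of_isSemireal L
  let nonneg : RingCone L :=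
    { Subsemiring.sumSq L with
      eq_zero_of_mem_of_neg_mem' := fun h₁ h₂ ↦
        IsFormallyReal.eq_zero_of_isSumSq_of_neg_isSumSq (Subsemiring.mem_sumSq.1 h₁)
          (Subsemiring.mem_sumSq.1 h₂) }
  have : HasMemOrNegMem nonneg :=
    ⟨fun x ↦ (hL.isSumSq_or_isSumSq_neg x).imp Subsemiring.mem_sumSq.2 Subsemiring.mem_sumSq.2⟩
  let := LinearOrder.mkOfAddGroupCone nonneg
  have : IsOrderedRing L := .mkOfCone nonneg
  exact ⟨_, IsOrderedRing.toIsStrictOrderedRing L⟩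

end IsMaximalSemireal

section SignChange

variable {L : Type*} [Field L] [LinearOrder L] [IsStrictOrderedRing L]

theorem exists_irreducible_dvd_mul_eval_neg {P : L[X]} {a b : L} (hP : P.eval a * P.eval b < 0) :
    ∃ Q, Irreducible Q ∧ Q ∣ P ∧ Q.eval a * Q.eval b < 0 := by
  induction P using WfDvdMonoid.induction_on_irreducible with
  | zero => simp at hP
  | unit P hunit =>
    obtain ⟨c, -, rfl⟩ := Polynomial.isUnit_iff.1 hunit
    simp only [Polynomial.eval_C] at hP
    exact absurd hP (mul_self_nonneg c).not_gt
  | mul P Q _ hQ ih =>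
    rw [Polynomial.eval_mul, Polynomial.eval_mul, mul_mul_mul_comm] at hP
    rcases lt_or_ge (Q.eval a * Q.eval b) 0 with hneg | hnonneg
    · exact ⟨Q, hQ, dvd_mul_right Q P, hneg⟩
    · obtain ⟨T, hT, hTP, hneg⟩ := ih (neg_of_mul_neg_right hP hnonneg)
      exact ⟨T, hT, hTP.mul_left Q, hneg⟩

theorem exists_root_mem_Ioo_of_natDegree_eq_one {P : L[X]} (hdeg : P.natDegree = 1) {a b : L}
    (hab : a < b) (hP : P.eval a * P.eval b < 0) : ∃ c ∈ Ioo a b, P.eval c = 0 := by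
  obtain ⟨u, hu, v, rfl⟩ := Polynomial.natDegree_eq_one.1 hdeg
  simp only [Polynomial.eval_add, Polynomial.eval_mul, Polynomial.eval_C, Polynomial.eval_X]
    at hP ⊢
  set t := -v / u with ht
  have hroot : u * t + v = 0 := by
    rw [ht]
    field_simp
    ring
  have hmul : u ^ 2 * ((a - t) * (b - t)) < 0 := by
    convert hP using 1
    linear_combination -(u * a + u * b - u * t + v) * hroot
  refine ⟨t, ?_, hroot⟩
  rcases mul_neg_iff.1 (neg_of_mul_neg_right hmul (sq_nonneg u)) with ⟨ha, hb⟩ | ⟨ha, hb⟩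
  · linarith
  · exact ⟨sub_neg.1 ha, sub_pos.1 hb⟩

/- An irreducible factor `Q` of degree at least two that changes sign would, by `1 + h = Q * G`,
force the polynomial `G` of lower degree to change sign without having a root. -/
theorem IsMaximalSemireal.polynomialIVT (hL : IsMaximalSemireal L) : PolynomialIVT L := by
  refine ⟨fun {P a b} hab hP ↦ ?_⟩
  induction hn : P.natDegree using Nat.strong_induction_on generalizing P with | _ n ih
  obtain ⟨Q, hQ, hQP, hQab⟩ := exists_irreducible_dvd_mul_eval_neg hP
  have hP0 : P ≠ 0 := by
    rintro rfl
    simp at hP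
  have hle := Polynomial.natDegree_le_of_dvd hQP hP0
  have hQpos := hQ.natDegree_pos
  rcases Nat.lt_or_ge Q.natDegree 2 with hdeg | hdeg
  · obtain ⟨c, hc, hc0⟩ := exists_root_mem_Ioo_of_natDegree_eq_one (by lia) hab hQab
    exact ⟨c, hc, Polynomial.eval_eq_zero_of_dvd_of_eval_eq_zero hQP hc0⟩
  obtain ⟨h, G, hG, hGdeg, hsq, -⟩ := hL.exists_one_add_eq_mul hQ hdeg
  have hpos (c : L) : 0 < Q.eval c * G.eval c := by
    rw [← Polynomial.eval_mul, ← hG, Polynomial.eval_add, Polynomial.eval_one]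
    exact add_pos_of_pos_of_nonneg one_pos (isSumSq_map (Polynomial.evalRingHom c) hsq).nonneg
  have hGab : G.eval a * G.eval b < 0 :=
    neg_of_mul_pos_right (by simpa only [mul_mul_mul_comm] using mul_pos (hpos a) (hpos b)) hQab.le
  obtain ⟨c, -, hc0⟩ := ih _ (by lia) hGab rfl
  exact absurd (hpos c) (by simp [hc0])

end SignChange

theorem exists_ringHom_polynomialIVT (K : Type u) [Field K] [IsSemireal K] :
    ∃ (L : Type u) (_ : Field L) (_ : LinearOrder L) (_ : IsStrictOrderedRing L) (_ : K →+* L),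
      PolynomialIVT L := by
  obtain ⟨L, _, i, hL⟩ := exists_isMaximalSemireal K
  obtain ⟨_, _⟩ := hL.exists_linearOrder
  exact ⟨L, _, _, inferInstance, i, hL.polynomialIVT⟩

end RealClosure

section EvaluationPairing

variable {R S : Type*} [CommRing R] [CommRing S] {n : ℕ}

/-- The functional `h ↦ ∑ j, ψ (h j) * v j` on `R ^ n` given by a ring homomorphism `ψ : R →+* S`
and a vector `v`. When `ψ` is the evaluation at a point `a`, its kernel consists of the `h` for
which `h a` is orthogonal to `v`. -/
def evalPairing (ψ : R →+* S) (v : Fin n → S) : (Fin n → R) →ₛₗ[ψ] S where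
  toFun h := (ψ ∘ h) ⬝ᵥ v
  map_add' g h := by
    rw [← add_dotProduct]
    congr 1
    ext j
    simp
  map_smul' c h := by
    rw [smul_eq_mul, ← smul_eq_mul, ← smul_dotProduct]
    congr 1
    ext j
    simp

theorem evalPairing_apply (ψ : R →+* S) (v : Fin n → S) (h : Fin n → R) :
    evalPairing ψ v h = ∑ j, ψ (h j) * v j := rfl

theorem evalPairing_comp (ψ : R →+* S) (w h : Fin n → R) :
    evalPairing ψ (ψ ∘ w) h = ψ (h ⬝ᵥ w) :=
  (ψ.map_dotProduct h w).symm

theorem eq_zero_of_sum_mul_self_eq_zero [IsFormallyReal S] {ι : Type*} {s : Finset ι} {x : ι → S}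
    (hx : ∑ i ∈ s, x i * x i = 0) {i : ι} (hi : i ∈ s) : x i = 0 := by
  classical
  rw [← Finset.add_sum_erase s _ hi] at hx
  have hsq := IsFormallyReal.eq_zero_of_add_right (.mul_self (x i)) (.sum_mul_self _ _) hx
  exact eq_zero_of_pow_eq_zero ((sq (x i)).trans hsq)

theorem isRealSubmodule_ker_evalPairing [IsFormallyReal S] (ψ : R →+* S) (v : Fin n → S) :
    (evalPairing ψ v).ker.IsRealSubmodule := by
  intro m F hF
  have hsum : ∑ i, evalPairing ψ v (F i) * evalPairing ψ v (F i) = 0 := calc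
    _ = ∑ i, ∑ j, v j * (ψ (F i j) * evalPairing ψ v (F i)) := by
      refine Finset.sum_congr rfl fun i _ ↦ ?_
      nth_rewrite 1 [evalPairing_apply]
      rw [Finset.sum_mul]
      exact Finset.sum_congr rfl fun j _ ↦ by ring
    _ = ∑ j, v j * evalPairing ψ v (∑ i, F i j • F i) := by
      rw [Finset.sum_comm]
      simp only [map_sum, LinearMap.map_smulₛₗ, smul_eq_mul, Finset.mul_sum]
    _ = 0 := Finset.sum_eq_zero fun j _ ↦ by rw [LinearMap.mem_ker.1 (hF j), mul_zero]
  exact fun i ↦ LinearMap.mem_ker.2 (eq_zero_of_sum_mul_self_eq_zero hsum (Finset.mem_univ i))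

end EvaluationPairing

section FractionHom

variable {R K : Type*} [CommRing R] [Field K]

/-- A ring homomorphism to a field all of whose elements are fractions with numerator and
denominator in the image. -/
def IsFractionHom (ψ : R →+* K) : Prop :=
  ∀ c : K, ∃ b e : R, ψ b ≠ 0 ∧ ψ b * c = ψ e

theorem isFractionHom_residueField (p : Ideal R) [p.IsPrime] :
    IsFractionHom (algebraMap R p.ResidueField) := by
  intro c
  obtain ⟨x, y, hy, rfl⟩ := IsFractionRing.div_surjective (A := R ⧸ p) c
  obtain ⟨e, rfl⟩ := Ideal.Quotient.mk_surjective x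
  obtain ⟨b, rfl⟩ := Ideal.Quotient.mk_surjective y
  have hb : algebraMap R p.ResidueField b ≠ 0 := by
    rw [Ne, Ideal.algebraMap_residueField_eq_zero, ← Ideal.Quotient.eq_zero_iff_mem]
    exact nonZeroDivisors.ne_zero hy
  exact ⟨b, e, hb, mul_div_cancel₀ _ hb⟩

namespace IsFractionHom

variable {ψ : R →+* K}

theorem exists_isSumSq_mul_eq (hψ : IsFractionHom ψ) {s : K} (hs : IsSumSq s) :
    ∃ b t : R, ψ b ≠ 0 ∧ IsSumSq t ∧ ψ (b * b) * s = ψ t := by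
  induction hs with
  | zero => exact ⟨1, 0, by simp⟩
  | sq_add a _ ih =>
    obtain ⟨b, t, hb, ht, hbt⟩ := ih
    obtain ⟨c, e, hc, hce⟩ := hψ a
    refine ⟨b * c, (b * e) * (b * e) + (c * c) * t, by simp [hb, hc],
      .sq_add _ ((IsSumSq.mul_self c).mul ht), ?_⟩
    simp only [map_add, map_mul] at hbt ⊢
    rw [← hbt, ← hce]
    ring

theorem isSemireal (hψ : IsFractionHom ψ)
    (h : ∀ a t : R, IsSumSq t → ψ (a * a + t) = 0 → ψ a = 0) : IsSemireal K where
  one_add_ne_zero {s} hs hs0 := by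
    obtain ⟨b, t, hb, ht, hbt⟩ := hψ.exists_isSumSq_mul_eq hs
    refine hb (h b t ht ?_)
    rw [map_add, ← hbt]
    linear_combination ψ (b * b) * hs0

theorem exists_smul_eq_comp {n : ℕ} (hψ : IsFractionHom ψ) (v : Fin n → K) :
    ∃ (b : R) (w : Fin n → R), ψ b ≠ 0 ∧ ψ b • v = ψ ∘ w := by
  choose b e hb hbe using fun j ↦ hψ (v j)
  refine ⟨∏ i, b i, fun j ↦ (∏ i ∈ Finset.univ.erase j, b i) * e j, ?_, funext fun j ↦ ?_⟩
  · rw [map_prod]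
    exact Finset.prod_ne_zero_iff.2 fun i _ ↦ hb i
  · rw [Pi.smul_apply, smul_eq_mul, Function.comp_apply, map_mul, ← hbe,
      ← Finset.prod_erase_mul _ b (Finset.mem_univ j), map_mul, mul_assoc]

theorem exists_smul_eq_comp_of_mem_span {n : ℕ} (hψ : IsFractionHom ψ)
    {N : Submodule R (Fin n → R)} {w : Fin n → K}
    (hw : w ∈ Submodule.span K ((ψ ∘ ·) '' (N : Set (Fin n → R)))) :
    ∃ s : R, ψ s ≠ 0 ∧ ∃ h ∈ N, ψ s • w = ψ ∘ h := by
  induction hw using Submodule.span_induction with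
  | mem w hw =>
    obtain ⟨h, hh, rfl⟩ := hw
    exact ⟨1, by simp, h, hh, by simp⟩
  | zero =>
    refine ⟨1, by simp, 0, N.zero_mem, ?_⟩
    ext j
    simp
  | add w w' _ _ ih ih' =>
    obtain ⟨s, hs, h, hh, hsw⟩ := ih
    obtain ⟨s', hs', h', hh', hsw'⟩ := ih'
    refine ⟨s * s', by simp [hs, hs'], s' • h + s • h',
      N.add_mem (N.smul_mem _ hh) (N.smul_mem _ hh'), funext fun j ↦ ?_⟩
    have hj : ψ s * w j = ψ (h j) := congrFun hsw j
    have hj' : ψ s' * w' j = ψ (h' j) := congrFun hsw' j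
    simp only [Pi.smul_apply, Pi.add_apply, smul_eq_mul, Function.comp_apply, map_add, map_mul]
    linear_combination ψ s' * hj + ψ s * hj'
  | smul c w _ ih =>
    obtain ⟨s, hs, h, hh, hsw⟩ := ih
    obtain ⟨b, e, hb, hbe⟩ := hψ c
    refine ⟨b * s, by simp [hb, hs], e • h, N.smul_mem _ hh, funext fun j ↦ ?_⟩
    have hj : ψ s * w j = ψ (h j) := congrFun hsw j
    simp only [Pi.smul_apply, smul_eq_mul, Function.comp_apply, map_mul]
    linear_combination ψ (h j) * hbe + ψ b * c * hj

end IsFractionHom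

theorem exists_evalPairing_separating {n : ℕ} (ψ : R →+* K) {N : Submodule R (Fin n → R)}
    {f : Fin n → R} (hf : ψ ∘ f ∉ Submodule.span K ((ψ ∘ ·) '' (N : Set (Fin n → R)))) :
    ∃ v : Fin n → K, N ≤ (evalPairing ψ v).ker ∧ f ∉ (evalPairing ψ v).ker := by
  obtain ⟨ℓ, hℓf, hℓ⟩ := Submodule.exists_le_ker_of_notMem hf
  have hpair (h : Fin n → R) :
      evalPairing ψ ((dotProductEquiv K (Fin n)).symm ℓ) h = ℓ (ψ ∘ h) := by
    change (ψ ∘ h) ⬝ᵥ (dotProductEquiv K (Fin n)).symm ℓ = ℓ (ψ ∘ h)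
    rw [dotProduct_comm, ← dotProductEquiv_apply_apply, LinearEquiv.apply_symm_apply]
  refine ⟨(dotProductEquiv K (Fin n)).symm ℓ, fun h hh ↦ ?_, ?_⟩
  · rw [LinearMap.mem_ker, hpair]
    exact hℓ (Submodule.subset_span ⟨h, hh, rfl⟩)
  · rwa [LinearMap.mem_ker, hpair]

end FractionHom

section RealSubmodules

universe u

theorem exists_fin_sum_mul_self_of_isSumSq {R : Type*} [NonAssocSemiring R] {t : R}
    (ht : IsSumSq t) : ∃ (m : ℕ) (r : Fin m → R), t = ∑ i, r i * r i := by
  induction ht with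
  | zero => exact ⟨0, Fin.elim0, by simp⟩
  | sq_add a _ ih =>
    obtain ⟨m, r, rfl⟩ := ih
    exact ⟨m + 1, Fin.cons a r, by simp [Fin.sum_univ_succ]⟩

variable {R : Type*} [CommRing R] {n : ℕ} {N : Submodule R (Fin n → R)} {f : Fin n → R}

theorem isRealSubmodule_comap_lsmul (hN : N.IsRealSubmodule) (r : R) :
    (N.comap (LinearMap.lsmul R (Fin n → R) r)).IsRealSubmodule := by
  refine fun m F hF ↦ hN m (fun i ↦ r • F i) fun j ↦ ?_
  have hsum : ∑ i, (r • F i) j • r • F i = r • r • ∑ i, F i j • F i := by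
    simp only [Finset.smul_sum, Pi.smul_apply, smul_eq_mul, smul_smul, mul_comm]
  rw [hsum]
  exact N.smul_mem r (hF j)

theorem mem_of_forall_smul_mem (hN : N.IsRealSubmodule) {h : Fin n → R}
    (hh : ∀ j, h j • h ∈ N) : h ∈ N :=
  hN 1 (fun _ ↦ h) (fun j ↦ by simpa using hh j) 0

theorem mem_colon_singleton_of_mul_self_add_mem (hN : N.IsRealSubmodule) {a t : R} (ht : IsSumSq t)
    (hat : a * a + t ∈ N.colon {f}) : a ∈ N.colon {f} := by
  obtain ⟨m, r, rfl⟩ := exists_fin_sum_mul_self_of_isSumSq ht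
  rw [Submodule.mem_colon_singleton] at hat ⊢
  refine hN (m + 1) (fun i ↦ (Fin.cons a r : Fin (m + 1) → R) i • f) (fun j ↦ ?_) 0
  have hsum : ∑ i, ((Fin.cons a r : Fin (m + 1) → R) i • f) j •
      (Fin.cons a r : Fin (m + 1) → R) i • f = f j • (a * a + ∑ i, r i * r i) • f := by
    have hterm (x : R) : (x • f) j • x • f = f j • (x * x) • f := by
      rw [Pi.smul_apply, smul_smul, smul_smul, smul_eq_mul]
      congr 1
      ring
    simp only [hterm, Fin.sum_univ_succ, Fin.cons_zero, Fin.cons_succ, add_smul, smul_add,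
      Finset.sum_smul, Finset.smul_sum]
  rw [hsum]
  exact N.smul_mem (f j) hat

theorem isPrime_colon_singleton_of_maximal
    (hN : Maximal (fun M : Submodule R (Fin n → R) ↦ M.IsRealSubmodule ∧ f ∉ M) N) :
    (N.colon {f}).IsPrime where
  ne_top' := by
    rw [Ne, Ideal.eq_top_iff_one, Submodule.mem_colon_singleton, one_smul]
    exact hN.prop.2
  mem_or_mem' {r s} hrs := by
    rw [or_iff_not_imp_left]
    intro hr
    rw [Submodule.mem_colon_singleton] at hrs hr ⊢
    refine hN.le_of_ge ⟨isRealSubmodule_comap_lsmul hN.prop.1 r, hr⟩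
      (fun h hh ↦ N.smul_mem r hh) ?_
    rwa [Submodule.mem_comap, LinearMap.lsmul_apply, smul_smul]

theorem exists_maximal_isRealSubmodule [IsNoetherianRing R] (hN : N.IsRealSubmodule)
    (hf : f ∉ N) : ∃ M, N ≤ M ∧
      Maximal (fun M : Submodule R (Fin n → R) ↦ M.IsRealSubmodule ∧ f ∉ M) M :=
  exists_maximal_ge_of_wellFoundedGT _ N ⟨hN, hf⟩

/- If a multiple `s • f` with `s` outside `N.colon {f}` agreed with an element of `N` modulo that
ideal, then `N` being real would put `s • f` itself into `N`. -/
theorem comp_notMem_span_residueField (hN : N.IsRealSubmodule) [(N.colon {f}).IsPrime] :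
    let ψ := algebraMap R (N.colon {f}).ResidueField
    ψ ∘ f ∉ Submodule.span (N.colon {f}).ResidueField ((ψ ∘ ·) '' (N : Set (Fin n → R))) := by
  intro ψ hmem
  obtain ⟨s, hs, h, hh, hsf⟩ := (isFractionHom_residueField _).exists_smul_eq_comp_of_mem_span hmem
  have hcoord (j : Fin n) : (s • f - h) j ∈ N.colon {f} := by
    have hj : ψ s * ψ (f j) = ψ (h j) := congrFun hsf j
    rw [← Ideal.algebraMap_residueField_eq_zero, Pi.sub_apply, Pi.smul_apply, smul_eq_mul, map_sub,
      map_mul, sub_eq_zero]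
    exact hj
  have hsub : s • f - h ∈ N := mem_of_forall_smul_mem hN fun j ↦ by
    rw [smul_sub, smul_comm]
    exact N.sub_mem (N.smul_mem s (Submodule.mem_colon_singleton.1 (hcoord j))) (N.smul_mem _ hh)
  refine hs (Ideal.algebraMap_residueField_eq_zero.2 (Submodule.mem_colon_singleton.2 ?_))
  simpa using N.add_mem hsub hh

theorem exists_semireal_evalPairing_separating {R : Type u} [CommRing R] [IsNoetherianRing R]
    {N : Submodule R (Fin n → R)} (hN : N.IsRealSubmodule) {f : Fin n → R} (hf : f ∉ N) :
    ∃ (K : Type u) (_ : Field K) (_ : IsSemireal K) (ψ : R →+* K) (w : Fin n → R),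
      N ≤ (evalPairing ψ (ψ ∘ w)).ker ∧ f ∉ (evalPairing ψ (ψ ∘ w)).ker := by
  obtain ⟨M, hNM, hM⟩ := exists_maximal_isRealSubmodule hN hf
  have := isPrime_colon_singleton_of_maximal hM
  set ψ := algebraMap R (M.colon {f}).ResidueField
  have hψ : IsFractionHom ψ := isFractionHom_residueField _
  have hsemireal : IsSemireal (M.colon {f}).ResidueField := hψ.isSemireal fun a t ht hat ↦ by
    rw [Ideal.algebraMap_residueField_eq_zero] at hat ⊢
    exact mem_colon_singleton_of_mul_self_add_mem hM.prop.1 ht hat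
  obtain ⟨v, hMv, hfv⟩ := exists_evalPairing_separating ψ (comp_notMem_span_residueField hM.prop.1)
  obtain ⟨b, w, hb, hbw⟩ := hψ.exists_smul_eq_comp v
  have hpair (h : Fin n → R) : evalPairing ψ (ψ ∘ w) h = ψ b * evalPairing ψ v h := by
    rw [← hbw]
    exact dotProduct_smul (ψ b) (ψ ∘ h) v
  refine ⟨_, _, hsemireal, ψ, w, fun h hh ↦ ?_, ?_⟩
  · rw [LinearMap.mem_ker, hpair, LinearMap.mem_ker.1 (hMv (hNM hh)), mul_zero]
  · rw [LinearMap.mem_ker, hpair]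
    exact mul_ne_zero hb hfv

end RealSubmodules

theorem exists_eval_separating {k : Type*} [Field k] [LinearOrder k] [IsStrictOrderedRing k]
    [PolynomialIVT k] {d n : ℕ}
    {N : Submodule (MvPolynomial (Fin d) k) (Fin n → MvPolynomial (Fin d) k)}
    (hN : N.IsRealSubmodule) {f : Fin n → MvPolynomial (Fin d) k} (hf : f ∉ N) :
    ∃ (a : Fin d → k) (v : Fin n → k),
      N ≤ (evalPairing (eval a) v).ker ∧ f ∉ (evalPairing (eval a) v).ker := by
  classical
  obtain ⟨K, _, _, ψ, w, hNw, hfw⟩ := exists_semireal_evalPairing_separating hN hf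
  obtain ⟨L, _, _, _, i, _⟩ := exists_ringHom_polynomialIVT K
  obtain ⟨T, rfl⟩ : N.FG := IsNoetherian.noetherian N
  obtain ⟨a, ha⟩ := exists_sign_eval_eq (i.comp ψ) ((insert f T).image (· ⬝ᵥ w))
  have hker {h : Fin n → MvPolynomial (Fin d) k} (hh : h ∈ insert f T) :
      h ∈ (evalPairing ψ (ψ ∘ w)).ker ↔ h ∈ (evalPairing (eval a) (eval a ∘ w)).ker := by
    rw [LinearMap.mem_ker, LinearMap.mem_ker, evalPairing_comp, evalPairing_comp,
      ← map_eq_zero i, ← RingHom.comp_apply, ← sign_eq_zero_iff,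
      ha _ (Finset.mem_image_of_mem _ hh), sign_eq_zero_iff]
  refine ⟨a, eval a ∘ w, Submodule.span_le.2 fun h hh ↦ ?_, mt (hker (T.mem_insert_self f)).2 hfw⟩
  exact (hker (Finset.mem_insert_of_mem hh)).1 (hNw (Submodule.subset_span hh))

end RealNullstellensatz

theorem vector_real_nullstellensatz_general {k : Type*} [Field k] [LinearOrder k]
    [IsStrictOrderedRing k] [RealNullstellensatz.PolynomialIVT k] {d n : ℕ} {ι : Type*}
    (g : ι → (Fin n → MvPolynomial (Fin d) k)) (f : Fin n → MvPolynomial (Fin d) k) :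
    (∀ (a : Fin d → k) (v : Fin n → k),
        (∀ i, ∑ j, eval a (g i j) * v j = 0) → ∑ j, eval a (f j) * v j = 0) ↔
      (∀ N : Submodule (MvPolynomial (Fin d) k) (Fin n → MvPolynomial (Fin d) k),
        N.IsRealSubmodule → (∀ i, g i ∈ N) → f ∈ N) := by
  constructor
  · intro hvanish N hN hg
    by_contra hf
    obtain ⟨a, v, hNv, hfv⟩ := RealNullstellensatz.exists_eval_separating hN hf
    exact hfv (hvanish a v fun i ↦ hNv (hg i))
  · intro hmem a v hg
    exact hmem _ (RealNullstellensatz.isRealSubmodule_ker_evalPairing (eval a) v) hg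

/-- **Corollary 2: vector version of the Real Nullstellensatz.** -/
theorem vector_real_nullstellensatz (d n m : ℕ)
    (g : Fin m → (Fin n → MvPolynomial (Fin d) ℝ)) (f : Fin n → MvPolynomial (Fin d) ℝ) :
    (∀ (a : Fin d → ℝ) (v : Fin n → ℝ),
        (∀ i, ∑ j, eval a (g i j) * v j = 0) → ∑ j, eval a (f j) * v j = 0) ↔
      (∀ N : Submodule (MvPolynomial (Fin d) ℝ) (Fin n → MvPolynomial (Fin d) ℝ),
        N.IsRealSubmodule → (∀ i, g i ∈ N) → f ∈ N) :=
  vector_real_nullstellensatz_general g f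
end

section
/- (Corollary 3, vector version of the Quaternionic Nullstellensatz) Let A = ℍ_c[x₁, …, x_d]. For any g₁, …, g_m, f ∈ A^n the following are equivalent: (1) for every a ∈ ℝ^d and every v ∈ ℍ^n such that Σ_{j=1}^n g_{i,j}(a) v_j = 0 for all i = 1, …, m, one has Σ_{j=1}^n f_j(a) v_j = 0; (2) f belongs to every real submodule of A^n that contains g₁, …, g_m. -/
/-!
Let `f ∉ N` with `N` a real submodule. An associated prime of `A^n / N`, where `A^n` is viewed
over the commutative ring `P` of polynomials, is the set `p` of all `s` with `s • r • f ∈ N` for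
some `r`. Realness of `N` makes the residue field `κ` of `p` formally real, so `κ` can be ordered.
Over the division ring of quaternions over `κ`, some linear form kills `N` but not `r • f`: its
coefficient vector is a direction `v` at the generic point of `p` along which `N` vanishes and `f`
does not. After clearing denominators, `v` has coefficients in the quaternions over `P`, and it
remains to find a closed point of `p` at which `∑ j, f j * v j` does not vanish, that is, the real
Nullstellensatz for the real prime `p`.

That Nullstellensatz is proved by extending `κ` to a maximal formally real field and transferring
equations from there down to the base field. The transfer eliminates one variable at a time:
a polynomial is strictly monotone wherever its derivative has constant sign, so its sign diagram is
determined by that of its derivative together with its signs at the roots of the derivative, and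
these are the signs of a remainder of smaller degree (the method of Cohen and Hörmander).
-/

open MvPolynomial

/-- Evaluation of a quaternionic polynomial with central (commuting) variables at a real
point, performed componentwise. -/
noncomputable def evalQ {d : ℕ} (a : Fin d → ℝ) (p : Quaternion (MvPolynomial (Fin d) ℝ)) :
    Quaternion ℝ :=
  ⟨eval a p.re, eval a p.imI, eval a p.imJ, eval a p.imK⟩

/-- A submodule `N` of `A^n`, for a ring `A` with involution `star`, is *real* if whenever
`f 0, …, f (m-1) ∈ A^n` satisfy `∑ i, star (f i j) • f i ∈ N` for every coordinate `j`,
each `f i` lies in `N`. -/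
def Submodule.IsRealSubmoduleStar {A : Type*} [Ring A] [StarRing A] {n : ℕ}
    (N : Submodule A (Fin n → A)) : Prop :=
  ∀ (m : ℕ) (f : Fin m → (Fin n → A)),
    (∀ j, (∑ i, star (f i j) • f i) ∈ N) → ∀ i, f i ∈ N

section Gap

variable {α : Type*} [LinearOrder α]

/-- The points in the same position as `a` relative to the finite set `T`: the point `a` itself if
`a ∈ T`, and otherwise the component of `a` in the complement of `T`. -/
def gap (T : Finset α) (a : α) : Set α :=
  {c | ∀ t ∈ T, cmp t c = cmp t a}

/-- The closure of `gap T a` when `a ∉ T`. -/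
def closedGap (T : Finset α) (a : α) : Set α :=
  {c | ∀ t ∈ T, (t < a → t ≤ c) ∧ (a < t → c ≤ t)}

theorem gap_subset_closedGap (T : Finset α) (a : α) : gap T a ⊆ closedGap T a := fun _ hc t ht ↦
  ⟨fun hta ↦ ((lt_iff_lt_of_cmp_eq_cmp (hc t ht)).2 hta).le,
    fun hat ↦ ((lt_iff_lt_of_cmp_eq_cmp (cmp_eq_cmp_symm.mp (hc t ht))).2 hat).le⟩

theorem mem_gap_self (T : Finset α) (a : α) : a ∈ gap T a := fun _ _ ↦ rfl

theorem eq_of_mem_gap {T : Finset α} {a c : α} (ha : a ∈ T) (hc : c ∈ gap T a) : c = a :=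
  ((cmp_eq_eq_iff _ _).mp ((hc a ha).trans (cmp_self_eq_eq a))).symm

theorem Ioo_subset_gap {T : Finset α} {a x y : α} (ha : a ∉ T) (hx : x ∈ closedGap T a)
    (hy : y ∈ closedGap T a) : Set.Ioo x y ⊆ gap T a := by
  intro c hc t ht
  rcases lt_or_gt_of_ne (ne_of_mem_of_not_mem ht ha) with hta | hat
  · rw [hta.cmp_eq_lt, (((hx t ht).1 hta).trans_lt hc.1).cmp_eq_lt]
  · rw [hat.cmp_eq_gt, (hc.2.trans_le ((hy t ht).2 hat)).cmp_eq_gt]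

end Gap

section SignDiagram

open Polynomial

theorem exists_eq_pow_mul_pow_mul {F : Type*} [Field F] {p : F[X]} (hp : p ≠ 0) {a b : F}
    (hab : a ≠ b) (ha : p.IsRoot a) (hb : p.IsRoot b) :
    ∃ (m n : ℕ) (g : F[X]), ¬g.IsRoot a ∧ ¬g.IsRoot b ∧
      p = (Polynomial.X - Polynomial.C a) ^ (m + 1) *
        (Polynomial.X - Polynomial.C b) ^ (n + 1) * g := by
  obtain ⟨q, hq, hqa⟩ := p.exists_eq_pow_rootMultiplicity_mul_and_not_dvd hp a
  have hq0 : q ≠ 0 := by rintro rfl; exact hqa (dvd_zero _)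
  obtain ⟨g, hg, hgb⟩ := q.exists_eq_pow_rootMultiplicity_mul_and_not_dvd hq0 b
  have hqb : q.IsRoot b := by
    rw [hq, IsRoot, Polynomial.eval_mul, mul_eq_zero] at hb
    exact hb.resolve_left (by simp [sub_ne_zero.mpr hab.symm])
  obtain ⟨m, hm⟩ := Nat.exists_eq_succ_of_ne_zero ((rootMultiplicity_pos hp).mpr ha).ne'
  obtain ⟨n, hn⟩ := Nat.exists_eq_succ_of_ne_zero ((rootMultiplicity_pos hq0).mpr hqb).ne'
  rw [dvd_iff_isRoot] at hqa hgb
  rw [hm] at hq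
  rw [hn] at hg
  have hga : ¬g.IsRoot a := fun hga ↦
    hqa (by rw [hg, IsRoot, Polynomial.eval_mul, hga.eq_zero, mul_zero])
  exact ⟨m, n, g, hga, hgb, by rw [mul_assoc, ← hg, ← hq]⟩

section OrderedField

variable {F : Type*} [Field F] [LinearOrder F] [IsStrictOrderedRing F]

theorem tendsto_abs_eval_atTop {p : F[X]} (hp : 0 < p.degree) :
    Filter.Tendsto (fun x ↦ |p.eval x|) .atTop .atTop := by
  refine degree_pos_induction_on (P := fun p ↦ Filter.Tendsto (fun x ↦ |p.eval x|) .atTop .atTop)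
    p hp (fun {a} ha ↦ ?_) (fun _ ih ↦ ?_) (fun {p a} _ ih ↦ ?_)
  · simpa [abs_mul] using Filter.tendsto_abs_atTop_atTop.const_mul_atTop (abs_pos.mpr ha)
  · simpa [abs_mul] using ih.atTop_mul_atTop₀ Filter.tendsto_abs_atTop_atTop
  · refine Filter.tendsto_atTop_mono (fun x ↦ ?_) (Filter.tendsto_atTop_add_const_right _ (-|a|) ih)
    simpa [sub_eq_add_neg] using abs_sub_abs_le_abs_sub (p.eval x) (-a)

theorem exists_eval_pos_of_strictMonoOn_Ici {p : F[X]} {a : F}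
    (hp : StrictMonoOn p.eval (Set.Ici a)) : ∃ b, a ≤ b ∧ 0 < p.eval b := by
  have hdeg : 0 < p.degree := by
    by_contra! h
    rw [eq_C_of_degree_le_zero h] at hp
    simpa using hp Set.self_mem_Ici (lt_add_one a).le (lt_add_one a)
  obtain ⟨b, hpb, hab⟩ := (((tendsto_abs_eval_atTop hdeg).eventually_gt_atTop |p.eval a|).and
    (Filter.eventually_ge_atTop a)).exists
  refine ⟨b, hab, lt_of_not_ge fun hneg ↦ hpb.not_ge ?_⟩
  have hle : p.eval a ≤ p.eval b := hp.monotoneOn Set.self_mem_Ici hab hab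
  rw [abs_of_nonpos hneg, abs_of_nonpos (hle.trans hneg)]
  exact neg_le_neg hle

theorem exists_eval_neg_of_strictMonoOn_Iic {p : F[X]} {a : F}
    (hp : StrictMonoOn p.eval (Set.Iic a)) : ∃ b, b ≤ a ∧ p.eval b < 0 := by
  obtain ⟨b, hb, hpb⟩ := exists_eval_pos_of_strictMonoOn_Ici
    (p := -p.comp (-Polynomial.X)) (a := -a) fun x hx y hy hxy ↦ by
      simpa using hp (neg_le.mp hy : -y ≤ a) (neg_le.mp hx : -x ≤ a) (neg_lt_neg hxy)
  exact ⟨-b, neg_le.mp hb, by simpa using hpb⟩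

theorem exists_eval_pos_mem_closedGap {p : F[X]} {T : Finset F} {a : F}
    (hmono : StrictMonoOn p.eval (closedGap T a))
    (h : ∀ t ∈ T, t ∈ closedGap T a → a < t → 0 < p.eval t) :
    ∃ b ∈ closedGap T a, a ≤ b ∧ 0 < p.eval b := by
  rcases (T.filter (a < ·)).eq_empty_or_nonempty with hempty | hne
  · have hsub : Set.Ici a ⊆ closedGap T a := fun c hc t ht ↦
      ⟨fun hta ↦ hta.le.trans hc, fun hat ↦ absurd hat (Finset.filter_eq_empty_iff.mp hempty ht)⟩
    obtain ⟨b, hab, hb⟩ := exists_eval_pos_of_strictMonoOn_Ici (hmono.mono hsub)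
    exact ⟨b, hsub hab, hab, hb⟩
  · obtain ⟨hT, ha⟩ := Finset.mem_filter.mp (Finset.min'_mem _ hne)
    have hmem : Finset.min' _ hne ∈ closedGap T a := fun t ht ↦ ⟨fun hta ↦ (hta.trans ha).le,
      fun hat ↦ Finset.min'_le _ t (Finset.mem_filter.mpr ⟨ht, hat⟩)⟩
    exact ⟨_, hmem, ha.le, h _ hT hmem ha⟩

theorem exists_eval_neg_mem_closedGap {p : F[X]} {T : Finset F} {a : F}
    (hmono : StrictMonoOn p.eval (closedGap T a))
    (h : ∀ t ∈ T, t ∈ closedGap T a → t < a → p.eval t < 0) :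
    ∃ b ∈ closedGap T a, b ≤ a ∧ p.eval b < 0 := by
  rcases (T.filter (· < a)).eq_empty_or_nonempty with hempty | hne
  · have hsub : Set.Iic a ⊆ closedGap T a := fun c hc t ht ↦
      ⟨fun hta ↦ absurd hta (Finset.filter_eq_empty_iff.mp hempty ht), fun hat ↦ hc.trans hat.le⟩
    obtain ⟨b, hab, hb⟩ := exists_eval_neg_of_strictMonoOn_Iic (hmono.mono hsub)
    exact ⟨b, hsub hab, hab, hb⟩
  · obtain ⟨hT, ha⟩ := Finset.mem_filter.mp (Finset.max'_mem _ hne)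
    have hmem : Finset.max' _ hne ∈ closedGap T a := fun t ht ↦
      ⟨fun hta ↦ Finset.le_max' _ t (Finset.mem_filter.mpr ⟨ht, hta⟩), fun hat ↦ (ha.trans hat).le⟩
    exact ⟨_, hmem, ha.le, h _ hT hmem ha⟩

theorem infinite_gap {T : Finset F} {a : F} (ha : a ∉ T) :
    (gap T a).Infinite := by
  let _ : TopologicalSpace F := Preorder.topology F
  have : OrderTopology F := ⟨rfl⟩
  refine infinite_of_mem_nhds a ((Filter.eventually_all_finset T).mpr fun t ht ↦ ?_)
  rcases lt_or_gt_of_ne (ne_of_mem_of_not_mem ht ha) with hta | hat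
  · filter_upwards [lt_mem_nhds hta] with c hc
    rw [hta.cmp_eq_lt, hc.cmp_eq_lt]
  · filter_upwards [gt_mem_nhds hat] with c hc
    rw [hat.cmp_eq_gt, hc.cmp_eq_gt]

end OrderedField

/-- The intermediate value property for polynomials, which characterises the real closed fields
among the ordered ones and stands in for real closedness here. -/
class PolynomialIVP (F : Type*) [Field F] [LinearOrder F] : Prop where
  exists_isRoot (p : F[X]) {a b : F} (hab : a ≤ b) (h : p.eval a * p.eval b < 0) :
    ∃ c ∈ Set.Ioo a b, p.IsRoot c

instance : PolynomialIVP ℝ where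
  exists_isRoot p a b hab h := by
    have hcont := p.continuous.continuousOn (s := Set.Icc a b)
    rcases mul_neg_iff.mp h with ⟨ha, hb⟩ | ⟨ha, hb⟩
    · exact intermediate_value_Ioo' hab hcont ⟨hb, ha⟩
    · exact intermediate_value_Ioo hab hcont ⟨ha, hb⟩

section PolynomialIVP

variable {F : Type*} [Field F] [LinearOrder F] [IsStrictOrderedRing F] [PolynomialIVP F]

theorem mul_eval_pos_of_forall_not_isRoot {p : F[X]} {a b : F} (hab : a ≤ b)
    (h : ∀ c ∈ Set.Icc a b, ¬p.IsRoot c) : 0 < p.eval a * p.eval b := by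
  by_contra! hle
  have hne : p.eval a * p.eval b ≠ 0 := mul_ne_zero (h a ⟨le_rfl, hab⟩) (h b ⟨hab, le_rfl⟩)
  obtain ⟨c, hc, hroot⟩ := PolynomialIVP.exists_isRoot p hab (hle.lt_of_ne hne)
  exact h c (Set.Ioo_subset_Icc_self hc) hroot

theorem exists_isRoot_derivative_of_consecutive {p : F[X]} {a b : F} (hp : p ≠ 0) (hab : a < b)
    (ha : p.IsRoot a) (hb : p.IsRoot b) (h : ∀ c ∈ Set.Ioo a b, ¬p.IsRoot c) :
    ∃ c ∈ Set.Ioo a b, (derivative p).IsRoot c := by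
  obtain ⟨m, n, g, hga, hgb, hfac⟩ := exists_eq_pow_mul_pow_mul hp hab.ne ha hb
  have hg : 0 < g.eval a * g.eval b := by
    refine mul_eval_pos_of_forall_not_isRoot hab.le fun c hc hgc ↦ ?_
    rcases hc.1.eq_or_lt with rfl | hac
    · exact hga hgc
    rcases hc.2.eq_or_lt with rfl | hcb
    · exact hgb hgc
    · exact h c ⟨hac, hcb⟩ (by rw [hfac, IsRoot, Polynomial.eval_mul, hgc.eq_zero, mul_zero])
  set q : F[X] := ((m + 1 : ℕ) : F[X]) * (Polynomial.X - Polynomial.C b) * g +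
    ((n + 1 : ℕ) : F[X]) * (Polynomial.X - Polynomial.C a) * g +
    (Polynomial.X - Polynomial.C a) * (Polynomial.X - Polynomial.C b) * derivative g with hq
  have hderiv : derivative p =
      (Polynomial.X - Polynomial.C a) ^ m * (Polynomial.X - Polynomial.C b) ^ n * q := by
    rw [hfac, hq]
    simp only [derivative_mul, derivative_X_sub_C_pow, add_tsub_cancel_right, map_natCast]
    ring
  have hqab : q.eval a * q.eval b < 0 := by
    have hprod : q.eval a * q.eval b =
        -((m + 1) * (n + 1) * (b - a) ^ 2 * (g.eval a * g.eval b)) := by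
      simp only [hq, Polynomial.eval_add, Polynomial.eval_sub, Polynomial.eval_mul,
        eval_natCast, Polynomial.eval_X, Polynomial.eval_C]
      push_cast
      ring
    rw [hprod, neg_lt_zero]
    have := sub_pos.mpr hab
    positivity
  obtain ⟨c, hc, hqc⟩ := PolynomialIVP.exists_isRoot q hab.le hqab
  exact ⟨c, hc, by rw [hderiv, IsRoot, Polynomial.eval_mul, hqc.eq_zero, mul_zero]⟩

theorem exists_isRoot_derivative {p : F[X]} {a b : F} (hab : a < b)
    (ha : p.IsRoot a) (hb : p.IsRoot b) : ∃ c ∈ Set.Ioo a b, (derivative p).IsRoot c := by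
  rcases eq_or_ne p 0 with rfl | hp
  · obtain ⟨c, hc⟩ := exists_between hab
    exact ⟨c, hc, by simp⟩
  let s := p.roots.toFinset.filter (· ∈ Set.Ioc a b)
  have hs : ∀ c, c ∈ s ↔ p.IsRoot c ∧ c ∈ Set.Ioc a b := by simp [s, hp]
  have hne : s.Nonempty := ⟨b, (hs b).2 ⟨hb, hab, le_rfl⟩⟩
  obtain ⟨hroot, hac, hcb⟩ := (hs _).1 (s.min'_mem hne)
  obtain ⟨c, hc, hderiv⟩ := exists_isRoot_derivative_of_consecutive hp hac ha hroot fun c hc h ↦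
    hc.2.not_ge (s.min'_le c ((hs c).2 ⟨h, hc.1, hc.2.le.trans hcb⟩))
  exact ⟨c, ⟨hc.1, hc.2.trans_le hcb⟩, hderiv⟩

theorem exists_eval_sub_eval_eq_derivative (p : F[X]) {a b : F} (hab : a < b) :
    ∃ c ∈ Set.Ioo a b, p.eval b - p.eval a = (derivative p).eval c * (b - a) := by
  let q : F[X] := Polynomial.C (b - a) * (p - Polynomial.C (p.eval a)) -
    Polynomial.C (p.eval b - p.eval a) * (Polynomial.X - Polynomial.C a)
  obtain ⟨c, hc, hroot⟩ := exists_isRoot_derivative (p := q) hab (by simp [q]) (by simp [q]; ring)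
  refine ⟨c, hc, ?_⟩
  have hderiv : (derivative q).eval c =
      (b - a) * (derivative p).eval c - (p.eval b - p.eval a) := by simp [q]
  linear_combination -(hderiv.symm.trans hroot)

theorem strictMonoOn_eval_of_derivative_pos {p : F[X]} {D : Set F}
    (h : ∀ a ∈ D, ∀ b ∈ D, ∀ c ∈ Set.Ioo a b, 0 < (derivative p).eval c) :
    StrictMonoOn p.eval D := by
  intro a ha b hb hab
  obtain ⟨c, hc, hslope⟩ := exists_eval_sub_eval_eq_derivative p hab
  exact sub_pos.mp (hslope ▸ mul_pos (h a ha b hb c hc) (sub_pos.mpr hab))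

theorem strictMonoOn_eval_closedGap {p : F[X]} {T : Finset F} {a : F} (ha : a ∉ T)
    (h : ∀ c ∈ gap T a, 0 < (derivative p).eval c) :
    StrictMonoOn p.eval (closedGap T a) :=
  strictMonoOn_eval_of_derivative_pos fun _ hx _ hy c hc ↦
    h c (Ioo_subset_gap ha hx hy hc)

theorem exists_isRoot_mem_gap {p : F[X]} {T : Finset F} {a : F} (ha : a ∉ T)
    (hmono : StrictMonoOn p.eval (closedGap T a))
    (hneg : ∀ t ∈ T, t ∈ closedGap T a → t < a → p.eval t < 0)
    (hpos : ∀ t ∈ T, t ∈ closedGap T a → a < t → 0 < p.eval t) : ∃ c ∈ gap T a, p.IsRoot c := by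
  obtain ⟨x, hx, hxa, hpx⟩ := exists_eval_neg_mem_closedGap hmono hneg
  obtain ⟨y, hy, hay, hpy⟩ := exists_eval_pos_mem_closedGap hmono hpos
  obtain ⟨c, hc, hroot⟩ := PolynomialIVP.exists_isRoot p (hxa.trans hay)
    (mul_neg_of_neg_of_pos hpx hpy)
  exact ⟨c, Ioo_subset_gap ha hx hy hc, hroot⟩

end PolynomialIVP

section Aligned

variable {F F' : Type*} [LinearOrder F] [LinearOrder F'] {Γ : Order.PartialIso F F'}

theorem mem_val_comm {x : F} {y : F'} : (y, x) ∈ Γ.comm.val ↔ (x, y) ∈ Γ.val := by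
  simp [Order.PartialIso.comm, Subtype.map]

/-- The domain of a partial order isomorphism; its range is `sources Γ.comm`. -/
def sources (Γ : Order.PartialIso F F') : Finset F :=
  Γ.val.image Prod.fst

theorem mem_sources {x : F} : x ∈ sources Γ ↔ ∃ y, (x, y) ∈ Γ.val := by
  simp [sources]

/-- The points `a` and `b` occupy corresponding positions relative to the pairs in `Γ`. -/
def Aligned (Γ : Order.PartialIso F F') (a : F) (b : F') : Prop :=
  ∀ z ∈ Γ.val, cmp z.1 a = cmp z.2 b

variable {a c : F} {b : F'}

theorem aligned_comm : Aligned Γ.comm b a ↔ Aligned Γ a b :=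
  ⟨fun h z hz ↦ (h z.swap (mem_val_comm.mpr hz)).symm, fun h _ hz ↦ (h _ (mem_val_comm.mp hz)).symm⟩

theorem exists_aligned [DenselyOrdered F'] [NoMinOrder F'] [NoMaxOrder F'] [Nonempty F']
    (Γ : Order.PartialIso F F') (a : F) : ∃ b, Aligned Γ a b :=
  Γ.exists_across a

theorem Aligned.of_mem {z : F × F'} (hz : z ∈ Γ.val) : Aligned Γ z.1 z.2 :=
  fun w hw ↦ Γ.prop w hw z hz

theorem Aligned.mem_gap_iff (hab : Aligned Γ a b) : c ∈ gap (sources Γ) a ↔ Aligned Γ c b := by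
  simp only [gap, sources, Finset.mem_image, Set.mem_ofPred_eq, forall_exists_index, and_imp,
    forall_apply_eq_imp_iff₂]
  exact forall₂_congr fun z hz ↦ by rw [hab z hz]

theorem Aligned.mem_val (hab : Aligned Γ a b) (ha : a ∈ sources Γ) : (a, b) ∈ Γ.val := by
  obtain ⟨y, hy⟩ := mem_sources.mp ha
  obtain rfl : y = b := (cmp_eq_eq_iff _ _).mp ((hab _ hy).symm.trans (cmp_self_eq_eq _))
  exact hy

theorem Aligned.notMem_sources_comm (hab : Aligned Γ a b) (ha : a ∉ sources Γ) :
    b ∉ sources Γ.comm :=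
  fun hb ↦ ha (mem_sources.mpr ⟨b, mem_val_comm.mp ((aligned_comm.mpr hab).mem_val hb)⟩)

theorem Aligned.mem_closedGap (hab : Aligned Γ a b) {z : F × F'} (hz : z ∈ Γ.val)
    (h : z.1 ∈ closedGap (sources Γ) a) : z.2 ∈ closedGap (sources Γ.comm) b := by
  intro s hs
  obtain ⟨t, ht⟩ := mem_sources.mp hs
  rw [mem_val_comm] at ht
  have hta := hab _ ht
  have htz := Γ.prop _ ht _ hz
  have hgap := h t (mem_sources.mpr ⟨s, ht⟩)
  rw [← lt_iff_lt_of_cmp_eq_cmp hta, ← lt_iff_lt_of_cmp_eq_cmp (cmp_eq_cmp_symm.mp hta),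
    ← le_iff_le_of_cmp_eq_cmp htz, ← le_iff_le_of_cmp_eq_cmp (cmp_eq_cmp_symm.mp htz)]
  exact hgap

end Aligned

section SignMatching

open SignType (sign)

theorem eq_of_mem_uIcc_of_cmp_eq {α : Type*} [LinearOrder α] {a b c : α} (hc : c ∈ Set.uIcc a b)
    (h : cmp c a = cmp c b) : a = b := by
  have hlt := lt_iff_lt_of_cmp_eq_cmp h
  have hgt := lt_iff_lt_of_cmp_eq_cmp (cmp_eq_cmp_symm.mp h)
  rcases Set.mem_uIcc.mp hc with ⟨h₁, h₂⟩ | ⟨h₁, h₂⟩ <;> grind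

theorem cmp_eq_cmp_of_cmp_ne {α β : Type*} [LinearOrder α] [LinearOrder β] {t x x' : α}
    {s y y' : β} (h : cmp t x = cmp s y) (h' : cmp t x' = cmp s y') (hne : cmp t x ≠ cmp t x') :
    cmp x x' = cmp y y' := by
  simp only [cmp, cmpUsing] at *
  grind

section Field

variable {F F' : Type*} [Field F] [LinearOrder F] [Field F'] [LinearOrder F']
  {Γ : Order.PartialIso F F'}

theorem sign_eq_of_cmp_zero_eq {x : F} {y : F'} (h : cmp 0 x = cmp 0 y) : sign x = sign y := by
  simp only [sign_apply, lt_iff_lt_of_cmp_eq_cmp h, lt_iff_lt_of_cmp_eq_cmp (cmp_eq_cmp_symm.mp h)]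

/-- Each pair of polynomials in `W` has equal signs at any two points that are aligned by `Γ`: the
sign diagrams over the two ordered fields look the same. -/
def SignMatching (Γ : Order.PartialIso F F') (W : Set (F[X] × F'[X])) : Prop :=
  ∀ a b, Aligned Γ a b → ∀ w ∈ W, sign (w.1.eval a) = sign (w.2.eval b)

theorem SignMatching.comm {p : F[X]} {q : F'[X]} (h : SignMatching Γ {(p, q)}) :
    SignMatching Γ.comm {(q, p)} := by
  rintro a b hab _ rfl
  exact (h b a (aligned_comm.mp hab) _ rfl).symm

end Field

variable {F F' : Type*} [Field F] [LinearOrder F] [IsStrictOrderedRing F]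
  [Field F'] [LinearOrder F'] [IsStrictOrderedRing F'] {Γ : Order.PartialIso F F'}

theorem SignMatching.mem_sources_of_isRoot {W : Set (F[X] × F'[X])} (h : SignMatching Γ W)
    {w : F[X] × F'[X]} (hw : w ∈ W) (hw0 : w.1 ≠ 0) {x : F} (hx : w.1.IsRoot x) :
    x ∈ sources Γ := by
  by_contra hxΓ
  obtain ⟨y, hy⟩ := exists_aligned Γ x
  refine hw0 (eq_zero_of_infinite_isRoot _ ((infinite_gap hxΓ).mono fun c hc ↦ ?_))
  have hsign : sign (w.1.eval c) = sign (w.1.eval x) :=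
    (h c y (hy.mem_gap_iff.mp hc) w hw).trans (h x y hy w hw).symm
  rwa [hx.eq_zero, sign_zero, sign_eq_zero_iff] at hsign

theorem SignMatching.neg {p : F[X]} {q : F'[X]}
    (hΓ : SignMatching Γ {(derivative p, derivative q)}) :
    SignMatching Γ {(derivative (-p), derivative (-q))} := by
  rintro a b hab _ rfl
  simp only [derivative_neg, Polynomial.eval_neg, Left.sign_neg]
  rw [hΓ a b hab (derivative p, derivative q) rfl]

variable [PolynomialIVP F]

theorem sign_eval_eq_of_forall_not_isRoot {p : F[X]} {a b : F}
    (h : ∀ c ∈ Set.uIcc a b, ¬p.IsRoot c) : sign (p.eval a) = sign (p.eval b) := by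
  wlog hab : a ≤ b generalizing a b
  · exact (this (Set.uIcc_comm a b ▸ h) (le_of_not_ge hab)).symm
  rw [Set.uIcc_of_le hab] at h
  rcases pos_and_pos_or_neg_and_neg_of_mul_pos (mul_eval_pos_of_forall_not_isRoot hab h) with
    ⟨ha, hb⟩ | ⟨ha, hb⟩
  · rw [sign_pos ha, sign_pos hb]
  · rw [sign_neg ha, sign_neg hb]

theorem SignMatching.exists_subset {W V : Set (F[X] × F'[X])} (h : SignMatching Γ W) (hVW : V ⊆ W) :
    ∃ Δ : Order.PartialIso F F', SignMatching Δ V ∧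
      ∀ z ∈ Δ.val, z ∈ Γ.val ∧ ∃ w ∈ V, w.1 ≠ 0 ∧ w.1.IsRoot z.1 ∧ w.2.IsRoot z.2 := by
  classical
  let Δ : Order.PartialIso F F' :=
    ⟨Γ.val.filter fun z ↦ ∃ w ∈ V, w.1 ≠ 0 ∧ w.1.IsRoot z.1 ∧ w.2.IsRoot z.2, fun y hy z hz ↦
      Γ.prop y (Finset.mem_of_mem_filter y hy) z (Finset.mem_of_mem_filter z hz)⟩
  refine ⟨Δ, fun a b hab w hw ↦ ?_, fun z hz ↦ Finset.mem_filter.mp hz⟩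
  obtain ⟨c, hc⟩ := exists_aligned Γ.comm b
  rw [aligned_comm] at hc
  rw [← h c b hc w (hVW hw)]
  rcases eq_or_ne w.1 0 with hw0 | hw0
  · rw [hw0, Polynomial.eval_zero, Polynomial.eval_zero]
  by_cases hac : a = c
  · rw [hac]
  refine sign_eval_eq_of_forall_not_isRoot fun x hx hroot ↦ hac ?_
  obtain ⟨y, hy⟩ := mem_sources.mp (h.mem_sources_of_isRoot (hVW hw) hw0 hroot)
  have hroot' : w.2.IsRoot y := by
    rw [IsRoot, ← sign_eq_zero_iff, ← h x y (.of_mem hy) w (hVW hw), hroot.eq_zero, sign_zero]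
  have hxa := hab (x, y) (Finset.mem_filter.mpr ⟨hy, w, hw, hw0, hroot, hroot'⟩)
  exact eq_of_mem_uIcc_of_cmp_eq hx (hxa.trans (hc (x, y) hy).symm)

section Extension

variable {p : F[X]} {q : F'[X]} {a : F} {b : F'}

theorem SignMatching.strictMonoOn (hΓ : SignMatching Γ {(derivative p, derivative q)})
    (ha : a ∉ sources Γ) (hpos : 0 < (derivative p).eval a) :
    StrictMonoOn p.eval (closedGap (sources Γ) a) := by
  refine strictMonoOn_eval_closedGap ha fun c hc ↦ ?_
  obtain ⟨b, hab⟩ := exists_aligned Γ a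
  rw [← sign_eq_one_iff] at hpos ⊢
  rw [hΓ c b (hab.mem_gap_iff.mp hc) _ rfl, ← hΓ a b hab _ rfl, hpos]

theorem SignMatching.strictMonoOn_or_neg (hΓ : SignMatching Γ {(derivative p, derivative q)})
    (hp : derivative p ≠ 0) (ha : a ∉ sources Γ) :
    StrictMonoOn p.eval (closedGap (sources Γ) a) ∨
      StrictMonoOn (-p).eval (closedGap (sources Γ) a) := by
  rcases lt_or_gt_of_ne fun h ↦ ha (hΓ.mem_sources_of_isRoot rfl hp h) with hneg | hpos
  · exact .inr (hΓ.neg.strictMonoOn ha (by simpa using hneg))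
  · exact .inl (hΓ.strictMonoOn ha hpos)

theorem SignMatching.injOn_gap (hΓ : SignMatching Γ {(derivative p, derivative q)})
    (hp : derivative p ≠ 0) : Set.InjOn p.eval (gap (sources Γ) a) := by
  by_cases ha : a ∈ sources Γ
  · have hsub : (gap (sources Γ) a).Subsingleton := fun x hx y hy ↦
      (eq_of_mem_gap ha hx).trans (eq_of_mem_gap ha hy).symm
    exact hsub.injOn _
  · refine Set.InjOn.mono (gap_subset_closedGap _ _) ?_
    rcases hΓ.strictMonoOn_or_neg hp ha with h | h
    · exact h.injOn
    · exact fun x hx y hy hxy ↦ h.injOn hx hy (by simpa using hxy)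

variable [PolynomialIVP F']

theorem SignMatching.exists_isRoot_of_pos (hΓ : SignMatching Γ {(derivative p, derivative q)})
    (hsign : ∀ z ∈ Γ.val, sign (p.eval z.1) = sign (q.eval z.2)) (hab : Aligned Γ a b)
    (ha : a ∉ sources Γ) (hpos : 0 < (derivative p).eval a)
    (hne : sign (p.eval a) ≠ sign (q.eval b)) :
    ∃ c ∈ gap (sources Γ) a, p.IsRoot c := by
  have hpmono := hΓ.strictMonoOn ha hpos
  have hqmono := hΓ.comm.strictMonoOn (hab.notMem_sources_comm ha)
    (by rwa [← sign_eq_one_iff, ← hΓ a b hab _ rfl, sign_eq_one_iff])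
  have hamem := gap_subset_closedGap _ _ (mem_gap_self (sources Γ) a)
  have hbmem := gap_subset_closedGap _ _ (mem_gap_self (sources Γ.comm) b)
  rcases lt_trichotomy (p.eval a) 0 with hpa | hpa | hpa
  · have hqb : 0 ≤ q.eval b := by
      by_contra! hqb
      exact hne (by rw [sign_neg hpa, sign_neg hqb])
    refine exists_isRoot_mem_gap ha hpmono (fun _ _ htgap hta ↦ ?_) (fun t ht htgap hat ↦ ?_)
    · exact (hpmono htgap hamem hta).trans hpa
    · obtain ⟨s, hs⟩ := mem_sources.mp ht
      have hbs := (lt_iff_lt_of_cmp_eq_cmp (cmp_eq_cmp_symm.mp (hab _ hs))).mp hat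
      have := hqb.trans_lt (hqmono hbmem (hab.mem_closedGap hs htgap) hbs)
      rwa [← sign_eq_one_iff, hsign _ hs, sign_eq_one_iff]
  · exact ⟨a, mem_gap_self _ _, hpa⟩
  · have hqb : q.eval b ≤ 0 := by
      by_contra! hqb
      exact hne (by rw [sign_pos hpa, sign_pos hqb])
    refine exists_isRoot_mem_gap ha hpmono (fun t ht htgap hta ↦ ?_) (fun _ _ htgap hat ↦ ?_)
    · obtain ⟨s, hs⟩ := mem_sources.mp ht
      have hsb := (lt_iff_lt_of_cmp_eq_cmp (hab _ hs)).mp hta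
      have := (hqmono (hab.mem_closedGap hs htgap) hbmem hsb).trans_le hqb
      rwa [← sign_eq_neg_one_iff, hsign _ hs, sign_eq_neg_one_iff]
    · exact hpa.trans (hpmono hamem htgap hat)

theorem SignMatching.exists_isRoot_of_sign_ne (hΓ : SignMatching Γ {(derivative p, derivative q)})
    (hp : derivative p ≠ 0) (hsign : ∀ z ∈ Γ.val, sign (p.eval z.1) = sign (q.eval z.2))
    (hab : Aligned Γ a b) (hne : sign (p.eval a) ≠ sign (q.eval b)) :
    ∃ c ∈ gap (sources Γ) a, p.IsRoot c := by
  have ha : a ∉ sources Γ := fun ha ↦ hne (hsign _ (hab.mem_val ha))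
  rcases lt_or_gt_of_ne fun h ↦ ha (hΓ.mem_sources_of_isRoot rfl hp h) with hneg | hpos
  · obtain ⟨c, hc, hroot⟩ := hΓ.neg.exists_isRoot_of_pos
      (fun z hz ↦ by simpa [Left.sign_neg] using hsign z hz) hab ha (by simpa using hneg)
      (by simpa [Left.sign_neg] using hne)
    exact ⟨c, hc, by simpa [IsRoot] using hroot⟩
  · exact hΓ.exists_isRoot_of_pos hsign hab ha hpos hne

theorem SignMatching.exists_rootExtension (hΓ : SignMatching Γ {(derivative p, derivative q)})
    (hp : derivative p ≠ 0) (hq : derivative q ≠ 0) :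
    ∃ Γ' : Order.PartialIso F F', ∀ x y, (x, y) ∈ Γ'.val ↔
      (x, y) ∈ Γ.val ∨ Aligned Γ x y ∧ p.IsRoot x ∧ q.IsRoot y := by
  classical
  have hp0 : p ≠ 0 := by rintro rfl; exact hp derivative_zero
  have hq0 : q ≠ 0 := by rintro rfl; exact hq derivative_zero
  let s : Finset (F × F') := Γ.val ∪
    (p.roots.toFinset ×ˢ q.roots.toFinset).filter fun z ↦ Aligned Γ z.1 z.2
  have hs : ∀ z, z ∈ s ↔ z ∈ Γ.val ∨ Aligned Γ z.1 z.2 ∧ p.IsRoot z.1 ∧ q.IsRoot z.2 := by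
    simp [s, hp0, hq0, and_comm]
  refine ⟨⟨s, fun z hz w hw ↦ ?_⟩, fun x y ↦ hs (x, y)⟩
  rcases (hs z).mp hz, (hs w).mp hw with ⟨hzΓ | ⟨hzal, hpz, hqz⟩, hwΓ | ⟨hwal, hpw, hqw⟩⟩
  · exact Γ.prop z hzΓ w hwΓ
  · exact hwal z hzΓ
  · exact cmp_eq_cmp_symm.mp (hzal w hwΓ)
  by_cases hgap : w.1 ∈ gap (sources Γ) z.1
  · have hgap' : z.2 ∈ gap (sources Γ.comm) w.2 :=
      (aligned_comm.mpr hwal).mem_gap_iff.mpr (aligned_comm.mpr (hzal.mem_gap_iff.mp hgap))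
    rw [hΓ.injOn_gap hp hgap (mem_gap_self _ _) (hpw.trans hpz.symm),
      hΓ.comm.injOn_gap hq hgap' (mem_gap_self _ _) (hqz.trans hqw.symm), cmp_self_eq_eq,
      cmp_self_eq_eq]
  · simp only [gap, Set.mem_ofPred_eq, not_forall] at hgap
    obtain ⟨t, ht, hne⟩ := hgap
    obtain ⟨r, hr⟩ := mem_sources.mp ht
    exact cmp_eq_cmp_of_cmp_ne (hzal _ hr) (hwal _ hr) (Ne.symm hne)

theorem SignMatching.sign_eq_of_isRoot_of_pos {x : F} {y : F'}
    (hΓ : SignMatching Γ {(derivative p, derivative q)}) (hab : Aligned Γ a b)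
    (ha : a ∉ sources Γ) (hpos : 0 < (derivative p).eval a) (hx : x ∈ gap (sources Γ) a)
    (hy : y ∈ gap (sources Γ.comm) b) (hpx : p.IsRoot x) (hqy : q.IsRoot y)
    (hcmp : cmp x a = cmp y b) : sign (p.eval a) = sign (q.eval b) := by
  have hpmono := hΓ.strictMonoOn ha hpos
  have hqmono := hΓ.comm.strictMonoOn (hab.notMem_sources_comm ha)
    (by rwa [← sign_eq_one_iff, ← hΓ a b hab _ rfl, sign_eq_one_iff])
  have hpcmp := hpmono.cmp_map_eq (gap_subset_closedGap _ _ hx)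
    (gap_subset_closedGap _ _ (mem_gap_self _ a))
  have hqcmp := hqmono.cmp_map_eq (gap_subset_closedGap _ _ hy)
    (gap_subset_closedGap _ _ (mem_gap_self _ b))
  rw [hpx.eq_zero] at hpcmp
  rw [hqy.eq_zero] at hqcmp
  exact sign_eq_of_cmp_zero_eq (hpcmp.trans (hcmp.trans hqcmp.symm))

theorem SignMatching.sign_eq_of_rootExtension
    (hΓ : SignMatching Γ {(derivative p, derivative q)})
    (hp : derivative p ≠ 0) (hq : derivative q ≠ 0)
    (hsign : ∀ z ∈ Γ.val, sign (p.eval z.1) = sign (q.eval z.2)) {Γ' : Order.PartialIso F F'}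
    (hΓ' : ∀ x y, (x, y) ∈ Γ'.val ↔ (x, y) ∈ Γ.val ∨ Aligned Γ x y ∧ p.IsRoot x ∧ q.IsRoot y)
    (hab : Aligned Γ' a b) : sign (p.eval a) = sign (q.eval b) := by
  have habΓ : Aligned Γ a b := fun z hz ↦ hab z ((hΓ' _ _).mpr (.inl hz))
  by_contra hne
  have ha : a ∉ sources Γ := fun ha ↦ hne (hsign _ (habΓ.mem_val ha))
  obtain ⟨x, hx, hpx⟩ := hΓ.exists_isRoot_of_sign_ne hp hsign habΓ hne
  have hxb : Aligned Γ x b := habΓ.mem_gap_iff.mp hx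
  obtain ⟨y, hy, hqy⟩ : ∃ y ∈ gap (sources Γ.comm) b, q.IsRoot y := by
    by_cases hqb : q.eval b = 0
    · exact ⟨b, mem_gap_self _ _, hqb⟩
    refine hΓ.comm.exists_isRoot_of_sign_ne hq
      (fun z hz ↦ (hsign z.swap (mem_val_comm.mp hz)).symm) (aligned_comm.mpr hxb) ?_
    rwa [hpx.eq_zero, sign_zero, ne_eq, sign_eq_zero_iff]
  have hxy : (x, y) ∈ Γ'.val := (hΓ' x y).mpr <|
    .inr ⟨aligned_comm.mp ((aligned_comm.mpr hxb).mem_gap_iff.mp hy), hpx, hqy⟩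
  have hcmp : cmp x a = cmp y b := hab _ hxy
  rcases lt_or_gt_of_ne fun h ↦ ha (hΓ.mem_sources_of_isRoot rfl hp h) with hneg | hpos
  · have hsignneg := hΓ.neg.sign_eq_of_isRoot_of_pos habΓ ha (by simpa using hneg) hx hy
      (by simpa [IsRoot] using hpx) (by simpa [IsRoot] using hqy) hcmp
    exact hne (by simpa [Left.sign_neg] using hsignneg)
  · exact hne (hΓ.sign_eq_of_isRoot_of_pos habΓ ha hpos hx hy hpx hqy hcmp)

theorem SignMatching.insert {W : Set (F[X] × F'[X])} (h : SignMatching Γ W)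
    (hW : (derivative p, derivative q) ∈ W) (hp : derivative p ≠ 0) (hq : derivative q ≠ 0)
    (hsign : ∀ z ∈ Γ.val, sign (p.eval z.1) = sign (q.eval z.2)) :
    ∃ Γ' : Order.PartialIso F F', SignMatching Γ' (Insert.insert (p, q) W) := by
  have hΓ : SignMatching Γ {(derivative p, derivative q)} := by
    rintro a b hab _ rfl
    exact h a b hab _ hW
  obtain ⟨Γ', hΓ'⟩ := hΓ.exists_rootExtension hp hq
  refine ⟨Γ', fun a b hab w hw ↦ ?_⟩
  rcases hw with rfl | hw
  · exact hΓ.sign_eq_of_rootExtension hp hq hsign hΓ' hab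
  · exact h a b (fun z hz ↦ hab z ((hΓ' _ _).mpr (.inl hz))) w hw

end Extension
end SignMatching

section Elimination

open SignType (sign)

variable {R : Type*} [CommRing R]

theorem exists_pow_mul_eq_mul_add_of_natDegree_lt {s : R[X]} (hs : s.natDegree ≠ 0) (p : R[X]) :
    ∃ r : R[X], r.natDegree < s.natDegree ∧
      ∃ (k : ℕ) (q : R[X]), Polynomial.C s.leadingCoeff ^ (2 * k) * p = s * q + r := by
  induction hn : p.natDegree using Nat.strong_induction_on generalizing p with
  | _ n ih =>
  subst hn
  rcases lt_or_ge p.natDegree s.natDegree with hlt | hle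
  · exact ⟨p, hlt, 0, 0, by simp⟩
  obtain ⟨j, hj⟩ := Nat.exists_eq_add_of_le hle
  let m : R[X] := Polynomial.C p.leadingCoeff * Polynomial.X ^ j
  let p₁ : R[X] := Polynomial.C s.leadingCoeff * p - s * m
  have hp₁ : p₁.natDegree < p.natDegree := by
    have hle : p₁.natDegree ≤ p.natDegree := by
      refine (natDegree_sub_le _ _).trans (max_le (natDegree_C_mul_le _ _) ?_)
      rw [hj]
      exact natDegree_mul_le_of_le le_rfl (natDegree_C_mul_X_pow_le _ _)
    have hcoeff : p₁.coeff p.natDegree = 0 := by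
      have hm : (s * m).coeff p.natDegree = s.leadingCoeff * p.leadingCoeff := by
        rw [← mul_assoc, hj, coeff_mul_X_pow, coeff_mul_C, coeff_natDegree]
      rw [Polynomial.coeff_sub, hm, Polynomial.coeff_C_mul, coeff_natDegree, sub_self]
    refine hle.lt_of_ne fun heq ↦ ?_
    rw [← heq, coeff_natDegree, leadingCoeff_eq_zero] at hcoeff
    rw [hcoeff, natDegree_zero] at heq
    omega
  obtain ⟨r, hr, k, q, h⟩ := ih _ hp₁ p₁ rfl
  exact ⟨Polynomial.C s.leadingCoeff * r, (natDegree_C_mul_le _ _).trans_lt hr, k + 1,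
    Polynomial.C s.leadingCoeff * q + Polynomial.C s.leadingCoeff ^ (2 * k + 1) * m, by
      linear_combination C s.leadingCoeff * h⟩

theorem map_eraseLead {K : Type*} [Semiring K] {χ : R →+* K} {p : R[X]}
    (hp : χ p.leadingCoeff = 0) : p.eraseLead.map χ = p.map χ := by
  conv_rhs => rw [← eraseLead_add_C_mul_X_pow p]
  rw [Polynomial.map_add, Polynomial.map_mul, Polynomial.map_C, hp, Polynomial.C_0, zero_mul,
    add_zero]

theorem natDegree_ne_zero_of_isRoot_map {K : Type*} [Semiring K] {χ : R →+* K} {s : R[X]} {x : K}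
    (hs : s.map χ ≠ 0) (hx : (s.map χ).IsRoot x) : s.natDegree ≠ 0 := by
  intro hdeg
  rw [eq_C_of_natDegree_eq_zero hdeg, Polynomial.map_C] at hs hx
  rw [IsRoot, Polynomial.eval_C] at hx
  exact hs (by rw [hx, Polynomial.C_0])

variable {F F' : Type*} [Field F] [LinearOrder F] [Field F'] [LinearOrder F']

/-- The signs of finitely many constants of `R` determine the sign diagram over `F'` of the
polynomials in `S`, up to matching it with their sign diagram over `F`. -/
def SignDetermined (ψ : R →+* F) (F' : Type*) [Field F'] [LinearOrder F'] (S : Set R[X]) : Prop :=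
  ∃ T : Finset R, ∀ ψ' : R →+* F', (∀ c ∈ T, sign (ψ c) = sign (ψ' c)) →
    ∃ Γ : Order.PartialIso F F', SignMatching Γ ((fun s ↦ (s.map ψ, s.map ψ')) '' S)

variable {ψ : R →+* F} {S S' : Set R[X]}

theorem SignDetermined.mono (h : SignDetermined ψ F' S') (hS : S ⊆ S') :
    SignDetermined ψ F' S := by
  obtain ⟨T, hT⟩ := h
  refine ⟨T, fun ψ' hψ' ↦ ?_⟩
  obtain ⟨Γ, hΓ⟩ := hT ψ' hψ'
  exact ⟨Γ, fun a b hab w hw ↦ hΓ a b hab w (Set.image_mono hS hw)⟩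

theorem signDetermined_of_natDegree_eq_zero (hfin : S.Finite) (hS : ∀ s ∈ S, s.natDegree = 0) :
    SignDetermined ψ F' S := by
  classical
  refine ⟨hfin.toFinset.image (·.coeff 0), fun ψ' hψ' ↦ ⟨default, ?_⟩⟩
  rintro a b - _ ⟨s, hs, rfl⟩
  have := hψ' (s.coeff 0) (Finset.mem_image_of_mem _ (hfin.mem_toFinset.mpr hs))
  rw [eq_C_of_natDegree_eq_zero (hS s hs)]
  simpa using this

theorem SignDetermined.insert_of_eraseLead {p : R[X]}
    (h : SignDetermined ψ F' (insert p.eraseLead S)) (hp : ψ p.leadingCoeff = 0) :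
    SignDetermined ψ F' (insert p S) := by
  classical
  obtain ⟨T, hT⟩ := h
  refine ⟨insert p.leadingCoeff T, fun ψ' hψ' ↦ ?_⟩
  have hp' : ψ' p.leadingCoeff = 0 := by
    rw [← sign_eq_zero_iff, ← hψ' _ (Finset.mem_insert_self _ _), hp, sign_zero]
  obtain ⟨Γ, hΓ⟩ := hT ψ' fun c hc ↦ hψ' c (Finset.mem_insert_of_mem hc)
  refine ⟨Γ, ?_⟩
  rw [Set.image_insert_eq] at hΓ ⊢
  rwa [map_eraseLead hp, map_eraseLead hp'] at hΓ

theorem setOf_mem_cons (p : R[X]) (S : Multiset R[X]) :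
    {s | s ∈ p ::ₘ S} = Insert.insert p {s | s ∈ S} := by
  ext
  simp

theorem isDershowitzMannaLT_map_natDegree_cons {p : R[X]} {S U : Multiset R[X]}
    (hU : ∀ s ∈ U, s.natDegree < p.natDegree) :
    ((S + U).map natDegree).IsDershowitzMannaLT ((p ::ₘ S).map natDegree) := by
  refine ⟨S.map natDegree, U.map natDegree, {p.natDegree}, Multiset.singleton_ne_zero _,
    Multiset.map_add .., ?_, ?_⟩
  · rw [Multiset.map_cons, ← Multiset.singleton_add, add_comm]
  · simpa using hU

theorem exists_multiset_signDetermined_of_leadingCoeff_eq_zero {S : Multiset R[X]} {p : R[X]}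
    (hpS : p ∈ S) (hp : p.natDegree ≠ 0) (hlc : ψ p.leadingCoeff = 0) :
    ∃ S' : Multiset R[X], (S'.map natDegree).IsDershowitzMannaLT (S.map natDegree) ∧
      (SignDetermined ψ F' {s | s ∈ S'} → SignDetermined ψ F' {s | s ∈ S}) := by
  obtain ⟨S, rfl⟩ := Multiset.exists_cons_of_mem hpS
  refine ⟨S + {p.eraseLead}, isDershowitzMannaLT_map_natDegree_cons fun s hs ↦ ?_, ?_⟩
  · rw [Multiset.mem_singleton.mp hs]
    exact p.eraseLead_natDegree_le.trans_lt (Nat.sub_one_lt hp)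
  · rw [add_comm, Multiset.singleton_add, setOf_mem_cons, setOf_mem_cons]
    exact fun h ↦ h.insert_of_eraseLead hlc

variable [IsStrictOrderedRing F]

theorem derivative_map_ne_zero {p : R[X]} (hp : p.natDegree ≠ 0) (hlc : ψ p.leadingCoeff ≠ 0) :
    derivative (p.map ψ) ≠ 0 := fun h ↦
  hp (natDegree_map_of_leadingCoeff_ne_zero ψ hlc ▸ derivative_eq_zero.mp h)

theorem map_leadingCoeff_derivative_ne_zero {p : R[X]} (hp : p.natDegree ≠ 0)
    (hlc : ψ p.leadingCoeff ≠ 0) : ψ (derivative p).leadingCoeff ≠ 0 := by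
  have hcoeff : ψ ((derivative p).coeff (p.natDegree - 1)) ≠ 0 := by
    rw [← Polynomial.coeff_map, ← derivative_map, coeff_derivative, Polynomial.coeff_map,
      Nat.sub_add_cancel (Nat.one_le_iff_ne_zero.mpr hp), coeff_natDegree]
    exact mul_ne_zero hlc (Nat.cast_add_one_ne_zero _)
  have hdeg : (derivative p).natDegree = p.natDegree - 1 :=
    natDegree_eq_of_le_of_coeff_ne_zero p.natDegree_derivative_le
      fun h ↦ hcoeff (by rw [h, map_zero])
  rwa [leadingCoeff, hdeg]

theorem sign_eval_map_eq_of_pow_mul_eq {p s q r : R[X]} {k : ℕ} {x : F}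
    (h : Polynomial.C s.leadingCoeff ^ (2 * k) * p = s * q + r) (hlc : ψ s.leadingCoeff ≠ 0)
    (hx : (s.map ψ).IsRoot x) : sign ((p.map ψ).eval x) = sign ((r.map ψ).eval x) := by
  have heval := congrArg (fun t ↦ (t.map ψ).eval x) h
  simp only [Polynomial.map_mul, Polynomial.map_pow, Polynomial.map_add, Polynomial.map_C,
    Polynomial.eval_mul, Polynomial.eval_pow, Polynomial.eval_add, Polynomial.eval_C, hx.eq_zero,
    zero_mul, zero_add] at heval
  rw [← heval, sign_mul, sign_pos ((even_two_mul k).pow_pos hlc), one_mul]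

variable [IsStrictOrderedRing F'] [PolynomialIVP F] [PolynomialIVP F']

theorem SignDetermined.insert {p : R[X]} (hfin : S.Finite) (hp : p.natDegree ≠ 0)
    (hlcp : ψ p.leadingCoeff ≠ 0) (hderiv : derivative p ∈ S)
    (hlc : ∀ s ∈ S, s.natDegree ≠ 0 → ψ s.leadingCoeff ≠ 0) {rem : R[X] → R[X]}
    (hrem : ∀ s ∈ S, s.natDegree ≠ 0 →
      ∃ (k : ℕ) (q : R[X]), Polynomial.C s.leadingCoeff ^ (2 * k) * p = s * q + rem s)
    (h : SignDetermined ψ F' (S ∪ rem '' {s ∈ S | s.natDegree ≠ 0})) :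
    SignDetermined ψ F' (Insert.insert p S) := by
  classical
  obtain ⟨T, hT⟩ := h
  refine ⟨T ∪ Insert.insert p.leadingCoeff (hfin.toFinset.image leadingCoeff), fun ψ' hψ' ↦ ?_⟩
  obtain ⟨Γ, hΓ⟩ := hT ψ' fun c hc ↦ hψ' c (Finset.mem_union_left _ hc)
  obtain ⟨Δ, hΔ, hroot⟩ := hΓ.exists_subset (Set.image_mono Set.subset_union_left)
  have hderivmem : (derivative (p.map ψ), derivative (p.map ψ')) ∈
      (fun s : R[X] ↦ (s.map ψ, s.map ψ')) '' S :=
    ⟨derivative p, hderiv, by simp only [derivative_map]⟩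
  have hlcp' : ψ' p.leadingCoeff ≠ 0 := by
    rw [← sign_ne_zero, ← hψ' _ (by simp), sign_ne_zero]
    exact hlcp
  have hlc' : ∀ s ∈ S, s.natDegree ≠ 0 → ψ' s.leadingCoeff ≠ 0 := fun s hs hdeg ↦ by
    rw [← sign_ne_zero, ← hψ' _ ?_, sign_ne_zero]
    · exact hlc s hs hdeg
    · simp only [Finset.mem_union, Finset.mem_insert, Finset.mem_image, Set.Finite.mem_toFinset]
      exact .inr (.inr ⟨s, hs, rfl⟩)
  rw [Set.image_insert_eq]
  refine hΔ.insert hderivmem (derivative_map_ne_zero hp hlcp) (derivative_map_ne_zero hp hlcp') ?_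
  rintro z hz
  obtain ⟨hzΓ, _, ⟨s, hs, rfl⟩, hs0, hz₁, hz₂⟩ := hroot z hz
  have hdeg : s.natDegree ≠ 0 := natDegree_ne_zero_of_isRoot_map hs0 hz₁
  obtain ⟨k, q, hkq⟩ := hrem s hs hdeg
  rw [sign_eval_map_eq_of_pow_mul_eq hkq (hlc s hs hdeg) hz₁,
    sign_eval_map_eq_of_pow_mul_eq hkq (hlc' s hs hdeg) hz₂]
  exact hΓ z.1 z.2 (.of_mem hzΓ) _ ⟨rem s, .inr ⟨s, ⟨hs, hdeg⟩, rfl⟩, rfl⟩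

theorem exists_multiset_signDetermined_of_leadingCoeff_ne_zero {S : Multiset R[X]}
    (hS : ∃ p ∈ S, p.natDegree ≠ 0) (hlc : ∀ s ∈ S, s.natDegree ≠ 0 → ψ s.leadingCoeff ≠ 0) :
    ∃ S' : Multiset R[X], (S'.map natDegree).IsDershowitzMannaLT (S.map natDegree) ∧
      (SignDetermined ψ F' {s | s ∈ S'} → SignDetermined ψ F' {s | s ∈ S}) := by
  classical
  obtain ⟨p, ⟨hpS, hp⟩, hmax⟩ : ∃ p, (p ∈ S ∧ p.natDegree ≠ 0) ∧
      ∀ s ∈ S, s.natDegree ≤ p.natDegree := by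
    obtain ⟨s, hs, hdeg⟩ := hS
    obtain ⟨p, hp, hmax⟩ := S.toFinset.exists_max_image natDegree ⟨s, Multiset.mem_toFinset.mpr hs⟩
    simp only [Multiset.mem_toFinset] at hp hmax
    exact ⟨p, ⟨hp, fun h ↦ hdeg (Nat.le_zero.mp (h ▸ hmax s hs))⟩, hmax⟩
  choose! rem hremdeg hrem using fun (s : R[X]) (hs : s.natDegree ≠ 0) ↦
    exists_pow_mul_eq_mul_add_of_natDegree_lt hs p
  obtain ⟨S, rfl⟩ := Multiset.exists_cons_of_mem hpS
  simp only [Multiset.forall_mem_cons] at hlc hmax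
  have hderivdeg : (derivative p).natDegree < p.natDegree := natDegree_derivative_lt hp
  have hmaxV : ∀ s ∈ derivative p ::ₘ S, s.natDegree ≤ p.natDegree :=
    Multiset.forall_mem_cons.mpr ⟨hderivdeg.le, hmax.2⟩
  have hlcV : ∀ s ∈ derivative p ::ₘ S, s.natDegree ≠ 0 → ψ s.leadingCoeff ≠ 0 :=
    Multiset.forall_mem_cons.mpr
      ⟨fun _ ↦ map_leadingCoeff_derivative_ne_zero hp (hlc.1 hp), hlc.2⟩
  let U := ((derivative p ::ₘ S).filter (·.natDegree ≠ 0)).map rem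
  refine ⟨S + derivative p ::ₘ U, isDershowitzMannaLT_map_natDegree_cons ?_, fun h ↦ ?_⟩
  · refine Multiset.forall_mem_cons.mpr ⟨hderivdeg, ?_⟩
    simp only [U, Multiset.mem_map, Multiset.mem_filter]
    rintro _ ⟨s, ⟨hs, hdeg⟩, rfl⟩
    exact (hremdeg s hdeg).trans_le (hmaxV s hs)
  · rw [setOf_mem_cons]
    refine (SignDetermined.insert (S := {s | s ∈ derivative p ::ₘ S}) (Multiset.finite_toSet _) hp
      (hlc.1 hp) (Multiset.mem_cons_self _ _) hlcV (fun s _ ↦ hrem s) (h.mono ?_)).mono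
      (Set.insert_subset_insert fun s ↦ Multiset.mem_cons_of_mem)
    rintro s (hs | ⟨s, ⟨hs, hdeg⟩, rfl⟩)
    · simp only [Set.mem_ofPred_eq, Multiset.mem_cons, Multiset.mem_add] at hs ⊢
      tauto
    · refine Multiset.mem_add.mpr (.inr (Multiset.mem_cons_of_mem ?_))
      exact Multiset.mem_map_of_mem _ (Multiset.mem_filter.mpr ⟨hs, hdeg⟩)

theorem signDetermined (ψ : R →+* F) (F' : Type*) [Field F'] [LinearOrder F']
    [IsStrictOrderedRing F'] [PolynomialIVP F'] (S : Multiset R[X]) :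
    SignDetermined ψ F' {s | s ∈ S} := by
  induction S using
    (InvImage.wf (Multiset.map natDegree) Multiset.wellFounded_isDershowitzMannaLT).induction with
  | _ S ih =>
  by_cases hS : ∀ s ∈ S, s.natDegree = 0
  · exact signDetermined_of_natDegree_eq_zero S.finite_toSet hS
  push Not at hS
  obtain ⟨S', hlt, hS'⟩ : ∃ S' : Multiset R[X],
      (S'.map natDegree).IsDershowitzMannaLT (S.map natDegree) ∧
      (SignDetermined ψ F' {s | s ∈ S'} → SignDetermined ψ F' {s | s ∈ S}) := by
    by_cases hlc : ∀ s ∈ S, s.natDegree ≠ 0 → ψ s.leadingCoeff ≠ 0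
    · exact exists_multiset_signDetermined_of_leadingCoeff_ne_zero hS hlc
    · push Not at hlc
      obtain ⟨p, hpS, hp, hlc⟩ := hlc
      exact exists_multiset_signDetermined_of_leadingCoeff_eq_zero hpS hp hlc
  exact hS' (ih S' hlt)

end Elimination

end SignDiagram

section Transfer

open SignType (sign)

theorem eval₂_eq_eval_map_finSuccEquiv {R K : Type*} [CommSemiring R] [CommSemiring K] (φ : R →+* K)
    {k : ℕ} (u : Fin (k + 1) → K) (s : MvPolynomial (Fin (k + 1)) R) :
    s.eval₂ φ u = ((finSuccEquiv R k s).map (eval₂Hom φ (Fin.tail u))).eval (u 0) := by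
  induction s using MvPolynomial.induction_on with
  | C c => simp [finSuccEquiv_apply]
  | add s t hs ht => simp [hs, ht]
  | mul_X s i hs => cases i using Fin.cases <;> simp
      [hs, finSuccEquiv_X_zero, finSuccEquiv_X_succ, Fin.tail]

variable {R F : Type*} [Field R] [LinearOrder R] [IsStrictOrderedRing R] [PolynomialIVP R]
  [Field F] [LinearOrder F] [IsStrictOrderedRing F] [PolynomialIVP F]

theorem exists_sign_eval_eq_sign_eval₂_fin {φ : R →+* F} (hφ : StrictMono φ) {k : ℕ} (u : Fin k → F)
    (S : Finset (MvPolynomial (Fin k) R)) :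
    ∃ w : Fin k → R, ∀ s ∈ S, sign (s.eval₂ φ u) = sign (s.eval w) := by
  classical
  induction k with
  | zero =>
    refine ⟨finZeroElim, fun s _ ↦ ?_⟩
    obtain ⟨c, rfl⟩ := C_surjective (Fin 0) s
    rw [MvPolynomial.eval₂_C, MvPolynomial.eval_C]
    refine sign_eq_of_cmp_zero_eq ?_
    rw [← map_zero φ, hφ.cmp_map_eq]
  | succ k ih =>
    obtain ⟨T, hT⟩ := signDetermined (eval₂Hom φ (Fin.tail u)) R (S.image (finSuccEquiv R k)).val
    obtain ⟨w, hw⟩ := ih (Fin.tail u) T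
    obtain ⟨Γ, hΓ⟩ := hT (eval w) hw
    obtain ⟨y, hy⟩ := exists_aligned Γ (u 0)
    refine ⟨Fin.cons y w, fun s hs ↦ ?_⟩
    rw [eval₂_eq_eval_map_finSuccEquiv, eval_eq_eval_mv_eval']
    exact hΓ _ _ hy _ ⟨finSuccEquiv R k s, Finset.mem_image_of_mem _ hs, rfl⟩

theorem exists_sign_eval_eq_sign_eval₂ {φ : R →+* F} (hφ : StrictMono φ) {σ : Type*} [Finite σ]
    (u : σ → F) (S : Finset (MvPolynomial σ R)) :
    ∃ w : σ → R, ∀ s ∈ S, sign (s.eval₂ φ u) = sign (s.eval w) := by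
  classical
  obtain ⟨k, ⟨e⟩⟩ := Finite.exists_equiv_fin σ
  obtain ⟨w, hw⟩ := exists_sign_eval_eq_sign_eval₂_fin hφ (u ∘ e.symm) (S.image (rename e))
  refine ⟨w ∘ e, fun s hs ↦ ?_⟩
  have := hw _ (Finset.mem_image_of_mem _ hs)
  rwa [eval₂_rename, eval_rename, Function.comp_assoc, e.symm_comp_self, Function.comp_id] at this

end Transfer

section MaximalReal

open Polynomial

universe u

theorem isSumSq_map {A B : Type*} [NonAssocSemiring A] [NonAssocSemiring B] (φ : A →+* B) {x : A}
    (hx : IsSumSq x) : IsSumSq (φ x) := by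
  induction hx with
  | zero => exact map_zero φ ▸ .zero
  | sq_add a _ ih => exact map_add φ _ _ ▸ map_mul φ a a ▸ ih.sq_add _

theorem isSemireal_of_ringHom {A B : Type*} [NonAssocSemiring A] [NonAssocSemiring B]
    [IsSemireal B] (φ : A →+* B) : IsSemireal A where
  one_add_ne_zero hs h := IsSemireal.one_add_ne_zero (isSumSq_map φ hs) <| by
    rw [← map_one φ, ← map_add, h, map_zero]

/-- A maximal formally real field: it is formally real, but none of its proper simple algebraic
extensions is. These are the real closed fields, by Artin and Schreier. -/
class IsMaximalReal (F : Type*) [Field F] : Prop extends IsSemireal F where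
  not_isSemireal_adjoinRoot {f : F[X]} (hf : Irreducible f) (hdeg : 2 ≤ f.natDegree) :
    ¬IsSemireal (AdjoinRoot f)

section Existence

variable {K L : Type*} [Field K] [Field L] [Algebra K L]

theorem exists_isSumSq_of_isSumSq_iSup {ι : Type*} [Nonempty ι] {E : ι → IntermediateField K L}
    (hE : Directed (· ≤ ·) E) {x : ↥(⨆ i, E i)} (hx : IsSumSq x) :
    ∃ i, ∃ y : E i, IsSumSq y ∧ (y : L) = x := by
  induction hx with
  | zero => exact ⟨Classical.arbitrary ι, 0, .zero, rfl⟩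
  | @sq_add a s _ ih =>
    obtain ⟨i, y, hy, hyx⟩ := ih
    obtain ⟨j, haj⟩ : ∃ j, (a : L) ∈ E j := by
      have ha := a.2
      rwa [← SetLike.mem_coe, IntermediateField.coe_iSup_of_directed hE, Set.mem_iUnion] at ha
    obtain ⟨k, hik, hjk⟩ := hE i j
    exact ⟨k, ⟨a, hjk haj⟩ * ⟨a, hjk haj⟩ + IntermediateField.inclusion hik y,
      (isSumSq_map (IntermediateField.inclusion hik).toRingHom hy).sq_add _, by simp [hyx]⟩

theorem isSemireal_iSup {ι : Type*} [Nonempty ι] {E : ι → IntermediateField K L}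
    (hE : Directed (· ≤ ·) E) (h : ∀ i, IsSemireal (E i)) : IsSemireal ↥(⨆ i, E i) where
  one_add_ne_zero {s} hs hs0 := by
    obtain ⟨i, y, hy, hys⟩ := exists_isSumSq_of_isSumSq_iSup hE hs
    refine (h i).one_add_ne_zero hy (Subtype.ext ?_)
    simpa [hys] using congrArg Subtype.val hs0

variable (K L) in
theorem exists_maximal_isSemireal [IsSemireal K] :
    ∃ F : IntermediateField K L, Maximal (fun E : IntermediateField K L ↦ IsSemireal E) F := by
  refine zorn_le₀ {E : IntermediateField K L | IsSemireal E} fun c hc hchain ↦ ?_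
  rcases c.eq_empty_or_nonempty with rfl | hne
  · exact ⟨⊥, isSemireal_of_ringHom (IntermediateField.botEquiv K L : _ →+* K), by simp⟩
  · have := hne.to_subtype
    exact ⟨⨆ E : c, E.1, isSemireal_iSup hchain.directedOn.directed_val fun E ↦ hc E.2,
      fun E hE ↦ le_iSup (fun E : c ↦ E.1) ⟨E, hE⟩⟩

theorem isMaximalReal_of_maximal [IsAlgClosed L] {F : IntermediateField K L}
    (hF : Maximal (fun E : IntermediateField K L ↦ IsSemireal E) F) : IsMaximalReal F where
  toIsSemireal := hF.prop
  not_isSemireal_adjoinRoot {f} hf hdeg hreal := by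
    have : Fact (Irreducible f) := ⟨hf⟩
    obtain ⟨α, hα⟩ := IsAlgClosed.exists_aeval_eq_zero L f
      (natDegree_pos_iff_degree_pos.mp (by omega)).ne'
    let φ : AdjoinRoot f →ₐ[F] L := AdjoinRoot.liftAlgHom f (Algebra.ofId F L) α hα
    let E := φ.fieldRange.restrictScalars K
    have hFE : F ≤ E := fun x hx ↦ φ.fieldRange.algebraMap_mem ⟨x, hx⟩
    have hE : IsSemireal E := isSemireal_of_ringHom
      ((AlgEquiv.ofInjectiveField φ).symm : φ.range →+* AdjoinRoot f)
    have hαF : α ∈ F := hF.le_of_ge hE hFE ⟨AdjoinRoot.root f, AdjoinRoot.liftAlgHom_root ..⟩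
    have hroot : f.IsRoot ⟨α, hαF⟩ := (algebraMap F L).injective <| by
      rw [map_zero, ← hα, Polynomial.aeval_def, ← eval₂_at_apply]; rfl
    have hone : f.natDegree = 1 :=
      natDegree_eq_of_degree_eq_some (degree_eq_one_of_irreducible_of_root hf hroot)
    omega

theorem exists_isMaximalReal_extension (K : Type u) [Field K] [IsSemireal K] :
    ∃ (F : Type u) (_ : Field F) (_ : Algebra K F), IsMaximalReal F := by
  obtain ⟨F, hF⟩ := exists_maximal_isSemireal K (AlgebraicClosure K)
  exact ⟨F, inferInstance, inferInstance, isMaximalReal_of_maximal hF⟩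

end Existence

section Order

variable {F : Type*} [Field F]

theorem eq_zero_of_isSumSq_of_isSumSq_neg [IsSemireal F] {x : F} (hx : IsSumSq x)
    (hneg : IsSumSq (-x)) : x = 0 := by
  by_contra hx0
  refine IsSemireal.not_isSumSq_neg_one F ?_
  have : -1 = x * -x * (x⁻¹ * x⁻¹) := by field_simp
  exact this ▸ (hx.mul hneg).mul (.mul_self _)

theorem adjoinRoot_mk_mod (f g : F[X]) : AdjoinRoot.mk f (g % f) = AdjoinRoot.mk f g := by
  conv_rhs => rw [← EuclideanDomain.div_add_mod g f, map_add, map_mul, AdjoinRoot.mk_self,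
    zero_mul, zero_add]

theorem exists_eq_add_mul_root_of_isSumSq {a : F}
    {x : AdjoinRoot (Polynomial.X ^ 2 - Polynomial.C a)} (hx : IsSumSq x) :
    ∃ s t b : F, IsSumSq s ∧ IsSumSq t ∧ x = AdjoinRoot.mk (Polynomial.X ^ 2 - Polynomial.C a)
      (Polynomial.C b * Polynomial.X + Polynomial.C (s + a * t)) := by
  induction hx with
  | zero => exact ⟨0, 0, 0, .zero, .zero, by simp⟩
  | sq_add y _ ih =>
    obtain ⟨s, t, b, hs, ht, rfl⟩ := ih
    obtain ⟨g, rfl⟩ := AdjoinRoot.mk_surjective y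
    have hmod := natDegree_mod_lt g (q := Polynomial.X ^ 2 - Polynomial.C a) (by simp)
    rw [natDegree_X_pow_sub_C] at hmod
    obtain ⟨c, e, hg⟩ := exists_eq_X_add_C_of_natDegree_le_one (Nat.le_of_lt_succ hmod)
    refine ⟨e * e + s, c * c + t, 2 * c * e + b, hs.sq_add e, ht.sq_add c, ?_⟩
    rw [← adjoinRoot_mk_mod, hg, ← map_mul, ← map_add, AdjoinRoot.mk_eq_mk]
    refine ⟨Polynomial.C c * Polynomial.C c, ?_⟩
    simp only [Polynomial.C_add, Polynomial.C_mul, C_ofNat]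
    ring

theorem isSumSq_or_isSumSq_neg [IsMaximalReal F] (a : F) : IsSumSq a ∨ IsSumSq (-a) := by
  by_cases ha : IsSquare a
  · exact .inl ha.isSumSq
  right
  have hirr : Irreducible (Polynomial.X ^ 2 - Polynomial.C a) :=
    X_pow_sub_C_irreducible_of_prime Nat.prime_two fun b hb ↦ ha ⟨b, hb.symm.trans (sq b)⟩
  have hdeg : (Polynomial.X ^ 2 - Polynomial.C a).natDegree = 2 := natDegree_X_pow_sub_C
  have hnot := IsMaximalReal.not_isSemireal_adjoinRoot hirr hdeg.ge
  rw [isSemireal_iff_not_isSumSq_neg_one, not_not] at hnot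
  obtain ⟨s, t, b, hs, ht, hst⟩ := exists_eq_add_mul_root_of_isSumSq hnot
  have hdvd : Polynomial.X ^ 2 - Polynomial.C a ∣
      Polynomial.C b * Polynomial.X + Polynomial.C (1 + s + a * t) := by
    rw [← AdjoinRoot.mk_eq_zero, show 1 + s + a * t = s + a * t + 1 by ring, Polynomial.C_add,
      ← add_assoc, map_add, ← hst, Polynomial.C_1, map_one, neg_add_cancel]
  have hzero := eq_zero_of_dvd_of_natDegree_lt hdvd (by
    rw [hdeg]; exact natDegree_linear_le.trans_lt one_lt_two)
  have hrel : 1 + s + a * t = 0 := by simpa using congrArg (Polynomial.coeff · 0) hzero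
  have ht0 : t ≠ 0 := by
    rintro rfl
    exact IsSemireal.one_add_ne_zero hs (by simpa using hrel)
  have : -a = (1 + s) * t * (t⁻¹ * t⁻¹) := by
    field_simp
    linear_combination -hrel
  exact this ▸ ((IsSumSq.one.add hs).mul ht).mul (.mul_self _)

variable (F) in
theorem exists_isStrictOrderedRing [IsMaximalReal F] :
    ∃ _ : LinearOrder F, IsStrictOrderedRing F := by
  classical
  let cone : RingCone F :=
    { Subsemiring.sumSq F with
      eq_zero_of_mem_of_neg_mem' := fun ha hneg ↦ eq_zero_of_isSumSq_of_isSumSq_neg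
        (Subsemiring.mem_sumSq.mp ha) (Subsemiring.mem_sumSq.mp hneg) }
  have : HasMemOrNegMem cone := ⟨fun a ↦ (isSumSq_or_isSumSq_neg a).imp
    Subsemiring.mem_sumSq.mpr Subsemiring.mem_sumSq.mpr⟩
  let _ : LinearOrder F := .mkOfAddGroupCone cone
  have : IsOrderedRing F := .mkOfCone cone
  exact ⟨inferInstance, IsOrderedRing.toIsStrictOrderedRing F⟩

end Order

section IntermediateValue

variable {F : Type*} [Field F]

theorem exists_isSumSq_dvd_one_add [IsMaximalReal F] {f : F[X]} (hf : Irreducible f)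
    (hdeg : 2 ≤ f.natDegree) :
    ∃ s, IsSumSq s ∧ s.natDegree < 2 * f.natDegree - 1 ∧ f ∣ 1 + s := by
  have hlift {x : AdjoinRoot f} (hx : IsSumSq x) :
      ∃ s, IsSumSq s ∧ s.natDegree < 2 * f.natDegree - 1 ∧ AdjoinRoot.mk f s = x := by
    induction hx with
    | zero => exact ⟨0, .zero, by simp; omega, map_zero _⟩
    | sq_add y _ ih =>
      obtain ⟨s, hs, hsdeg, rfl⟩ := ih
      obtain ⟨g, rfl⟩ := AdjoinRoot.mk_surjective y
      have hmod : (g % f).natDegree < f.natDegree := natDegree_mod_lt g (by omega)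
      have hmul := natDegree_mul_le (p := g % f) (q := g % f)
      refine ⟨g % f * (g % f) + s, hs.sq_add _, ?_, by rw [map_add, map_mul, adjoinRoot_mk_mod]⟩
      exact (natDegree_add_le _ _).trans_lt (max_lt (by omega) hsdeg)
  have hnot := IsMaximalReal.not_isSemireal_adjoinRoot hf hdeg
  rw [isSemireal_iff_not_isSumSq_neg_one, not_not] at hnot
  obtain ⟨s, hs, hsdeg, hsx⟩ := hlift hnot
  exact ⟨s, hs, hsdeg, by rw [← AdjoinRoot.mk_eq_zero, map_add, map_one, hsx, add_neg_cancel]⟩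

variable [LinearOrder F] [IsStrictOrderedRing F]

theorem exists_forall_eval_mul_eval_pos [IsMaximalReal F] {f : F[X]} (hf : Irreducible f)
    (hdeg : 2 ≤ f.natDegree) :
    ∃ q : F[X], q.natDegree < f.natDegree ∧ ∀ x, 0 < f.eval x * q.eval x := by
  obtain ⟨s, hs, hsdeg, q, hq⟩ := exists_isSumSq_dvd_one_add hf hdeg
  have hpos (x : F) : 0 < f.eval x * q.eval x := by
    rw [← Polynomial.eval_mul, ← hq, Polynomial.eval_add, eval_one]
    exact add_pos_of_pos_of_nonneg one_pos (isSumSq_map (evalRingHom x) hs).nonneg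
  refine ⟨q, ?_, hpos⟩
  have hq0 : q ≠ 0 := by
    rintro rfl
    simpa using hpos 0
  have := hq ▸ natDegree_add_le 1 s
  rw [natDegree_mul hf.ne_zero hq0, natDegree_one] at this
  omega

theorem exists_irreducible_dvd_eval_mul_eval_neg {f : F[X]} {a b : F}
    (h : f.eval a * f.eval b < 0) :
    ∃ g, Irreducible g ∧ g ∣ f ∧ g.eval a * g.eval b < 0 := by
  induction f using WfDvdMonoid.induction_on_irreducible with
  | zero => simp at h
  | unit u hu =>
    obtain ⟨c, -, rfl⟩ := isUnit_iff.mp hu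
    exact absurd h (by simpa using mul_self_nonneg c)
  | mul f g _ hg ih =>
    by_cases hgab : g.eval a * g.eval b < 0
    · exact ⟨g, hg, dvd_mul_right _ _, hgab⟩
    · obtain ⟨p, hp, hpf, hpab⟩ := ih <| by
        simp only [Polynomial.eval_mul] at h
        by_contra! hfab
        exact h.not_ge (by nlinarith [mul_nonneg hfab (not_lt.mp hgab)])
      exact ⟨p, hp, hpf.mul_left g, hpab⟩

theorem exists_isRoot_of_natDegree_eq_one {f : F[X]} (hf : f.natDegree = 1) {a b : F}
    (hab : a ≤ b) (h : f.eval a * f.eval b < 0) : ∃ c ∈ Set.Ioo a b, f.IsRoot c := by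
  obtain ⟨c, e, rfl⟩ := exists_eq_X_add_C_of_natDegree_le_one hf.le
  have hc : c ≠ 0 := by
    rintro rfl
    simp at hf
  have heval (x : F) :
      (Polynomial.C c * Polynomial.X + Polynomial.C e).eval x = c * (x - -e / c) := by
    simp only [Polynomial.eval_add, eval_C_mul, Polynomial.eval_X, Polynomial.eval_C]
    field_simp
    ring
  refine ⟨-e / c, ?_, by rw [IsRoot, heval, sub_self, mul_zero]⟩
  rw [heval, heval, mul_mul_mul_comm] at h
  have hneg := neg_of_mul_neg_right h (mul_self_nonneg c)
  rcases mul_neg_iff.mp hneg with ⟨ha, hb⟩ | ⟨ha, hb⟩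
  · exact absurd hab (by linarith)
  · exact ⟨sub_neg.mp ha, sub_pos.mp hb⟩

instance (priority := 100) [IsMaximalReal F] : PolynomialIVP F where
  exists_isRoot f a b hab h := by
    induction hn : f.natDegree using Nat.strong_induction_on generalizing f with
    | _ n ih =>
    obtain ⟨g, hg, hgf, hgab⟩ := exists_irreducible_dvd_eval_mul_eval_neg h
    have hgn : g.natDegree ≤ n := hn ▸ natDegree_le_of_dvd hgf (by rintro rfl; simp at h)
    rcases Nat.eq_or_lt_of_le (Nat.succ_le_of_lt hg.natDegree_pos) with hdeg | hdeg
    · obtain ⟨c, hc, hgc⟩ := exists_isRoot_of_natDegree_eq_one hdeg.symm hab hgab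
      exact ⟨c, hc, hgc.dvd hgf⟩
    · obtain ⟨q, hqdeg, hpos⟩ := exists_forall_eval_mul_eval_pos hg hdeg
      have hqab : q.eval a * q.eval b < 0 := by
        by_contra! hq
        nlinarith [mul_pos (hpos a) (hpos b), mul_nonneg hq (neg_pos.mpr hgab).le]
      obtain ⟨c, -, hqc⟩ := ih _ (hqdeg.trans_le hgn) q hqab rfl
      exact absurd (hpos c) (by simp [hqc.eq_zero])

end IntermediateValue

theorem exists_polynomialIVP_extension (K : Type u) [Field K] [IsSemireal K] :
    ∃ (F : Type u) (_ : Field F) (_ : Algebra K F) (_ : LinearOrder F),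
      IsStrictOrderedRing F ∧ PolynomialIVP F := by
  obtain ⟨F, _, _, _⟩ := exists_isMaximalReal_extension K
  obtain ⟨_, _⟩ := exists_isStrictOrderedRing F
  exact ⟨F, inferInstance, inferInstance, inferInstance, inferInstance, inferInstance⟩

theorem exists_linearOrder_isStrictOrderedRing (K : Type u) [Field K] [IsSemireal K] :
    ∃ _ : LinearOrder K, IsStrictOrderedRing K := by
  obtain ⟨F, _, _, _, _, _⟩ := exists_polynomialIVP_extension K
  let φ := algebraMap K F
  let _ : LinearOrder K := .lift' φ φ.injective
  exact ⟨inferInstance, Function.Injective.isStrictOrderedRing φ (map_zero φ) (map_one φ)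
    (map_add φ) (map_mul φ) Iff.rfl Iff.rfl⟩

end MaximalReal

section RealNullstellensatz

theorem ringHom_strictMono {R F : Type*} [Field R] [LinearOrder R] [IsStrictOrderedRing R]
    [PolynomialIVP R] [Field F] [LinearOrder F] [IsStrictOrderedRing F] (φ : R →+* F) :
    StrictMono φ := by
  refine (ringHom_monotone (fun r hr ↦ ?_) φ).strictMono_of_injective φ.injective
  rcases hr.eq_or_lt with rfl | hr
  · exact .zero
  obtain ⟨c, -, hc⟩ := PolynomialIVP.exists_isRoot (Polynomial.X ^ 2 - Polynomial.C r)
    (show 0 ≤ r + 1 by positivity) <| by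
      simp only [Polynomial.eval_sub, Polynomial.eval_pow, Polynomial.eval_X, Polynomial.eval_C]
      nlinarith [mul_pos hr hr, mul_pos hr (mul_pos hr hr)]
  refine ⟨c, ?_⟩
  rw [Polynomial.IsRoot, Polynomial.eval_sub, Polynomial.eval_pow, Polynomial.eval_X,
    Polynomial.eval_C] at hc
  linear_combination -hc

theorem vanishingIdeal_zeroLocus_of_isSemireal {R σ : Type*} [Field R] [LinearOrder R]
    [IsStrictOrderedRing R] [PolynomialIVP R] [Finite σ] (p : Ideal (MvPolynomial σ R)) [p.IsPrime]
    [IsSemireal p.ResidueField] : vanishingIdeal R (zeroLocus R p) = p := by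
  classical
  refine le_antisymm (fun q hq ↦ ?_) (le_vanishingIdeal_zeroLocus p)
  obtain ⟨F, _, _, _, _, _⟩ := exists_polynomialIVP_extension p.ResidueField
  let φ : MvPolynomial σ R →+* F :=
    (algebraMap p.ResidueField F).comp (algebraMap (MvPolynomial σ R) p.ResidueField)
  have hφ (s : MvPolynomial σ R) : φ s = 0 ↔ s ∈ p := by
    rw [RingHom.comp_apply, map_eq_zero, Ideal.algebraMap_residueField_eq_zero]
  have hφ' (s : MvPolynomial σ R) : s.eval₂ (φ.comp C) (φ ∘ X) = φ s :=
    (eval₂_comp_left φ C X s).symm.trans (by rw [eval₂_eta])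
  obtain ⟨S, hS⟩ := (isNoetherianRing_iff_ideal_fg _).mp inferInstance p
  obtain ⟨w, hw⟩ := exists_sign_eval_eq_sign_eval₂ (ringHom_strictMono (φ.comp C)) (φ ∘ X)
    (insert q S)
  have hzero {s : MvPolynomial σ R} (hs : s ∈ insert q S) : s ∈ p ↔ s.eval w = 0 := by
    rw [← hφ, ← sign_eq_zero_iff, ← hφ', hw s hs, sign_eq_zero_iff]
  have hwp : w ∈ zeroLocus R p := by
    rw [← hS, zeroLocus_span]
    intro s hs
    rw [aeval_eq_eval]
    exact (hzero (Finset.mem_insert_of_mem hs)).mp (hS ▸ Ideal.subset_span hs)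
  exact (hzero (Finset.mem_insert_self q S)).mpr (hq w hwp)

end RealNullstellensatz

section Quaternion

open Quaternion

section QuaternionMap

variable {R S : Type*} [CommRing R] [CommRing S]

/-- Apply a function to each component of a quaternion; bundled as `quaternionMap` below. -/
def quaternionMapFun (φ : R → S) (q : ℍ[R]) : ℍ[S] :=
  ⟨φ q.re, φ q.imI, φ q.imJ, φ q.imK⟩

section

variable (φ : R → S) (q : ℍ[R])

@[simp]
theorem re_quaternionMapFun : (quaternionMapFun φ q).re = φ q.re := rfl

@[simp]
theorem imI_quaternionMapFun : (quaternionMapFun φ q).imI = φ q.imI := rfl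

@[simp]
theorem imJ_quaternionMapFun : (quaternionMapFun φ q).imJ = φ q.imJ := rfl

@[simp]
theorem imK_quaternionMapFun : (quaternionMapFun φ q).imK = φ q.imK := rfl

end

/-- The ring homomorphism between quaternion rings that applies `φ` to each component. -/
def quaternionMap (φ : R →+* S) : ℍ[R] →+* ℍ[S] where
  toFun := quaternionMapFun φ
  map_one' := by ext <;> simp
  map_zero' := by ext <;> simp
  map_add' _ _ := by ext <;> simp
  map_mul' _ _ := by ext <;> simp

variable (φ : R →+* S) (q : ℍ[R])

theorem quaternionMap_apply : quaternionMap φ q = quaternionMapFun φ q := rfl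

theorem quaternionMap_star : quaternionMap φ (star q) = star (quaternionMap φ q) := by
  ext <;> simp [quaternionMap_apply]

theorem quaternionMap_smul (r : R) : quaternionMap φ (r • q) = φ r • quaternionMap φ q := by
  ext <;> simp [quaternionMap_apply]

variable {φ q} in
theorem quaternionMap_eq_zero_iff :
    quaternionMap φ q = 0 ↔ φ q.re = 0 ∧ φ q.imI = 0 ∧ φ q.imJ = 0 ∧ φ q.imK = 0 :=
  Quaternion.ext_iff

variable {n : ℕ}

/-- The additive map `h ↦ ∑ j, φ (h j) * v j`, semilinear with respect to `quaternionMap φ`. Its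
kernel consists of the vectors that vanish at the point `φ` in the direction `v`. -/
def quaternionForm (φ : R →+* S) (v : Fin n → ℍ[S]) :
    (Fin n → ℍ[R]) →ₛₗ[quaternionMap φ] ℍ[S] where
  toFun h := ∑ j, quaternionMap φ (h j) * v j
  map_add' _ _ := by simp only [Pi.add_apply, map_add, add_mul, Finset.sum_add_distrib]
  map_smul' _ _ := by simp only [Pi.smul_apply, smul_eq_mul, map_mul, mul_assoc, Finset.mul_sum]

theorem quaternionForm_apply (v : Fin n → ℍ[S]) (h : Fin n → ℍ[R]) :
    quaternionForm φ v h = ∑ j, quaternionMap φ (h j) * v j := rfl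

theorem quaternionForm_comp (v h : Fin n → ℍ[R]) :
    quaternionForm φ (quaternionMap φ ∘ v) h = quaternionMap φ (∑ j, h j * v j) := by
  simp only [quaternionForm_apply, Function.comp_apply, map_sum, map_mul]

end QuaternionMap

section RealSubmodule

theorem eq_zero_of_sum_star_mul_self_eq_zero {K ι : Type*} [Field K] [LinearOrder K]
    [IsStrictOrderedRing K] [Fintype ι] {y : ι → ℍ[K]} (h : ∑ i, star (y i) * y i = 0) (i : ι) :
    y i = 0 := by
  have hsum : ∑ i, normSq (y i) = 0 := by
    rw [← map_eq_zero_iff _ (algebraMap K ℍ[K]).injective, map_sum, ← h]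
    exact Finset.sum_congr rfl fun i _ ↦ (Quaternion.star_mul_self (y i)).symm
  exact normSq_eq_zero.mp <| (Finset.sum_eq_zero_iff_of_nonneg fun _ _ ↦ normSq_nonneg).mp hsum i
    (Finset.mem_univ i)

theorem isRealSubmoduleStar_ker_quaternionForm {R K : Type*} [CommRing R] [Field K]
    [LinearOrder K] [IsStrictOrderedRing K] {n : ℕ} (φ : R →+* K) (v : Fin n → ℍ[K]) :
    (quaternionForm φ v).ker.IsRealSubmoduleStar := by
  intro m f hf
  refine eq_zero_of_sum_star_mul_self_eq_zero (y := fun i ↦ quaternionForm φ v (f i)) ?_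
  calc ∑ i, star (quaternionForm φ v (f i)) * quaternionForm φ v (f i)
      = ∑ j, star (v j) * quaternionForm φ v (∑ i, star (f i j) • f i) := by
        simp only [map_sum, LinearMap.map_smulₛₗ, smul_eq_mul, quaternionMap_star]
        conv_lhs => enter [2, i, 1]; rw [quaternionForm_apply, star_sum]
        simp only [star_mul, Finset.sum_mul, Finset.mul_sum, mul_assoc]
        exact Finset.sum_comm
    _ = 0 := Finset.sum_eq_zero fun j _ ↦ by rw [LinearMap.mem_ker.mp (hf j), mul_zero]

variable {R : Type*} [CommRing R]

/-- Real ideals: `s ^ 2 + y ∈ I` with `y` a sum of squares forces `s ∈ I`. A prime ideal is real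
when its residue field is formally real. -/
def IsRealIdeal (I : Ideal R) : Prop :=
  ∀ s y, IsSumSq y → s * s + y ∈ I → s ∈ I

theorem exists_sum_mul_self_eq_of_isSumSq {y : R} (hy : IsSumSq y) :
    ∃ (m : ℕ) (t : Fin m → R), ∑ i, t i * t i = y := by
  induction hy with
  | zero => exact ⟨0, finZeroElim, rfl⟩
  | sq_add a _ ih =>
    obtain ⟨m, t, rfl⟩ := ih
    exact ⟨m + 1, Fin.cons a t, by simp [Fin.sum_univ_succ]⟩

theorem exists_isPrime_forall_mem_iff_smul_mem {M : Type*} [AddCommGroup M] [Module R M]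
    [IsNoetherianRing R] {N : Submodule R M} {x : M} (hx : x ∉ N) :
    ∃ (p : Ideal R) (r : R), p.IsPrime ∧ ∀ s, s ∈ p ↔ s • r • x ∈ N := by
  have hx0 : N.mkQ x ≠ 0 := by simpa using hx
  have : Nontrivial (R ∙ N.mkQ x) := by simpa [Submodule.nontrivial_iff_ne_bot] using hx0
  obtain ⟨p, hp⟩ := associatedPrimes.nonempty R (R ∙ N.mkQ x)
  obtain ⟨hprime, ⟨y, hy⟩, rfl⟩ := isAssociatedPrime_iff.mp hp
  obtain ⟨r, rfl⟩ := Submodule.mem_span_singleton.mp hy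
  refine ⟨_, r, hprime, fun s ↦ ?_⟩
  rw [Submodule.mem_colon_singleton, Submodule.mem_bot, Subtype.ext_iff]
  exact Submodule.Quotient.mk_eq_zero N

variable {n : ℕ} {N : Submodule ℍ[R] (Fin n → ℍ[R])}

theorem isRealIdeal_of_isRealSubmoduleStar (hN : N.IsRealSubmoduleStar) {p : Ideal R}
    {f : Fin n → ℍ[R]} (hp : ∀ s, s ∈ p ↔ s • f ∈ N) : IsRealIdeal p := by
  intro s y hy hsy
  obtain ⟨m, t, rfl⟩ := exists_sum_mul_self_eq_of_isSumSq hy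
  let u : Fin (m + 1) → R := Fin.cons s t
  have hu : ∑ i, u i * u i ∈ p := by simpa [u, Fin.sum_univ_succ] using hsy
  refine (hp s).mpr (hN (m + 1) (fun i ↦ u i • f) (fun j ↦ ?_) 0)
  have : ∑ i, star ((u i • f) j) • u i • f = star (f j) • (∑ i, u i * u i) • f := by
    simp only [Pi.smul_apply, Quaternion.star_smul, Finset.sum_smul, Finset.smul_sum, mul_smul,
      smul_assoc, smul_comm (star (f j))]
  exact this ▸ N.smul_mem _ ((hp _).mp hu)

theorem smul_mem_of_quaternionMap_eq_zero {S : Type*} [CommRing S] {φ : R →+* S}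
    {e : Fin n → ℍ[R]} (he : ∀ r, φ r = 0 → r • e ∈ N) {c : ℍ[R]} (hc : quaternionMap φ c = 0) :
    c • e ∈ N := by
  let b : Module.Basis (Fin 4) R ℍ[R] := QuaternionAlgebra.basisOneIJK (-1) 0 (-1)
  have hb (i : Fin 4) : φ (b.repr c i) = 0 := by
    obtain ⟨h₁, h₂, h₃, h₄⟩ := quaternionMap_eq_zero_iff.mp hc
    fin_cases i <;> assumption
  rw [← b.sum_repr c, Finset.sum_smul]
  refine N.sum_mem fun i _ ↦ ?_
  rw [smul_assoc, smul_comm]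
  exact N.smul_mem _ (he _ (hb i))

theorem mem_of_forall_quaternionMap_eq_zero (hN : N.IsRealSubmoduleStar) {S : Type*} [CommRing S]
    {φ : R →+* S} {e : Fin n → ℍ[R]} (he : ∀ r, φ r = 0 → r • e ∈ N)
    (hφ : ∀ j, quaternionMap φ (e j) = 0) : e ∈ N := by
  refine hN 1 (fun _ ↦ e) (fun j ↦ ?_) 0
  rw [Fin.sum_univ_one]
  exact smul_mem_of_quaternionMap_eq_zero he (by rw [quaternionMap_star, hφ, star_zero])

end RealSubmodule

section ResidueField

variable {R : Type*} [CommRing R] {p : Ideal R} [p.IsPrime]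

theorem exists_algebraMap_residueField_eq_mul {ι : Type*} [Finite ι] (x : ι → p.ResidueField) :
    ∃ t ∉ p, ∃ a : ι → R, ∀ i, algebraMap R _ (a i) = algebraMap R _ t * x i := by
  obtain ⟨b, hb⟩ := IsLocalization.exist_integer_multiples_of_finite (nonZeroDivisors (R ⧸ p)) x
  obtain ⟨t, ht⟩ := Ideal.Quotient.mk_surjective b.1
  choose a ha using hb
  choose a' ha' using fun i ↦ Ideal.Quotient.mk_surjective (a i)
  refine ⟨t, fun htp ↦ nonZeroDivisors.coe_ne_zero b ?_, a', fun i ↦ ?_⟩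
  · rw [← ht, Ideal.Quotient.eq_zero_iff_mem.mpr htp]
  · rw [IsScalarTower.algebraMap_apply R (R ⧸ p), IsScalarTower.algebraMap_apply R (R ⧸ p) _ t,
      Ideal.Quotient.algebraMap_eq, ha', ht, ← Algebra.smul_def]
    exact ha i

theorem exists_quaternionMap_residueField_eq_smul {ι : Type*} [Finite ι]
    (v : ι → ℍ[p.ResidueField]) :
    ∃ t ∉ p, ∃ w : ι → ℍ[R], ∀ i,
      quaternionMap (algebraMap R _) (w i) = algebraMap R p.ResidueField t • v i := by
  obtain ⟨t, ht, a, ha⟩ := exists_algebraMap_residueField_eq_mul fun i : ι × Fin 4 ↦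
    Quaternion.equivTuple _ (v i.1) i.2
  refine ⟨t, ht, fun i ↦ (Quaternion.equivTuple R).symm fun k ↦ a (i, k), fun i ↦ ?_⟩
  ext
  · exact ha (i, 0)
  · exact ha (i, 1)
  · exact ha (i, 2)
  · exact ha (i, 3)

theorem exists_isSumSq_algebraMap_eq {x : p.ResidueField} (hx : IsSumSq x) :
    ∃ t ∉ p, ∃ y, IsSumSq y ∧
      algebraMap R p.ResidueField y = algebraMap R p.ResidueField (t * t) * x := by
  induction hx with
  | zero => exact ⟨1, p.one_notMem, 0, .zero, by simp⟩
  | sq_add a _ ih =>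
    obtain ⟨t, ht, y, hy, hyx⟩ := ih
    obtain ⟨s, hs, u, hu⟩ := exists_algebraMap_residueField_eq_mul fun _ : Unit ↦ a
    refine ⟨s * t, ‹p.IsPrime›.mul_notMem hs ht, t * u () * (t * u ()) + s * s * y,
      ((IsSumSq.mul_self s).mul hy).sq_add _, ?_⟩
    simp only [map_add, map_mul] at hyx ⊢
    rw [hu, hyx]
    ring

theorem isSemireal_residueField (hp : IsRealIdeal p) : IsSemireal p.ResidueField where
  one_add_ne_zero {x} hx h := by
    obtain ⟨t, ht, y, hy, hyx⟩ := exists_isSumSq_algebraMap_eq hx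
    refine ht (hp t y hy ?_)
    rw [← Ideal.algebraMap_residueField_eq_zero, map_add, hyx, ← mul_one_add, h, mul_zero]

variable {n : ℕ} {N : Submodule ℍ[R] (Fin n → ℍ[R])}

theorem exists_smul_of_mem_span {h : Fin n → ℍ[p.ResidueField]}
    (hh : h ∈ Submodule.span ℍ[p.ResidueField]
      ((quaternionMap (algebraMap R p.ResidueField) ∘ ·) '' (N : Set (Fin n → ℍ[R])))) :
    ∃ t ∉ p, ∃ g ∈ N,
      quaternionMap (algebraMap R p.ResidueField) ∘ g = algebraMap R p.ResidueField t • h := by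
  induction hh using Submodule.span_induction with
  | mem _ hx =>
    obtain ⟨g, hg, rfl⟩ := hx
    exact ⟨1, p.one_notMem, g, hg, by simp⟩
  | zero => exact ⟨1, p.one_notMem, 0, N.zero_mem, by ext1; simp⟩
  | add x y _ _ ihx ihy =>
    obtain ⟨s, hs, g, hg, hgx⟩ := ihx
    obtain ⟨t, ht, k, hk, hky⟩ := ihy
    refine ⟨s * t, ‹p.IsPrime›.mul_notMem hs ht, t • g + s • k,
      N.add_mem (N.smul_of_tower_mem t hg) (N.smul_of_tower_mem s hk), funext fun j ↦ ?_⟩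
    have hgj := congrFun hgx j
    have hkj := congrFun hky j
    simp only [Function.comp_apply, Pi.smul_apply, Pi.add_apply, map_add, quaternionMap_smul,
      map_mul, smul_add, mul_smul] at hgj hkj ⊢
    rw [hgj, hkj, smul_comm]
  | smul c x _ ih =>
    obtain ⟨t, ht, g, hg, hgx⟩ := ih
    obtain ⟨s, hs, c', hc'⟩ := exists_quaternionMap_residueField_eq_smul fun _ : Unit ↦ c
    refine ⟨s * t, ‹p.IsPrime›.mul_notMem hs ht, c' () • g, N.smul_mem _ hg, funext fun j ↦ ?_⟩
    have hgj := congrFun hgx j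
    simp only [Function.comp_apply, Pi.smul_apply, smul_eq_mul, map_mul] at hgj ⊢
    rw [hgj, hc', smul_mul_smul_comm]

theorem exists_le_ker_quaternionForm_residueField (hN : N.IsRealSubmoduleStar)
    {f : Fin n → ℍ[R]} (hp : ∀ s, s ∈ p ↔ s • f ∈ N)
    [LinearOrder p.ResidueField] [IsStrictOrderedRing p.ResidueField] :
    ∃ v : Fin n → ℍ[p.ResidueField],
      N ≤ (quaternionForm (algebraMap R p.ResidueField) v).ker ∧
        f ∉ (quaternionForm (algebraMap R p.ResidueField) v).ker := by
  let φ := algebraMap R p.ResidueField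
  have hφ (r : R) : φ r = 0 ↔ r ∈ p := Ideal.algebraMap_residueField_eq_zero
  have hf : quaternionMap φ ∘ f ∉ Submodule.span ℍ[p.ResidueField]
      ((quaternionMap φ ∘ ·) '' (N : Set (Fin n → ℍ[R]))) := by
    intro hspan
    obtain ⟨t, ht, g, hg, hgf⟩ := exists_smul_of_mem_span hspan
    have he : t • f - g ∈ N := by
      refine mem_of_forall_quaternionMap_eq_zero hN (φ := φ) (fun r hr ↦ ?_) fun j ↦ ?_
      · rw [smul_sub, smul_comm]
        exact N.sub_mem (N.smul_of_tower_mem t ((hp r).mp ((hφ r).mp hr)))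
          (N.smul_of_tower_mem r hg)
      · rw [Pi.sub_apply, map_sub, Pi.smul_apply, quaternionMap_smul, sub_eq_zero]
        exact (congrFun hgf j).symm
    exact ht ((hp t).mpr ((N.sub_mem_iff_left hg).mp he))
  obtain ⟨l, hlf, hlN⟩ := Submodule.exists_le_ker_of_notMem hf
  have hl (h : Fin n → ℍ[R]) :
      quaternionForm φ (fun j ↦ l fun i ↦ if j = i then 1 else 0) h = l (quaternionMap φ ∘ h) :=
    (LinearMap.pi_apply_eq_sum_univ l _).symm
  refine ⟨fun j ↦ l fun i ↦ if j = i then 1 else 0, fun h hh ↦ ?_, ?_⟩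
  · exact (hl h).trans (hlN (Submodule.subset_span ⟨h, hh, rfl⟩))
  · exact fun h ↦ hlf ((hl f).symm.trans h)

end ResidueField

theorem exists_isSemireal_residueField_quaternionMap_ne_zero {R : Type*} [CommRing R]
    [IsNoetherianRing R] {n : ℕ} {N : Submodule ℍ[R] (Fin n → ℍ[R])} (hN : N.IsRealSubmoduleStar)
    {f : Fin n → ℍ[R]} (hf : f ∉ N) :
    ∃ (p : Ideal R) (_ : p.IsPrime) (v : Fin n → ℍ[R]), IsSemireal p.ResidueField ∧
      (∀ h ∈ N, quaternionMap (algebraMap R p.ResidueField) (∑ j, h j * v j) = 0) ∧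
        quaternionMap (algebraMap R p.ResidueField) (∑ j, f j * v j) ≠ 0 := by
  obtain ⟨p, r, hprime, hp⟩ :=
    exists_isPrime_forall_mem_iff_smul_mem (N := N.restrictScalars R) hf
  have hreal := isSemireal_residueField (isRealIdeal_of_isRealSubmoduleStar hN hp)
  obtain ⟨_, _⟩ := exists_linearOrder_isStrictOrderedRing p.ResidueField
  obtain ⟨v, hvN, hvf⟩ := exists_le_ker_quaternionForm_residueField hN hp
  obtain ⟨t, ht, w, hw⟩ := exists_quaternionMap_residueField_eq_smul v
  let φ := algebraMap R p.ResidueField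
  have hform (h : Fin n → ℍ[R]) :
      quaternionMap φ (∑ j, h j * w j) = φ t • quaternionForm φ v h := by
    simp only [map_sum, map_mul, hw, quaternionForm_apply, mul_smul_comm, Finset.smul_sum, φ]
  refine ⟨p, hprime, w, hreal, fun h hh ↦ ?_, fun h ↦ hvf ?_⟩
  · rw [hform, LinearMap.mem_ker.mp (hvN hh), smul_zero]
  · rw [hform, smul_eq_zero_iff_right (mt Ideal.algebraMap_residueField_eq_zero.mp ht)] at h
    exact Submodule.smul_of_tower_mem _ r h

end Quaternion

theorem vector_quaternionic_nullstellensatz_general {R σ ι : Type*} [Field R] [LinearOrder R]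
    [IsStrictOrderedRing R] [PolynomialIVP R] [Finite σ] {n : ℕ}
    (g : ι → Fin n → Quaternion (MvPolynomial σ R)) (f : Fin n → Quaternion (MvPolynomial σ R)) :
    (∀ (a : σ → R) (v : Fin n → Quaternion R),
        (∀ i, ∑ j, quaternionMap (eval a) (g i j) * v j = 0) →
          ∑ j, quaternionMap (eval a) (f j) * v j = 0) ↔
      ∀ N : Submodule (Quaternion (MvPolynomial σ R)) (Fin n → Quaternion (MvPolynomial σ R)),
        N.IsRealSubmoduleStar → (∀ i, g i ∈ N) → f ∈ N := by
  refine ⟨fun h N hN hg ↦ ?_, fun h a v hv ↦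
    h _ (isRealSubmoduleStar_ker_quaternionForm (eval a) v) hv⟩
  by_contra hf
  obtain ⟨p, _, v, _, hvN, hvf⟩ := exists_isSemireal_residueField_quaternionMap_ne_zero hN hf
  have heval (a : σ → R) (ha : a ∈ zeroLocus R p) :
      quaternionMap (eval a) (∑ j, f j * v j) = 0 := by
    refine (quaternionForm_comp (eval a) v f).symm.trans (h a _ fun i ↦ ?_)
    refine (quaternionForm_comp (eval a) v (g i)).trans (quaternionMap_eq_zero_iff.mpr ?_)
    have hgi := quaternionMap_eq_zero_iff.mp (hvN _ (hg i))
    simp only [Ideal.algebraMap_residueField_eq_zero] at hgi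
    exact ⟨ha _ hgi.1, ha _ hgi.2.1, ha _ hgi.2.2.1, ha _ hgi.2.2.2⟩
  simp only [quaternionMap_eq_zero_iff] at heval
  refine hvf (quaternionMap_eq_zero_iff.mpr ?_)
  simp only [Ideal.algebraMap_residueField_eq_zero]
  rw [← vanishingIdeal_zeroLocus_of_isSemireal p]
  exact ⟨fun a ha ↦ (heval a ha).1, fun a ha ↦ (heval a ha).2.1,
    fun a ha ↦ (heval a ha).2.2.1, fun a ha ↦ (heval a ha).2.2.2⟩

/-- **Corollary 3: vector version of the First Quaternionic Nullstellensatz.** -/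
theorem vector_quaternionic_nullstellensatz (d n m : ℕ)
    (g : Fin m → (Fin n → Quaternion (MvPolynomial (Fin d) ℝ)))
    (f : Fin n → Quaternion (MvPolynomial (Fin d) ℝ)) :
    (∀ (a : Fin d → ℝ) (v : Fin n → Quaternion ℝ),
        (∀ i, ∑ j, evalQ a (g i j) * v j = 0) → ∑ j, evalQ a (f j) * v j = 0) ↔
      (∀ N : Submodule (Quaternion (MvPolynomial (Fin d) ℝ))
          (Fin n → Quaternion (MvPolynomial (Fin d) ℝ)),
        N.IsRealSubmoduleStar → (∀ i, g i ∈ N) → f ∈ N) :=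
  vector_quaternionic_nullstellensatz_general g f
end

section
/- (Theorem 3) Let F be a field, D a finite-dimensional division algebra over F whose center is F, R a commutative F-algebra, and D_R = D ⊗_F R. Then every semiprime D_R-submodule N of (D_R)^n equals the intersection of all prime D_R-submodules of (D_R)^n containing N (the empty intersection being all of (D_R)^n). -/
open TensorProduct

/-- A submodule `N` of `A^n` is *semiprime* if for every `f ∈ A^n` such that
`(f j * a) • f ∈ N` for every `a ∈ A` and every coordinate `j`, one has `f ∈ N`. -/
def Submodule.IsSemiprimeSubmodule {A : Type*} [Ring A] {n : ℕ}
    (N : Submodule A (Fin n → A)) : Prop :=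
  ∀ f : Fin n → A, (∀ (j : Fin n) (a : A), (f j * a) • f ∈ N) → f ∈ N

/-- A submodule `N` of a module `M` is *prime* if for every scalar `a` and `m ∈ M` with
`(a * x) • m ∈ N` for all `x`, either `a • M ⊆ N` or `m ∈ N`. -/
def Submodule.IsPrimeSubmodule {A : Type*} [Ring A] {M : Type*} [AddCommGroup M] [Module A M]
    (N : Submodule A M) : Prop :=
  ∀ (a : A) (m : M), (∀ x : A, (a * x) • m ∈ N) → (∀ m' : M, a • m' ∈ N) ∨ m ∈ N

/-!
Write `A = D ⊗ R`. Every `F`-linear endomorphism of `D` is a sum of two-sided multiplications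
`d ↦ x d y` (Jacobson density), hence so is every `R`-linear endomorphism of `A`. Applied to
`a ↦ φ a • 1` for linear forms `φ`, this shows that a two-sided ideal of `A` contains the content
ideal of each of its elements. So for a prime `p` of `R` and a submodule `N`, the elements of
`A ^ n` that some `s ∉ p` sends into `N + p A ^ n` form a prime submodule.

If `f ∉ N`, choose `p` minimal over the ideal `(N : f)` of `R`. Should `s f = ν + g` with `s ∉ p`,
`ν ∈ N` and `g` of content in `p`, then, because this content is finitely generated and `p` is
minimal over `(N : f)`, a multiple `t g` with `t ∉ p` has content nilpotent modulo `(N : t g)`.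
Semiprimeness gives `t g ∈ N`, so `t s ∈ (N : f) ⊆ p`, a contradiction.
-/

section Content

variable (R : Type*) [CommRing R] {M M' : Type*} [AddCommGroup M] [Module R M]
  [AddCommGroup M'] [Module R M']

/-- The content ideal of an element `x` of a module, generated (in fact exhausted) by the values
at `x` of all linear forms. For a free module it is the ideal generated by the coordinates
of `x`. -/
def contentIdeal (x : M) : Ideal R :=
  LinearMap.range (Module.Dual.eval R M x)

variable {R}

lemma contentIdeal_le_iff {x : M} {I : Ideal R} :
    contentIdeal R x ≤ I ↔ ∀ φ : Module.Dual R M, φ x ∈ I := by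
  simp [contentIdeal, SetLike.le_def]

lemma contentIdeal_map_le (f : M →ₗ[R] M') (x : M) : contentIdeal R (f x) ≤ contentIdeal R x :=
  contentIdeal_le_iff.2 fun φ => ⟨φ ∘ₗ f, rfl⟩

lemma contentIdeal_smul_le (r : R) (x : M) : contentIdeal R (r • x) ≤ contentIdeal R x :=
  contentIdeal_map_le (LinearMap.lsmul R M r) x

lemma contentIdeal_fg [Module.Finite R M] [Module.Projective R M] (x : M) :
    (contentIdeal R x).FG :=
  Submodule.fg_range _

lemma mem_contentIdeal_smul_top [Module.Projective R M] (x : M) :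
    x ∈ contentIdeal R x • (⊤ : Submodule R M) := by
  obtain ⟨s, hs⟩ := Module.projective_def'.1 ‹Module.Projective R M›
  have hx : (s x).sum (fun y r => r • y) = x := congr($hs x)
  have hmem : (s x).sum (fun y r => r • y) ∈ contentIdeal R x • (⊤ : Submodule R M) :=
    Submodule.sum_mem _ fun y _ =>
      Submodule.smul_mem_smul ⟨Finsupp.lapply y ∘ₗ s, rfl⟩ Submodule.mem_top
  rwa [hx] at hmem

end Content

section MinimalPrimes

variable {R : Type*} [CommRing R] {I J p : Ideal R}

lemma exists_notMem_mul_pow_mem_of_mem_minimalPrimes (hp : p ∈ I.minimalPrimes) {x : R}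
    (hx : x ∈ p) : ∃ t ∉ p, ∃ k : ℕ, t * x ^ k ∈ I := by
  have := hp.1.1
  have hx' : algebraMap R (Localization.AtPrime p) x ∈ (I.map (algebraMap R _)).radical := by
    rw [IsLocalization.AtPrime.radical_map_of_mem_minimalPrimes _ p I hp]
    exact Ideal.mem_map_of_mem _ hx
  obtain ⟨k, hk⟩ := hx'
  rw [← map_pow, IsLocalization.algebraMap_mem_map_algebraMap_iff p.primeCompl] at hk
  obtain ⟨t, ht, htk⟩ := hk
  exact ⟨t, ht, k, htk⟩

lemma exists_notMem_le_radical_colon_of_mem_minimalPrimes (hp : p ∈ I.minimalPrimes)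
    (hJ : J.FG) (hJp : J ≤ p) : ∃ t ∉ p, J ≤ (I.colon {t}).radical := by
  have := hp.1.1
  obtain ⟨S, rfl⟩ := hJ
  choose! t ht k hk using fun x (hx : x ∈ S) =>
    exists_notMem_mul_pow_mem_of_mem_minimalPrimes hp (hJp (Ideal.subset_span hx))
  refine ⟨∏ x ∈ S, t x, fun h => ?_, Ideal.span_le.2 fun x hx => ⟨k x, ?_⟩⟩
  · obtain ⟨x, hx, htx⟩ := (Ideal.IsPrime.prod_mem_iff).1 h
    exact ht x hx htx
  · obtain ⟨u, hu⟩ := Finset.dvd_prod_of_mem t hx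
    rw [Submodule.mem_colon_singleton, smul_eq_mul, hu, mul_comm, mul_right_comm]
    exact I.mul_mem_right u (hk x hx)

end MinimalPrimes

section Saturation

variable {R : Type*} [CommRing R] {A : Type*} [Ring A] [Algebra R A]
  {M : Type*} [AddCommGroup M] [Module R M] [Module A M] [IsScalarTower R A M]

/-- The saturation of an `A`-submodule `N` with respect to a multiplicative set `S` of central
scalars: the kernel of the map from `M` to the localization of `M ⧸ N` at `S`. -/
def saturation (S : Submonoid R) (N : Submodule A M) : Submodule A M where
  carrier := {x | ∃ s ∈ S, s • x ∈ N}
  add_mem' := by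
    rintro x y ⟨s, hs, hx⟩ ⟨t, ht, hy⟩
    refine ⟨s * t, S.mul_mem hs ht, ?_⟩
    rw [smul_add, mul_smul, mul_smul, smul_comm]
    exact N.add_mem (N.smul_of_tower_mem t hx) (N.smul_of_tower_mem s hy)
  zero_mem' := ⟨1, S.one_mem, by simp⟩
  smul_mem' := by
    rintro a x ⟨s, hs, hx⟩
    exact ⟨s, hs, by rw [← smul_algebra_smul_comm]; exact N.smul_mem a hx⟩

lemma mem_saturation {S : Submonoid R} {N : Submodule A M} {x : M} :
    x ∈ saturation S N ↔ ∃ s ∈ S, s • x ∈ N :=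
  Iff.rfl

lemma le_saturation (S : Submonoid R) (N : Submodule A M) : N ≤ saturation S N :=
  fun x hx => mem_saturation.2 ⟨1, S.one_mem, by rwa [one_smul]⟩

lemma mem_saturation_of_smul_mem {S : Submonoid R} {N : Submodule A M} {s : R} (hs : s ∈ S)
    {x : M} (hx : s • x ∈ saturation S N) : x ∈ saturation S N := by
  obtain ⟨t, ht, htx⟩ := mem_saturation.1 hx
  exact mem_saturation.2 ⟨t * s, S.mul_mem ht hs, by rwa [mul_smul]⟩

variable (A M) in
/-- The `A`-submodule of the elements of `M` with content in `I`. When `M` is projective over `R`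
this is `I • M`; the condition on contents makes stability under `A` immediate. -/
def contentLE (I : Ideal R) : Submodule A M where
  carrier := {x | contentIdeal R x ≤ I}
  add_mem' {x y} hx hy := contentIdeal_le_iff.2 fun φ => by
    rw [map_add]
    exact I.add_mem (contentIdeal_le_iff.1 hx φ) (contentIdeal_le_iff.1 hy φ)
  zero_mem' := contentIdeal_le_iff.2 fun φ => by simp
  smul_mem' a x hx := (contentIdeal_map_le (Algebra.lsmul R R M a) x).trans hx

lemma smul_mem_contentLE {I : Ideal R} {a : A} (ha : contentIdeal R a ≤ I) (x : M) :
    a • x ∈ contentLE A M I :=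
  (contentIdeal_map_le ((LinearMap.toSpanSingleton A M x).restrictScalars R) a).trans ha

end Saturation

section Prime

variable {R : Type*} [CommRing R] {A : Type*} [Ring A] [Algebra R A]
  {M : Type*} [AddCommGroup M] [Module R M] [Module A M] [IsScalarTower R A M]

lemma mulLeftRight_mem_twoSidedIdeal (C : TwoSidedIdeal A) (z : A ⊗[R] Aᵐᵒᵖ) {a : A}
    (ha : a ∈ C) : AlgHom.mulLeftRight R A z a ∈ C := by
  induction z with
  | zero => simp
  | add z w hz hw => simpa using C.add_mem hz hw
  | tmul x y => simpa using C.mul_mem_right _ _ (C.mul_mem_left x _ ha)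

lemma algebraMap_mem_twoSidedIdeal (hA : Function.Surjective (AlgHom.mulLeftRight R A))
    (C : TwoSidedIdeal A) {a : A} (ha : a ∈ C) {r : R} (hr : r ∈ contentIdeal R a) :
    algebraMap R A r ∈ C := by
  obtain ⟨φ, rfl⟩ := hr
  obtain ⟨z, hz⟩ := hA (Algebra.linearMap R A ∘ₗ φ)
  have := mulLeftRight_mem_twoSidedIdeal C z ha
  rwa [hz] at this

/-- The two-sided ideal of the scalars `a` with `a A m ⊆ N`. -/
def twoSidedColon (N : Submodule A M) (m : M) : TwoSidedIdeal A :=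
  .mk' {a | ∀ x : A, (a * x) • m ∈ N}
    (fun x => by simp)
    (fun ha hb x => by rw [add_mul, add_smul]; exact N.add_mem (ha x) (hb x))
    (fun ha x => by rw [neg_mul, neg_smul]; exact N.neg_mem (ha x))
    (fun ha x => by rw [mul_assoc, mul_smul]; exact N.smul_mem _ (ha x))
    (fun ha x => by rw [mul_assoc]; exact ha _)

lemma mem_twoSidedColon {N : Submodule A M} {m : M} {a : A} :
    a ∈ twoSidedColon N m ↔ ∀ x : A, (a * x) • m ∈ N :=
  TwoSidedIdeal.mem_mk' ..

lemma isPrimeSubmodule_saturation (hA : Function.Surjective (AlgHom.mulLeftRight R A))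
    (p : Ideal R) [p.IsPrime] {N : Submodule A M} (hN : contentLE A M p ≤ N) :
    (saturation p.primeCompl N).IsPrimeSubmodule := by
  intro a m h
  by_cases ha : contentIdeal R a ≤ p
  · exact .inl fun x => le_saturation _ _ (hN (smul_mem_contentLE ha x))
  · obtain ⟨s, hsa, hsp⟩ := SetLike.not_le_iff_exists.1 ha
    have hs := algebraMap_mem_twoSidedIdeal hA _ (mem_twoSidedColon.2 h) hsa
    refine .inr (mem_saturation_of_smul_mem (S := p.primeCompl) hsp ?_)
    simpa using mem_twoSidedColon.1 hs 1

end Prime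

section CentralSimple

variable {F D : Type*} [CommRing F] [Ring D] [Algebra F D]

attribute [local instance] instModuleTensorProductMop

lemma tmul_smul_eq (a : D) (b : Dᵐᵒᵖ) (d : D) : (a ⊗ₜ[F] b) • d = a * d * b.unop :=
  AlgHom.mulLeftRight_apply F D a b d

/-- The two-sided ideal underlying a subbimodule of `D`. -/
def subbimoduleIdeal (N : Submodule (D ⊗[F] Dᵐᵒᵖ) D) : TwoSidedIdeal D :=
  .mk' N N.zero_mem N.add_mem N.neg_mem
    (fun {x y} hy => by simpa [tmul_smul_eq] using N.smul_mem (x ⊗ₜ 1) hy)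
    (fun {x y} hx => by simpa [tmul_smul_eq] using N.smul_mem (1 ⊗ₜ .op y) hx)

lemma mem_subbimoduleIdeal {N : Submodule (D ⊗[F] Dᵐᵒᵖ) D} {x : D} :
    x ∈ subbimoduleIdeal N ↔ x ∈ N :=
  TwoSidedIdeal.mem_mk' ..

instance isSimpleModule_tensorProduct_mop [IsSimpleRing D] : IsSimpleModule (D ⊗[F] Dᵐᵒᵖ) D where
  eq_bot_or_eq_top N := by
    refine or_iff_not_imp_left.2 fun hN => (Submodule.eq_top_iff').2 fun y => ?_
    obtain ⟨x, hxN, hx⟩ := N.ne_bot_iff.1 hN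
    have h1 := IsSimpleRing.one_mem_of_ne_zero_mem _ hx (mem_subbimoduleIdeal.2 hxN)
    rw [← mem_subbimoduleIdeal, ← mul_one y]
    exact (subbimoduleIdeal N).mul_mem_left y 1 h1

lemma exists_end_tensorProduct_mop_eq_smul [Algebra.IsCentral F D]
    (φ : Module.End (D ⊗[F] Dᵐᵒᵖ) D) : ∃ c : F, ∀ d, φ d = c • d := by
  have hl (x d : D) : φ (x * d) = x * φ d := by
    have := φ.map_smul (x ⊗ₜ 1) d
    simpa only [tmul_smul_eq, MulOpposite.unop_one, mul_one] using this
  have hr (x d : D) : φ (d * x) = φ d * x := by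
    have := φ.map_smul (1 ⊗ₜ .op x) d
    simpa only [tmul_smul_eq, MulOpposite.unop_op, one_mul] using this
  have hc : φ 1 ∈ Subalgebra.center F D :=
    Subalgebra.mem_center_iff.2 fun x => by rw [← hl, ← hr, mul_one, one_mul]
  rw [Algebra.IsCentral.center_eq_bot, Algebra.mem_bot] at hc
  obtain ⟨c, hc⟩ := hc
  exact ⟨c, fun d => by rw [← one_mul d, hr, ← hc, one_mul, Algebra.smul_def]⟩

lemma mulLeftRight_surjective_of_isSimpleRing [IsSimpleRing D] [Module.Finite F D]
    [Algebra.IsCentral F D] : Function.Surjective (AlgHom.mulLeftRight F D) := by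
  intro T
  let T' : Module.End (Module.End (D ⊗[F] Dᵐᵒᵖ) D) D :=
    { T with
      map_smul' := fun φ d => by
        obtain ⟨c, hc⟩ := exists_end_tensorProduct_mop_eq_smul φ
        simp [hc] }
  obtain ⟨s, hs⟩ := Module.Finite.fg_top (R := F) (M := D)
  obtain ⟨z, hz⟩ := jacobson_density T' s
  exact ⟨z, LinearMap.ext_on hs fun d hd => (hz d hd).symm⟩

end CentralSimple

section BaseChange

variable {K A R B : Type*} [CommRing K] [Ring A] [Algebra K A] [CommRing R]
  [Ring B] [Algebra K B] [Algebra R B]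

lemma exists_mulLeftRight_apply_map (f : A →ₐ[K] B) (z : A ⊗[K] Aᵐᵒᵖ) :
    ∃ w : B ⊗[R] Bᵐᵒᵖ, ∀ a, AlgHom.mulLeftRight R B w (f a) = f (AlgHom.mulLeftRight K A z a) := by
  induction z with
  | zero => exact ⟨0, by simp⟩
  | tmul x y => exact ⟨f x ⊗ₜ .op (f y.unop), by simp⟩
  | add z z' hz hz' =>
    obtain ⟨w, hw⟩ := hz
    obtain ⟨w', hw'⟩ := hz'
    exact ⟨w + w', by simp [hw, hw']⟩

lemma mulLeftRight_surjective_of_isBaseChange [Algebra K R] [IsScalarTower K R B]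
    [Module.Finite K A] [Module.Projective K A] {f : A →ₐ[K] B}
    (hf : IsBaseChange R f.toLinearMap) (hA : Function.Surjective (AlgHom.mulLeftRight K A)) :
    Function.Surjective (AlgHom.mulLeftRight R B) := by
  intro T
  obtain ⟨n, e, φ, -, -, hφ⟩ := Module.Finite.exists_comp_eq_id_of_projective K A
  have hw (i : Fin n) : ∃ w : B ⊗[R] Bᵐᵒᵖ, ∀ a,
      AlgHom.mulLeftRight R B w (f a) = algebraMap K B (φ a i) := by
    obtain ⟨z, hz⟩ := hA (Algebra.linearMap K A ∘ₗ LinearMap.proj i ∘ₗ φ)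
    obtain ⟨w, hw⟩ := exists_mulLeftRight_apply_map (R := R) f z
    exact ⟨w, fun a => by simp [hw, hz]⟩
  choose w hw using hw
  let b (i : Fin n) : A := e fun j => if i = j then 1 else 0
  have hb (a : A) : ∑ i, φ a i • b i = a :=
    (LinearMap.pi_apply_eq_sum_univ e (φ a)).symm.trans congr($hφ a)
  refine ⟨∑ i, (T (f (b i)) ⊗ₜ 1) * w i, hf.algHom_ext _ _ fun a => ?_⟩
  calc AlgHom.mulLeftRight R B (∑ i, (T (f (b i)) ⊗ₜ 1) * w i) (f a)
      = ∑ i, algebraMap K R (φ a i) • T (f (b i)) := by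
        simp [hw, ← Algebra.commutes, Algebra.smul_def, ← IsScalarTower.algebraMap_apply]
    _ = T (f (∑ i, φ a i • b i)) := by simp [← map_smul, algebraMap_smul]
    _ = T (f a) := by rw [hb]

attribute [local instance] Algebra.TensorProduct.rightAlgebra

instance finite_tensorProduct_right [Algebra K R] [Module.Finite K A] :
    Module.Finite R (A ⊗[K] R) :=
  .equiv (Algebra.TensorProduct.commRight K R A).toLinearEquiv

instance projective_tensorProduct_right [Algebra K R] [Module.Projective K A] :
    Module.Projective R (A ⊗[K] R) :=
  .of_equiv (Algebra.TensorProduct.commRight K R A).toLinearEquiv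

lemma isBaseChange_includeLeft [Algebra K R] :
    IsBaseChange R (Algebra.TensorProduct.includeLeft : A →ₐ[K] A ⊗[K] R).toLinearMap :=
  .of_equiv (Algebra.TensorProduct.commRight K R A).toLinearEquiv (by simp)

end BaseChange

instance projective_pi {R ι : Type*} [Semiring R] [Finite ι] {M : ι → Type*}
    [∀ i, AddCommMonoid (M i)] [∀ i, Module R (M i)] [∀ i, Module.Projective R (M i)] :
    Module.Projective R (∀ i, M i) :=
  have := Fintype.ofFinite ι
  .of_equiv DFinsupp.linearEquivFunOnFintype

section Semiprime

variable {R : Type*} [CommRing R] {A : Type*} [Ring A] [Algebra R A] [Module.Projective R A]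
  {n : ℕ} {N : Submodule A (Fin n → A)} {f : Fin n → A}

lemma mem_of_contentIdeal_le_colon (hN : N.IsSemiprimeSubmodule)
    (hf : contentIdeal R f ≤ (N.restrictScalars R).colon {f}) : f ∈ N := by
  refine hN f fun j a => ?_
  have hj : contentIdeal R (f j) ≤ contentIdeal R f :=
    contentIdeal_map_le (LinearMap.proj (φ := fun _ => A) j) f
  have hfj : f j ∈ contentIdeal R f • (⊤ : Submodule R A) :=
    Submodule.smul_mono_left hj (mem_contentIdeal_smul_top (f j))
  refine Submodule.smul_induction_on (p := fun x => (x * a) • f ∈ N) hfj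
    (fun r hr b _ => ?_) fun x y hx hy => ?_
  · rw [smul_mul_assoc, smul_assoc, ← smul_algebra_smul_comm]
    exact N.smul_mem _ (Submodule.mem_colon_singleton.1 (hf hr))
  · rw [add_mul, add_smul]
    exact N.add_mem hx hy

lemma mem_of_contentIdeal_pow_le_colon (hN : N.IsSemiprimeSubmodule) (m : ℕ)
    (hf : contentIdeal R f ^ m ≤ (N.restrictScalars R).colon {f}) : f ∈ N := by
  induction m with
  | zero => simpa using Submodule.mem_colon_singleton.1 (hf (by simp : (1 : R) ∈ _))
  | succ m ih =>
    refine ih fun c hc => Submodule.mem_colon_singleton.2 ?_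
    refine mem_of_contentIdeal_le_colon (R := R) hN fun r hr => Submodule.mem_colon_singleton.2 ?_
    rw [← mul_smul]
    refine Submodule.mem_colon_singleton.1 (hf ?_)
    rw [pow_succ']
    exact Ideal.mul_mem_mul (contentIdeal_smul_le c f hr) hc

lemma mem_of_contentIdeal_le_radical_colon [Module.Finite R A] (hN : N.IsSemiprimeSubmodule)
    (hf : contentIdeal R f ≤ ((N.restrictScalars R).colon {f}).radical) : f ∈ N := by
  obtain ⟨m, hm⟩ := Ideal.exists_pow_le_of_le_radical_of_fg hf (contentIdeal_fg f)
  exact mem_of_contentIdeal_pow_le_colon hN m hm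

lemma notMem_saturation_of_mem_minimalPrimes [Module.Finite R A] (hN : N.IsSemiprimeSubmodule)
    {p : Ideal R} [p.IsPrime] (hp : p ∈ ((N.restrictScalars R).colon {f}).minimalPrimes) :
    f ∉ saturation p.primeCompl (N ⊔ contentLE A (Fin n → A) p) := by
  intro hf
  obtain ⟨s, hs, hsf⟩ := mem_saturation.1 hf
  obtain ⟨ν, hν, g, hg, hνg⟩ := Submodule.mem_sup.1 hsf
  obtain ⟨t, ht, hgt⟩ :=
    exists_notMem_le_radical_colon_of_mem_minimalPrimes hp (contentIdeal_fg g) hg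
  have hcolon : ((N.restrictScalars R).colon {f}).colon {t} ≤
      (N.restrictScalars R).colon {t • g} := by
    intro r hr
    simp only [Submodule.mem_colon_singleton, Submodule.restrictScalars_mem] at hr ⊢
    rw [eq_sub_of_add_eq' hνg, ← mul_smul, smul_sub, smul_comm]
    exact N.sub_mem (N.smul_of_tower_mem s hr) (N.smul_of_tower_mem _ hν)
  have htg : t • g ∈ N := mem_of_contentIdeal_le_radical_colon hN <|
    (contentIdeal_smul_le t g).trans (hgt.trans (Ideal.radical_mono hcolon))
  have hts : t * s ∈ (N.restrictScalars R).colon {f} := by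
    rw [Submodule.mem_colon_singleton, mul_smul, ← hνg, smul_add]
    exact N.add_mem (N.smul_of_tower_mem t hν) htg
  exact p.primeCompl.mul_mem ht hs (hp.1.2 hts)

theorem semiprime_eq_inf_primes_tensor_general [Module.Finite R A]
    (hA : Function.Surjective (AlgHom.mulLeftRight R A)) (hN : N.IsSemiprimeSubmodule) :
    N = sInf {P : Submodule A (Fin n → A) | P.IsPrimeSubmodule ∧ N ≤ P} := by
  refine le_antisymm (le_sInf fun P hP => hP.2) fun f hf => ?_
  by_contra hfN
  have hne : (N.restrictScalars R).colon {f} ≠ ⊤ := by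
    simpa [Submodule.colon_eq_top_iff_subset] using hfN
  obtain ⟨p, hp⟩ := Ideal.nonempty_minimalPrimes hne
  have := hp.1.1
  exact notMem_saturation_of_mem_minimalPrimes hN hp <| Submodule.mem_sInf.1 hf _
    ⟨isPrimeSubmodule_saturation hA p le_sup_right, le_sup_left.trans (le_saturation _ _)⟩

end Semiprime

/-- **Theorem 3.** Let `D` be a finite-dimensional central division algebra over a field `F`,
`R` a commutative `F`-algebra, and `D_R = D ⊗_F R`.  Every semiprime submodule of `(D_R)^n`
is the intersection of all prime submodules containing it. -/
theorem semiprime_eq_inf_primes_tensor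
    (F : Type*) [Field F] (D : Type*) [DivisionRing D] [Algebra F D]
    [FiniteDimensional F D] [Algebra.IsCentral F D]
    (R : Type*) [CommRing R] [Algebra F R] {n : ℕ}
    (N : Submodule (D ⊗[F] R) (Fin n → D ⊗[F] R)) (hN : N.IsSemiprimeSubmodule) :
    N = sInf {P : Submodule (D ⊗[F] R) (Fin n → D ⊗[F] R) | P.IsPrimeSubmodule ∧ N ≤ P} := by
  let : Algebra R (D ⊗[F] R) := Algebra.TensorProduct.rightAlgebra
  exact semiprime_eq_inf_primes_tensor_general (mulLeftRight_surjective_of_isBaseChange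
    isBaseChange_includeLeft mulLeftRight_surjective_of_isSimpleRing) hN
end
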